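/- The map sending the generators u, v, b of the presented group G to the classes modulo Z of the matrices u = γ₀u'γ₀⁻¹, v = γ₀v'γ₀⁻¹, b = γ₀b'γ₀⁻¹ extends to a group isomorphism from G onto U/Z. -/

import Mathlib

/-!
Conjugation by `γ₀` identifies `U` with the unitary group over `ℤ[ζ]` of the Hermitian form
`γ₀* F γ₀`, so the question is whether `G` maps bijectively to the quotient `PU` of that group by
its scalars. The form has signature `(2, 1)` for one real embedding of `ℚ(√3)` and is definite for
the other; hence `PU` acts on the complex ball of negative lines, whose origin is the line of `e₃`,
and an element moving the origin only a little has one of finitely many corner entries `A₃₃`.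

*The finite group.* The relations among `u` and `v` alone give a normal form for `K = ⟨u, v⟩`,
which shows that `K` maps injectively to `PU`; its image is the stabiliser of the origin.

*Transitions.* If `|A₃₃|² ≤ 9`, then `|A₃₃|²` is `1`, `2 + √3` or `4 + 2√3`, and the class of `A`
comes from the union of the double cosets `K`, `KbK` and `KtK`, where `t = b u⁻¹ b`. By the
relations of `G`, a product of two elements of this union lies in it again as soon as its image has
one of these three corner values, and no element of the union other than `1` maps to `1`.

*Covering.* Take a suitable ball around the origin as basic neighbourhood. Two of its translates
meet only if the transition between them has `|A₃₃|² ≤ 9`. A point outside the basic neighbourhood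
is brought closer to the origin, by a definite factor, by the inverse of some `kb` with `k ∈ K`, so
the translates under `G` cover the ball. Surjectivity follows.

*Simple connectivity.* In the affine model the ball and the translates are convex. A choice of a
translate, unique up to transitions, can be continued consistently from the origin over the whole
ball, which forces an element of `G` whose translate contains the origin to be a transition. In
particular the kernel consists of transitions, so it is trivial.
-/

/-- Generators of the Cartwright–Steger lattice presentation. -/
inductive CSgen : Type
  | u : CSgen
  | v : CSgen
  | b : CSgen

open FreeGroup in
/-- Relators of the Cartwright–Steger lattice:
`u³ = v⁴ = b³ = 1`, `(uv)² = (vu)²`, `vb = bv`, `(buv)³ = 1`, `(buvu)²v = 1`. -/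
def csRels : Set (FreeGroup CSgen) :=
  { (of CSgen.u) ^ 3,
    (of CSgen.v) ^ 4,
    (of CSgen.b) ^ 3,
    (of CSgen.u * of CSgen.v) ^ 2 * ((of CSgen.v * of CSgen.u) ^ 2)⁻¹,
    of CSgen.v * of CSgen.b * (of CSgen.b * of CSgen.v)⁻¹,
    (of CSgen.b * of CSgen.u * of CSgen.v) ^ 3,
    (of CSgen.b * of CSgen.u * of CSgen.v * of CSgen.u) ^ 2 * of CSgen.v }

/-- The Cartwright–Steger lattice, as an abstract presented group. -/
abbrev CS : Type := PresentedGroup csRels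

def gu : CS := PresentedGroup.of CSgen.u
def gv : CS := PresentedGroup.of CSgen.v
def gb : CS := PresentedGroup.of CSgen.b
/-- `j = (uv)²`. -/
def gj : CS := (gu * gv) ^ 2

open Matrix

noncomputable section

/-- The 12th cyclotomic field `ℓ = ℚ(ζ₁₂)`. -/
abbrev L : Type := CyclotomicField 12 ℚ

/-- `r = ζ + ζ⁻¹` (a square root of 3). -/
def rr (ζ : L) : L := ζ + ζ⁻¹

/-- The Hermitian form `F = diag(1, 1, 1 − r)`. -/
def Fmat (ζ : L) : Matrix (Fin 3) (Fin 3) L := !![1, 0, 0; 0, 1, 0; 0, 0, 1 - rr ζ]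

/-- The matrix `γ₀`. -/
def gamma0 (ζ : L) : Matrix (Fin 3) (Fin 3) L := !![1, 0, 0; 1, 1 - rr ζ, 0; 0, 0, 1]

/-- The matrix `u = γ₀ u' γ₀⁻¹`. -/
def umat (ζ : L) : Matrix (Fin 3) (Fin 3) L :=
  gamma0 ζ *
    !![ζ ^ 3 + ζ ^ 2 - ζ, 1 - ζ, 0;
       ζ ^ 3 + ζ ^ 2 - 1, ζ - ζ ^ 3, 0;
       0, 0, 1] * (gamma0 ζ)⁻¹

/-- The matrix `v = γ₀ v' γ₀⁻¹`. -/
def vmat (ζ : L) : Matrix (Fin 3) (Fin 3) L :=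
  gamma0 ζ *
    !![ζ ^ 3, 0, 0;
       ζ ^ 3 + ζ ^ 2 - ζ - 1, 1, 0;
       0, 0, 1] * (gamma0 ζ)⁻¹

/-- The matrix `b = γ₀ b' γ₀⁻¹`. -/
def bmat (ζ : L) : Matrix (Fin 3) (Fin 3) L :=
  gamma0 ζ *
    !![1, 0, 0;
       -2 * ζ ^ 3 - ζ ^ 2 + 2 * ζ + 2, ζ ^ 3 + ζ ^ 2 - ζ - 1, -ζ ^ 3 - ζ ^ 2;
       ζ ^ 2 + ζ, -ζ ^ 3 - 1, -ζ ^ 3 + ζ + 1] * (gamma0 ζ)⁻¹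

/-! ### The ring `ℤ[ζ₁₂]` in coordinates -/

/-- The ring `ℤ[ζ]` of integers of the 12th cyclotomic field, in coordinates that the kernel can
compute with: `⟨a, b, c, d⟩` stands for `a + bζ + cζ² + dζ³`, where `ζ⁴ = ζ² - 1`. -/
@[ext]
structure CycloInt where
  a : ℤ
  b : ℤ
  c : ℤ
  d : ℤ
deriving DecidableEq

namespace CycloInt

instance : Zero CycloInt := ⟨⟨0, 0, 0, 0⟩⟩
instance : One CycloInt := ⟨⟨1, 0, 0, 0⟩⟩
instance : Add CycloInt := ⟨fun x y => ⟨x.a + y.a, x.b + y.b, x.c + y.c, x.d + y.d⟩⟩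
instance : Neg CycloInt := ⟨fun x => ⟨-x.a, -x.b, -x.c, -x.d⟩⟩
instance : Mul CycloInt := ⟨fun x y =>
  ⟨x.a * y.a - (x.b * y.d + x.c * y.c + x.d * y.b) - x.d * y.d,
   x.a * y.b + x.b * y.a - (x.c * y.d + x.d * y.c),
   x.a * y.c + x.b * y.b + x.c * y.a + (x.b * y.d + x.c * y.c + x.d * y.b),
   x.a * y.d + x.b * y.c + x.c * y.b + x.d * y.a + (x.c * y.d + x.d * y.c)⟩⟩
/-- Complex conjugation `ζ ↦ ζ⁻¹ = ζ - ζ³`. -/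
instance : Star CycloInt := ⟨fun x => ⟨x.a + x.c, x.b, -x.c, -x.b - x.d⟩⟩

theorem zero_def : (0 : CycloInt) = ⟨0, 0, 0, 0⟩ := rfl
theorem one_def : (1 : CycloInt) = ⟨1, 0, 0, 0⟩ := rfl
theorem add_def (x y : CycloInt) : x + y = ⟨x.a + y.a, x.b + y.b, x.c + y.c, x.d + y.d⟩ := rfl
theorem neg_def (x : CycloInt) : -x = ⟨-x.a, -x.b, -x.c, -x.d⟩ := rfl
theorem mul_def (x y : CycloInt) : x * y =
  ⟨x.a * y.a - (x.b * y.d + x.c * y.c + x.d * y.b) - x.d * y.d,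
   x.a * y.b + x.b * y.a - (x.c * y.d + x.d * y.c),
   x.a * y.c + x.b * y.b + x.c * y.a + (x.b * y.d + x.c * y.c + x.d * y.b),
   x.a * y.d + x.b * y.c + x.c * y.b + x.d * y.a + (x.c * y.d + x.d * y.c)⟩ := rfl
theorem star_def (x : CycloInt) : star x = ⟨x.a + x.c, x.b, -x.c, -x.b - x.d⟩ := rfl

instance : CommRing CycloInt where
  add_assoc x y z := by ext <;> simp only [add_def] <;> ring
  zero_add x := by ext <;> simp only [add_def, zero_def] <;> ring
  add_zero x := by ext <;> simp only [add_def, zero_def] <;> ring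
  add_comm x y := by ext <;> simp only [add_def] <;> ring
  neg_add_cancel x := by ext <;> simp only [add_def, neg_def, zero_def] <;> ring
  mul_assoc x y z := by ext <;> simp only [mul_def] <;> ring
  one_mul x := by ext <;> simp only [mul_def, one_def] <;> ring
  mul_one x := by ext <;> simp only [mul_def, one_def] <;> ring
  mul_comm x y := by ext <;> simp only [mul_def] <;> ring
  left_distrib x y z := by ext <;> simp only [mul_def, add_def] <;> ring
  right_distrib x y z := by ext <;> simp only [mul_def, add_def] <;> ring
  zero_mul x := by ext <;> simp only [mul_def, zero_def] <;> ring
  mul_zero x := by ext <;> simp only [mul_def, zero_def] <;> ring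
  nsmul := nsmulRec
  zsmul := zsmulRec

instance : StarRing CycloInt where
  star_involutive x := by ext <;> simp only [star_def] <;> ring
  star_mul x y := by ext <;> simp only [star_def, mul_def] <;> ring
  star_add x y := by ext <;> simp only [star_def, add_def] <;> ring

/-- The 12th root of unity `ζ`. -/
def zeta : CycloInt := ⟨0, 1, 0, 0⟩

/-- The square root `ζ + ζ⁻¹ = 2ζ - ζ³` of `3`. -/
def r : CycloInt := ⟨0, 2, 0, -1⟩

/-- The inclusion `ℤ[√3] ⊆ ℤ[ζ]`. -/
def ofZsqrt : ℤ√3 →+* CycloInt := Zsqrtd.lift ⟨r, by decide +kernel⟩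

/-- The square absolute value `|x|² = x̄x`, which lies in `ℤ[√3]`. -/
def absSq (x : CycloInt) : ℤ√3 :=
  ⟨x.a ^ 2 + x.b ^ 2 + x.c ^ 2 + x.d ^ 2 + x.a * x.c + x.b * x.d,
    x.a * x.b + x.b * x.c + x.c * x.d⟩

theorem r_mul_self : r * r = 3 := by decide +kernel

theorem star_r : star r = r := by decide +kernel

theorem zeta_pow_twelve : zeta ^ 12 = 1 := by decide +kernel

theorem star_zeta_pow_mul_self (k : ℕ) : star (zeta ^ k) * zeta ^ k = 1 := by
  rw [star_pow, ← mul_pow, show star zeta * zeta = 1 by decide +kernel, one_pow]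

theorem ofZsqrt_apply (x : ℤ√3) : ofZsqrt x = x.re + x.im * r := rfl

theorem intCast_def (m : ℤ) : (m : CycloInt) = ⟨m, 0, 0, 0⟩ := by
  induction m using Int.induction_on with
  | zero => rfl
  | succ n ih => rw [Int.cast_add, ih]; ext <;> simp [add_def, one_def]
  | pred n ih =>
    rw [Int.cast_sub, ih, sub_eq_add_neg]
    ext <;> simp [add_def, neg_def, one_def, sub_eq_add_neg]

theorem ofZsqrt_eq (x : ℤ√3) : ofZsqrt x = ⟨x.re, 2 * x.im, 0, -x.im⟩ := by
  ext <;> simp [ofZsqrt_apply, intCast_def, add_def, mul_def, r, mul_comm]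

theorem ofZsqrt_injective : Function.Injective ofZsqrt := fun x y h => by
  simp only [ofZsqrt_eq, CycloInt.mk.injEq] at h
  exact Zsqrtd.ext h.1 (by omega)

theorem ofZsqrt_absSq (x : CycloInt) : ofZsqrt (absSq x) = star x * x := by
  rw [ofZsqrt_eq]
  ext <;> simp only [star_def, mul_def, absSq] <;> ring

theorem absSq_mul (x y : CycloInt) : absSq (x * y) = absSq x * absSq y :=
  ofZsqrt_injective <| by
    rw [map_mul]; simp only [ofZsqrt_absSq, star_mul]; ring

theorem absSq_star (x : CycloInt) : absSq (star x) = absSq x :=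
  ofZsqrt_injective <| by rw [ofZsqrt_absSq, ofZsqrt_absSq, star_star, mul_comm]

theorem absSq_zeta_pow (k : ℕ) : absSq (zeta ^ k) = 1 :=
  ofZsqrt_injective <| by rw [ofZsqrt_absSq, star_zeta_pow_mul_self, map_one]

theorem absSq_zeta_pow_mul (k : ℕ) (x : CycloInt) : absSq (zeta ^ k * x) = absSq x := by
  rw [absSq_mul, absSq_zeta_pow, one_mul]

theorem re_absSq_nonneg (x : CycloInt) : 0 ≤ (absSq x).re := by
  unfold absSq
  nlinarith [sq_nonneg (x.a + x.c), sq_nonneg (x.b + x.d), sq_nonneg x.a, sq_nonneg x.b,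
    sq_nonneg x.c, sq_nonneg x.d]

theorem coords_mem_Icc_of_re_absSq_le {x : CycloInt} (h : (absSq x).re ≤ 4) :
    x.a ∈ Finset.Icc (-2 : ℤ) 2 ∧ x.b ∈ Finset.Icc (-2 : ℤ) 2 ∧
      x.c ∈ Finset.Icc (-2 : ℤ) 2 ∧ x.d ∈ Finset.Icc (-2 : ℤ) 2 := by
  unfold absSq at h
  simp only [Finset.mem_Icc]
  refine ⟨⟨?_, ?_⟩, ⟨?_, ?_⟩, ⟨?_, ?_⟩, ?_, ?_⟩ <;>
  nlinarith [sq_nonneg (x.a + 2 * x.c), sq_nonneg (x.b + 2 * x.d), sq_nonneg (2 * x.a + x.c),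
    sq_nonneg (2 * x.b + x.d)]

theorem forall_of_re_absSq_le {p : CycloInt → Prop}
    (hp : ∀ a ∈ Finset.Icc (-2 : ℤ) 2, ∀ b ∈ Finset.Icc (-2 : ℤ) 2,
      ∀ c ∈ Finset.Icc (-2 : ℤ) 2, ∀ d ∈ Finset.Icc (-2 : ℤ) 2, p ⟨a, b, c, d⟩)
    {x : CycloInt} (h : (absSq x).re ≤ 4) : p x := by
  obtain ⟨ha, hb, hc, hd⟩ := coords_mem_Icc_of_re_absSq_le h
  exact hp _ ha _ hb _ hc _ hd

theorem eq_zero_of_re_absSq {x : CycloInt} (h : (absSq x).re = 0) : x = 0 :=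
  forall_of_re_absSq_le (p := fun x => (absSq x).re = 0 → x = 0) (by decide +kernel)
    (by omega) h

theorem absSq_eq_one_of_re_absSq {x : CycloInt} (h : (absSq x).re = 1) : absSq x = 1 :=
  forall_of_re_absSq_le (p := fun x => (absSq x).re = 1 → absSq x = 1) (by decide +kernel)
    (by omega) h

theorem absSq_ne_three_add_sqrt_three (x : CycloInt) : absSq x ≠ ⟨3, 1⟩ := fun h =>
  forall_of_re_absSq_le (p := fun x => absSq x ≠ ⟨3, 1⟩) (by decide +kernel)
    (by rw [h]; norm_num) h

/-- The representatives are `1`, `1 + i`, `1 + ζ⁻¹` and `1 + √3`, with square absolute values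
`1`, `2`, `2 + √3` and `4 + 2√3`. -/
theorem exists_zeta_pow_mul_of_absSq_eq {x y : CycloInt} (h : absSq x = absSq y)
    (hy : y ∈ [1, 1 + zeta ^ 3, 1 + star zeta, 1 + r]) :
    ∃ k : Fin 12, x = zeta ^ (k : ℕ) * y := by
  have hle : ∀ y ∈ [1, 1 + zeta ^ 3, 1 + star zeta, 1 + r], (absSq y).re ≤ 4 := by
    decide +kernel
  exact forall_of_re_absSq_le
    (p := fun x => ∀ y ∈ [1, 1 + zeta ^ 3, 1 + star zeta, 1 + r], absSq x = absSq y →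
      ∃ k : Fin 12, x = zeta ^ (k : ℕ) * y)
    (by decide +kernel) (h ▸ hle y hy) y hy h

end CycloInt

/-! ### Words in the two reflections `u`, `v` and in `b` -/

section Words

variable {G : Type*} [Group G] {u v b j : G}

/-- The relations of the complex reflection group of order 288 generated by `u` and `v`, with a
name `j` for its central element `(uv)²`. -/
structure ReflRel (u v j : G) : Prop where
  u_pow : u ^ 3 = 1
  v_pow : v ^ 4 = 1
  uvuv : u * v * u * v = j
  vuvu : v * u * v * u = j

-- A lemma `word_…` is named after the word on its left-hand side, with `Ui`, `Vi`, `Bi`, `Ji` for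
-- the inverses of `u`, `v`, `b`, `j` and `t` for `b u⁻¹ b`.

namespace ReflRel

theorem commute_j_u (h : ReflRel u v j) : Commute j u := by
  change j * u = u * j
  rw [← h.vuvu]; nth_rewrite 1 [h.vuvu, ← h.uvuv]; group

theorem commute_j_v (h : ReflRel u v j) : Commute j v := by
  change j * v = v * j
  rw [← h.uvuv]; nth_rewrite 1 [h.uvuv, ← h.vuvu]; group

theorem u_inv (h : ReflRel u v j) : u⁻¹ = u * u := by
  rw [inv_eq_iff_mul_eq_one, ← h.u_pow, pow_three]

theorem v_inv_sq (h : ReflRel u v j) : v⁻¹ * v⁻¹ = v * v := by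
  have := h.v_pow
  rw [← _root_.mul_inv_rev, inv_eq_iff_mul_eq_one, ← this, pow_succ, pow_three]
  simp only [mul_assoc]

theorem word_uvu (h : ReflRel u v j) : u * v * u = j * v⁻¹ := by rw [← h.uvuv]; group
theorem word_vuv (h : ReflRel u v j) : v * u * v = j * u⁻¹ := by rw [← h.vuvu]; group
theorem word_uv (h : ReflRel u v j) : u * v = j * (v⁻¹ * u⁻¹) := by rw [← h.uvuv]; group
theorem word_vu (h : ReflRel u v j) : v * u = j * (u⁻¹ * v⁻¹) := by rw [← h.vuvu]; group

theorem word_uu (h : ReflRel u v j) : u * u = j⁻¹ * (v * u * v) := by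
  rw [h.word_vuv, ← h.u_inv]; group

theorem word_uvUi (h : ReflRel u v j) : u * v * u⁻¹ = j * v⁻¹ * u := by
  calc _ = j * v⁻¹ * (u * u)⁻¹ := by rw [h.word_uv]; group
    _ = _ := by rw [← h.u_inv]; group

theorem word_uvvu (h : ReflRel u v j) : u * (v * v) * u = j * j * (v⁻¹ * u * v⁻¹) := by
  have h1 : u * (v * v) * u = (u * v) * (v * u) := by group
  have h2 : u⁻¹ * u⁻¹ = u := by rw [← _root_.mul_inv_rev, ← h.u_inv]; simp
  rw [h1, h.word_uv, h.word_vu]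
  calc _ = j * ((v⁻¹ * u⁻¹) * j) * (u⁻¹ * v⁻¹) := by group
    _ = j * (j * (v⁻¹ * u⁻¹)) * (u⁻¹ * v⁻¹) := by
        rw [((h.commute_j_v.inv_right).mul_right (h.commute_j_u.inv_right)).eq]
    _ = j * j * (v⁻¹ * (u⁻¹ * u⁻¹) * v⁻¹) := by group
    _ = _ := by rw [h2]

theorem word_uViuu (h : ReflRel u v j) : u * v⁻¹ * (u * u) = j⁻¹ * j⁻¹ * (v * u * (v * v)) := by
  have h1 : v⁻¹ * u⁻¹ = j⁻¹ * (u * v) := by rw [h.word_uv]; group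
  calc _ = u * (v⁻¹ * u⁻¹) := by rw [h.u_inv]; group
    _ = (u * j⁻¹) * (u * v) := by rw [h1]; group
    _ = j⁻¹ * (u * u) * v := by rw [h.commute_j_u.inv_left.eq.symm]; group
    _ = _ := by rw [h.word_uu]; group

/-- Conjugation by `u v⁻¹ u` inverts `v` up to the centre. -/
theorem word_uViuv (h : ReflRel u v j) : u * v⁻¹ * u * v = j ^ 3 * (v⁻¹ * (u * v⁻¹ * u)) := by
  have h1 : u * v⁻¹ * u * v = j * (u * (v * v) * u⁻¹) := by
    calc _ = u * v⁻¹ * (u * v) := by group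
      _ = (u * v⁻¹ * j) * (v⁻¹ * u⁻¹) := by rw [h.word_uv]; group
      _ = (j * (u * v⁻¹)) * (v⁻¹ * u⁻¹) := by
          rw [(h.commute_j_u.mul_right h.commute_j_v.inv_right).eq]
      _ = j * (u * (v⁻¹ * v⁻¹) * u⁻¹) := by group
      _ = _ := by rw [h.v_inv_sq]
  have h2 : v⁻¹ * u = j⁻¹ * (u * v * u⁻¹) := by
    have : v⁻¹ = j⁻¹ * (u * v * u) := by rw [h.word_uvu]; group
    rw [this, h.u_inv]; group
  have h3 : u⁻¹ * v⁻¹ = j⁻¹ * (v * u) := by rw [h.word_vu]; group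
  rw [h1]
  symm
  calc _ = j ^ 3 * ((v⁻¹ * u) * (v⁻¹ * u)) := by group
    _ = j ^ 3 * (j⁻¹ * (u * v * (u⁻¹ * v⁻¹) * u)) := by rw [h2]; nth_rewrite 2 [← h2]; group
    _ = j ^ 2 * ((u * v) * j⁻¹ * (v * u * u)) := by rw [h3]; group
    _ = j ^ 2 * (j⁻¹ * (u * v) * (v * (u * u))) := by
        rw [((h.commute_j_u.mul_right h.commute_j_v).inv_left).eq]; group
    _ = _ := by rw [← h.u_inv]; group

theorem j_pow_twelve (h : ReflRel u v j) : j ^ 12 = 1 := by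
  have hc : Commute (j ^ 3) v⁻¹ := (h.commute_j_v.pow_left 3).inv_right
  have h1 : (u * v⁻¹ * u) * v * (u * v⁻¹ * u)⁻¹ = j ^ 3 * v⁻¹ := by rw [h.word_uViuv]; group
  have h2 := congrArg (· ^ 4) h1
  simp only [conj_pow, h.v_pow, hc.mul_pow, _root_.inv_pow] at h2
  simpa [← pow_mul] using h2.symm

end ReflRel

section NormalForm

/-- The normal form of an element of the group generated by `u` and `v`: powers of the centre
`j` times representatives of the three double cosets of `⟨j, v⟩`. -/
def IsReflWord (u v j k : G) : Prop :=
  ∃ n i : ℤ, k = j ^ n * v ^ i ∨ (∃ l : ℤ, k = j ^ n * v ^ i * u * v ^ l) ∨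
    k = j ^ n * v ^ i * (u * v⁻¹ * u)

namespace ReflRel

theorem isReflWord_mul_v (h : ReflRel u v j) {k : G} (hk : IsReflWord u v j k) :
    IsReflWord u v j (k * v) := by
  obtain ⟨n, i, rfl | ⟨l, rfl⟩ | rfl⟩ := hk
  · exact ⟨n, i + 1, Or.inl (by group)⟩
  · exact ⟨n, i, Or.inr (Or.inl ⟨l + 1, by group⟩)⟩
  · refine ⟨n + 3, i - 1, Or.inr (Or.inr ?_)⟩
    rw [mul_assoc, h.word_uViuv]
    calc _ = j ^ n * (v ^ i * j ^ 3) * v⁻¹ * (u * v⁻¹ * u) := by group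
      _ = j ^ n * (j ^ 3 * v ^ i) * v⁻¹ * (u * v⁻¹ * u) := by
          rw [((h.commute_j_v.pow_left 3).zpow_right i).eq]
      _ = _ := by group

theorem zpow_v_mul_zpow_j (h : ReflRel u v j) (i m : ℤ) : v ^ i * j ^ m = j ^ m * v ^ i :=
  ((h.commute_j_v.zpow_left m).zpow_right i).eq.symm

theorem isReflWord_mul_u_of_middle (h : ReflRel u v j) (n i l : ℤ) :
    IsReflWord u v j (j ^ n * v ^ i * u * v ^ l * u) := by
  have v_zpow : v ^ (4 : ℤ) = 1 := by exact_mod_cast h.v_pow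
  have l_nonneg := Int.emod_nonneg l (by norm_num : (4 : ℤ) ≠ 0)
  have l_lt := Int.emod_lt_of_pos l (by norm_num : (0 : ℤ) < 4)
  rw [zpow_eq_zpow_emod l v_zpow]
  interval_cases l % 4
  · refine ⟨n - 1, i + 1, Or.inr (Or.inl ⟨1, ?_⟩)⟩
    calc _ = j ^ n * v ^ i * (u * u) := by group
      _ = j ^ n * (v ^ i * j ^ (-1 : ℤ)) * v * u * v := by rw [h.word_uu]; group
      _ = _ := by rw [h.zpow_v_mul_zpow_j]; group
  · refine ⟨n + 1, i - 1, Or.inl ?_⟩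
    calc _ = j ^ n * v ^ i * (u * v * u) := by group
      _ = j ^ n * (v ^ i * j ^ (1 : ℤ)) * v⁻¹ := by rw [h.word_uvu]; group
      _ = _ := by rw [h.zpow_v_mul_zpow_j]; group
  · refine ⟨n + 2, i - 1, Or.inr (Or.inl ⟨-1, ?_⟩)⟩
    calc _ = j ^ n * v ^ i * (u * (v * v) * u) := by rw [_root_.zpow_two]; group
      _ = j ^ n * (v ^ i * j ^ (2 : ℤ)) * v⁻¹ * u * v⁻¹ := by
          rw [h.word_uvvu, _root_.zpow_two]; group
      _ = _ := by rw [h.zpow_v_mul_zpow_j]; group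
  · refine ⟨n, i, Or.inr (Or.inr ?_)⟩
    have v_cubed : v ^ (3 : ℤ) = v⁻¹ := by
      rw [eq_inv_iff_mul_eq_one, ← _root_.zpow_add_one]; exact v_zpow
    rw [v_cubed]; group

theorem isReflWord_mul_u (h : ReflRel u v j) {k : G} (hk : IsReflWord u v j k) :
    IsReflWord u v j (k * u) := by
  obtain ⟨n, i, rfl | ⟨l, rfl⟩ | rfl⟩ := hk
  · exact ⟨n, i, Or.inr (Or.inl ⟨0, by group⟩)⟩
  · exact h.isReflWord_mul_u_of_middle n i l
  · refine ⟨n - 2, i + 1, Or.inr (Or.inl ⟨2, ?_⟩)⟩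
    calc _ = j ^ n * v ^ i * (u * v⁻¹ * (u * u)) := by group
      _ = j ^ n * (v ^ i * j ^ (-2 : ℤ)) * v * u * (v * v) := by rw [h.word_uViuu]; group
      _ = _ := by rw [h.zpow_v_mul_zpow_j, ← _root_.zpow_two]; group

theorem induction_closure (h : ReflRel u v j) {p : G → Prop} (one : p 1)
    (mul_u : ∀ k, p k → p (k * u)) (mul_v : ∀ k, p k → p (k * v)) {k : G}
    (hk : k ∈ Subgroup.closure {u, v}) : p k := by
  have v_inv : v⁻¹ = v * v * v := by
    rw [inv_eq_iff_mul_eq_one, ← h.v_pow, pow_succ, pow_three]; simp only [mul_assoc]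
  induction hk using Subgroup.closure_induction_right with
  | one => exact one
  | mul_right x _ y hy ih =>
    rcases hy with rfl | rfl
    · exact mul_u _ ih
    · exact mul_v _ ih
  | mul_inv_cancel x _ y hy ih =>
    rcases hy with rfl | rfl
    · rw [h.u_inv, ← mul_assoc]; exact mul_u _ (mul_u _ ih)
    · rw [v_inv, ← mul_assoc, ← mul_assoc]; exact mul_v _ (mul_v _ (mul_v _ ih))

theorem isReflWord (h : ReflRel u v j) {k : G} (hk : k ∈ Subgroup.closure {u, v}) :
    IsReflWord u v j k :=
  h.induction_closure ⟨0, 0, Or.inl (by simp)⟩ (fun _ => h.isReflWord_mul_u)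
    (fun _ => h.isReflWord_mul_v) hk

end ReflRel

theorem exists_lt_zpow_eq_pow {x : G} {m : ℕ} (hm : 0 < m) (hx : x ^ m = 1) (n : ℤ) :
    ∃ k < m, x ^ n = x ^ k := by
  lift n % m to ℕ using Int.emod_nonneg n (by exact_mod_cast hm.ne') with k hk
  refine ⟨k, ?_, ?_⟩
  · have := Int.emod_lt_of_pos n (by exact_mod_cast hm : (0 : ℤ) < m)
    omega
  · rw [zpow_eq_zpow_emod n (by exact_mod_cast hx : x ^ (m : ℤ) = 1), ← hk, zpow_natCast]

theorem ReflRel.exists_eq_pow (h : ReflRel u v j) {k : G} (hk : k ∈ Subgroup.closure {u, v}) :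
    ∃ n < 12, ∃ i < 4, k = j ^ n * v ^ i ∨ (∃ l < 4, k = j ^ n * v ^ i * u * v ^ l) ∨
      k = j ^ n * v ^ i * (u * v ^ 3 * u) := by
  have v_inv : v⁻¹ = v ^ 3 := by
    rw [inv_eq_iff_mul_eq_one, ← h.v_pow]; group
  obtain ⟨n, i, hk⟩ := h.isReflWord hk
  obtain ⟨n', n'_lt, j_zpow⟩ := exists_lt_zpow_eq_pow (by norm_num) h.j_pow_twelve n
  obtain ⟨i', i'_lt, v_zpow⟩ := exists_lt_zpow_eq_pow (by norm_num) h.v_pow i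
  refine ⟨n', n'_lt, i', i'_lt, ?_⟩
  rw [j_zpow, v_zpow] at hk
  rcases hk with hk | ⟨l, hk⟩ | hk
  · exact Or.inl hk
  · obtain ⟨l', l'_lt, v_zpow'⟩ := exists_lt_zpow_eq_pow (by norm_num) h.v_pow l
    exact Or.inr (Or.inl ⟨l', l'_lt, v_zpow' ▸ hk⟩)
  · exact Or.inr (Or.inr (v_inv ▸ hk))

end NormalForm

/-- The relations of the Cartwright–Steger lattice, for elements `u`, `v`, `b` of any group, with a
name `j` for `(uv)²`. -/
structure LatticeRel (u v b j : G) : Prop extends ReflRel u v j where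
  b_pow : b ^ 3 = 1
  vb : v * b = b * v
  buv_pow : (b * u * v) ^ 3 = 1
  buvu_sq : (b * u * v * u) ^ 2 * v = 1

namespace LatticeRel

theorem word_bb (h : LatticeRel u v b j) : b * b = b⁻¹ := by
  rw [eq_inv_iff_mul_eq_one, ← h.b_pow, pow_three, mul_assoc]

theorem word_BiBi (h : LatticeRel u v b j) : b⁻¹ * b⁻¹ = b := by
  rw [← _root_.mul_inv_rev, h.word_bb, _root_.inv_inv]

theorem commute_v_b (h : LatticeRel u v b j) : Commute v b := h.vb

theorem word_bVi (h : LatticeRel u v b j) : b * v⁻¹ = v⁻¹ * b :=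
  h.commute_v_b.inv_left.eq.symm

theorem word_bjb (h : LatticeRel u v b j) : b * j * b = v * j⁻¹ := by
  have h1 := h.buvu_sq
  have h2 : (b * u * v * u) ^ 2 * v = b * (u * v * u) * b * (u * v * u) * v := by
    rw [pow_two]; group
  rw [h2, h.word_uvu] at h1
  have h3 : b * (j * v⁻¹) * b * (j * v⁻¹) * v = (b * j * b) * (v⁻¹ * j) := by
    calc _ = b * j * (v⁻¹ * b) * j := by group
      _ = _ := by rw [← h.word_bVi]; group
  rw [h3, mul_eq_one_iff_eq_inv] at h1
  rw [h1, _root_.mul_inv_rev, _root_.inv_inv]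
  exact h.commute_j_v.inv_left.eq

theorem word_bj (h : LatticeRel u v b j) : b * j = v * j⁻¹ * b⁻¹ := by rw [← h.word_bjb]; group
theorem word_jb (h : LatticeRel u v b j) : j * b = b⁻¹ * (v * j⁻¹) := by rw [← h.word_bjb]; group
theorem b_inv (h : LatticeRel u v b j) : b⁻¹ = j * b * (j * v⁻¹) := by
  have : j * v⁻¹ = (v * j⁻¹)⁻¹ := by group
  rw [this, ← h.word_bjb]; group

/-- The braid relation, hidden in `(buv)³ = 1`. -/
theorem word_bub (h : LatticeRel u v b j) : b * u * b = u * b * u := by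
  have h1 : (b * u * b) * (v * u * b * (v * u * v)) = 1 := by
    rw [← h.buv_pow]
    calc _ = b * u * (b * v) * u * (b * v) * u * v := by group
      _ = _ := by rw [← h.vb, pow_three]; group
  rw [mul_eq_one_iff_eq_inv] at h1
  calc _ = (v * u * v)⁻¹ * b⁻¹ * (v * u)⁻¹ := by rw [h1]; group
    _ = u * j⁻¹ * (j * b * (j * v⁻¹)) * (v * u)⁻¹ := by rw [h.word_vuv, ← h.b_inv]; group
    _ = u * b * j * (v * u * v)⁻¹ := by group
    _ = u * b * (j * u) * j⁻¹ := by rw [h.word_vuv]; group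
    _ = _ := by rw [h.commute_j_u.eq]; group

theorem word_ubUi (h : LatticeRel u v b j) : u * b * u⁻¹ = b⁻¹ * u * b := by
  calc _ = b⁻¹ * (b * u * b) * u⁻¹ := by group
    _ = _ := by rw [h.word_bub]; group

theorem word_BiUibu (h : LatticeRel u v b j) : b⁻¹ * u⁻¹ * b * u = u * b⁻¹ := by
  calc _ = b⁻¹ * u⁻¹ * (b * u * b) * b⁻¹ := by group
    _ = _ := by rw [h.word_bub]; group

theorem word_ut (h : LatticeRel u v b j) : u * (b * u⁻¹ * b) = b⁻¹ * u * b⁻¹ := by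
  calc _ = (u * b * u⁻¹) * b := by group
    _ = b⁻¹ * u * (b * b) := by rw [h.word_ubUi]; group
    _ = _ := by rw [h.word_bb]

theorem word_tu (h : LatticeRel u v b j) : b * u⁻¹ * b * u = u * (b * u⁻¹ * b) := by
  calc _ = b * b * (b⁻¹ * u⁻¹ * b * u) := by group
    _ = _ := by rw [h.word_BiUibu, h.word_bb, h.word_ut]; group

theorem word_tt (h : LatticeRel u v b j) : b * u⁻¹ * b * (b * u⁻¹ * b) = u⁻¹ := by
  have h1 : (b * u⁻¹ * b) * (u * (b * u⁻¹ * b)) = 1 := by rw [h.word_ut]; group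
  rw [← mul_assoc, h.word_tu] at h1
  rw [eq_inv_iff_mul_eq_one, mul_assoc, h.word_tu, ← mul_assoc, h.word_tu]
  exact h1

theorem word_bjjb (h : LatticeRel u v b j) : b * (j * j) * b = v * j⁻¹ * b * (v * j⁻¹) := by
  calc _ = (b * j) * (j * b) := by group
    _ = v * j⁻¹ * (b⁻¹ * b⁻¹) * (v * j⁻¹) := by rw [h.word_bj, h.word_jb]; group
    _ = _ := by rw [h.word_BiBi]

theorem word_bjub (h : LatticeRel u v b j) : b * j * u * b = v * j⁻¹ * u * b * u⁻¹ := by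
  calc _ = v * j⁻¹ * (b⁻¹ * u * b) := by rw [h.word_bj]; group
    _ = _ := by rw [← h.word_ubUi]; group

theorem word_bjjub (h : LatticeRel u v b j) :
    b * (j * j) * u * b = v * j⁻¹ * u * (b * u⁻¹ * b) * (v * j⁻¹) := by
  calc _ = (b * j) * (j * u) * b := by group
    _ = (b * j) * u * (j * b) := by rw [h.commute_j_u.eq]; group
    _ = v * j⁻¹ * (b⁻¹ * u * b⁻¹) * (v * j⁻¹) := by rw [h.word_bj, h.word_jb]; group
    _ = _ := by rw [← h.word_ut]; group

theorem word_bJiub (h : LatticeRel u v b j) : b * j⁻¹ * u * b = v⁻¹ * (b * u⁻¹ * b) * v⁻¹ := by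
  have h1 : u = j * (v⁻¹ * u⁻¹) * v⁻¹ := by rw [← h.word_uv]; group
  calc _ = b * j⁻¹ * (j * (v⁻¹ * u⁻¹) * v⁻¹) * b := by rw [← h1]
    _ = (b * v⁻¹) * u⁻¹ * (v⁻¹ * b) := by group
    _ = _ := by rw [h.word_bVi, ← h.word_bVi]; nth_rewrite 1 [h.word_bVi]; group

theorem word_bt (h : LatticeRel u v b j) : b * (b * u⁻¹ * b) = u * b⁻¹ * u⁻¹ := by
  calc _ = (b * b) * u⁻¹ * b := by group
    _ = (b⁻¹ * u⁻¹ * b * u) * u⁻¹ := by rw [h.word_bb]; group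
    _ = _ := by rw [h.word_BiUibu]

theorem word_bjt (h : LatticeRel u v b j) : b * j * (b * u⁻¹ * b) = v * j⁻¹ * u⁻¹ * b := by
  rw [← h.word_bjb]; group

theorem word_buBi (h : LatticeRel u v b j) : b * u * b⁻¹ = u⁻¹ * b * u := by
  calc _ = u⁻¹ * (u * b * u) * b⁻¹ := by group
    _ = _ := by rw [← h.word_bub]; group

theorem word_utvtu (h : LatticeRel u v b j) :
    u * (b * u⁻¹ * b * v * (b * u⁻¹ * b)) * u = b * j⁻¹ * u * b := by
  calc _ = (u * b * u⁻¹) * (b * v) * (b * u⁻¹ * b * u) := by group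
    _ = (u * b * u⁻¹) * v * (b * b) * u⁻¹ * b * u := by rw [← h.vb]; group
    _ = (u * b * u⁻¹) * v * (b⁻¹ * u⁻¹ * b * u) := by rw [h.word_bb]; group
    _ = b⁻¹ * u * (b * v) * u * b⁻¹ := by rw [h.word_ubUi, h.word_BiUibu]; group
    _ = b⁻¹ * u * v * (b * u * b⁻¹) := by rw [← h.vb]; group
    _ = b⁻¹ * (u * v * u⁻¹) * b * u := by rw [h.word_buBi]; group
    _ = b⁻¹ * j * v⁻¹ * (u * b * u) := by rw [h.word_uvUi]; group
    _ = b⁻¹ * j * (v⁻¹ * b) * u * b := by rw [← h.word_bub]; group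
    _ = b⁻¹ * (j * b) * v⁻¹ * u * b := by rw [← h.word_bVi]; group
    _ = (b⁻¹ * b⁻¹) * (v * j⁻¹) * v⁻¹ * u * b := by rw [h.word_jb]; group
    _ = _ := by rw [h.word_BiBi, ← h.commute_j_v.inv_left.eq]; group

theorem word_tvt (h : LatticeRel u v b j) : b * u⁻¹ * b * v * (b * u⁻¹ * b) =
    u⁻¹ * v⁻¹ * (b * u⁻¹ * b) * (v⁻¹ * u⁻¹) := by
  calc _ = u⁻¹ * (u * (b * u⁻¹ * b * v * (b * u⁻¹ * b)) * u) * u⁻¹ := by group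
    _ = _ := by rw [h.word_utvtu, h.word_bJiub]; group

theorem word_tVit (h : LatticeRel u v b j) :
    b * u⁻¹ * b * v⁻¹ * (b * u⁻¹ * b) = v * u * (b * u⁻¹ * b) * v := by
  have hT : (b * u⁻¹ * b)⁻¹ = u * (b * u⁻¹ * b) := by rw [h.word_ut]; group
  have h1 := congrArg (·⁻¹) h.word_tvt
  simp only [_root_.mul_inv_rev _ (b * u⁻¹ * b), _root_.mul_inv_rev _ v,
    _root_.mul_inv_rev _ (v⁻¹ * u⁻¹), hT] at h1
  rw [← h.word_tu] at h1
  have h2 := congrArg (fun x => u⁻¹ * x * u⁻¹) h1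
  calc _ = u⁻¹ * (u * (b * u⁻¹ * b) * v⁻¹ * (b * u⁻¹ * b * u)) * u⁻¹ := by group
    _ = v * (b * u⁻¹ * b * u) * v := by
      rw [← h.word_tu, mul_assoc (b * u⁻¹ * b * u), h2]; group
    _ = _ := by rw [h.word_tu]; group

end LatticeRel

end Words

open CycloInt

/-! ### The integral unitary group -/

/-- `3 × 3` matrices over `ℤ[ζ]`. -/
abbrev Mat3 := Matrix (Fin 3) (Fin 3) CycloInt

/-- The Gram matrix `γ₀* F γ₀` of the Hermitian form in the basis given by `γ₀`. -/
def gramMatrix : Mat3 := !![2, 1 - r, 0; 1 - r, 4 - 2 * r, 0; 0, 0, 1 - r]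

/-- The matrix `u'`. -/
def uPrime : Mat3 := !![⟨0, -1, 1, 1⟩, ⟨1, -1, 0, 0⟩, 0; ⟨-1, 0, 1, 1⟩, ⟨0, 1, 0, -1⟩, 0; 0, 0, 1]

/-- The matrix `v'`. -/
def vPrime : Mat3 := !![⟨0, 0, 0, 1⟩, 0, 0; ⟨-1, -1, 1, 1⟩, 1, 0; 0, 0, 1]

/-- The matrix `b'`. -/
def bPrime : Mat3 := !![1, 0, 0; ⟨2, 2, -1, -2⟩, ⟨-1, -1, 1, 1⟩, ⟨0, 0, -1, -1⟩;
  ⟨0, 1, 1, 0⟩, ⟨-1, 0, 0, -1⟩, ⟨1, 1, 0, -1⟩]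

/-- The matrix `(u'v')²`. -/
def jPrime : Mat3 := !![zeta, 0, 0; 0, zeta, 0; 0, 0, 1]

/-- The integral unitary group `γ₀⁻¹ U γ₀`, in the coordinates given by `γ₀`. -/
def IntUnitary : Subgroup Mat3ˣ where
  carrier := {A | (A : Mat3)ᴴ * gramMatrix * (A : Mat3) = gramMatrix}
  one_mem' := by simp
  mul_mem' {A B} hA hB := by
    simp only [Set.mem_ofPred_eq, Units.val_mul, Matrix.conjTranspose_mul] at *
    calc _ = (B : Mat3)ᴴ * ((A : Mat3)ᴴ * gramMatrix * (A : Mat3)) * (B : Mat3) := by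
          simp only [Matrix.mul_assoc]
      _ = _ := by rw [hA, hB]
  inv_mem' {A} hA := by
    simp only [Set.mem_ofPred_eq] at *
    have mul_inv : (A : Mat3) * ((A⁻¹ : Mat3ˣ) : Mat3) = 1 := by simp
    have inv_star_mul_star : ((A⁻¹ : Mat3ˣ) : Mat3)ᴴ * (A : Mat3)ᴴ = 1 := by
      rw [← Matrix.conjTranspose_mul, mul_inv, Matrix.conjTranspose_one]
    calc _ = ((A⁻¹ : Mat3ˣ) : Mat3)ᴴ * ((A : Mat3)ᴴ * gramMatrix * (A : Mat3)) *
            ((A⁻¹ : Mat3ˣ) : Mat3) := by rw [hA]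
      _ = (((A⁻¹ : Mat3ˣ) : Mat3)ᴴ * (A : Mat3)ᴴ) * gramMatrix *
            ((A : Mat3) * ((A⁻¹ : Mat3ˣ) : Mat3)) := by simp only [Matrix.mul_assoc]
      _ = _ := by rw [mul_inv, inv_star_mul_star]; simp

/-- The matrix of an element of the integral unitary group. -/
def mat : IntUnitary →* Mat3 := (Units.coeHom Mat3).comp IntUnitary.subtype

theorem mat_injective : Function.Injective mat := fun _ _ h => Subtype.ext (Units.ext h)

theorem mat_unitary (A : IntUnitary) : (mat A)ᴴ * gramMatrix * mat A = gramMatrix := A.2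

namespace IntUnitary

/-- The element of `IntUnitary` with a given matrix and inverse matrix. -/
def mk (A B : Mat3) (mul_eq_one : A * B = 1) (mul_eq_one' : B * A = 1)
    (unitary : Aᴴ * gramMatrix * A = gramMatrix) : IntUnitary :=
  ⟨⟨A, B, mul_eq_one, mul_eq_one'⟩, unitary⟩

/-- `u'` as an element of the integral unitary group. -/
def u : IntUnitary :=
  mk uPrime (uPrime * uPrime) (by decide +kernel) (by decide +kernel) (by decide +kernel)

/-- `v'` as an element of the integral unitary group. -/
def v : IntUnitary :=
  mk vPrime (vPrime * vPrime * vPrime) (by decide +kernel) (by decide +kernel) (by decide +kernel)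

/-- `b'` as an element of the integral unitary group. -/
def b : IntUnitary :=
  mk bPrime (bPrime * bPrime) (by decide +kernel) (by decide +kernel) (by decide +kernel)

/-- The scalar matrix `ζ`, as an element of the integral unitary group. -/
def zeta : IntUnitary :=
  mk (CycloInt.zeta • 1) (CycloInt.zeta ^ 11 • 1) (by decide +kernel) (by decide +kernel)
    (by decide +kernel)

/-- The element `(uv)²` of the integral unitary group. -/
def j : IntUnitary := u * v * u * v

theorem mat_u : mat u = uPrime := rfl
theorem mat_v : mat v = vPrime := rfl
theorem mat_b : mat b = bPrime := rfl
theorem mat_zeta : mat zeta = CycloInt.zeta • 1 := rfl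
theorem mat_j : mat j = jPrime := by
  simp only [j, map_mul, mat_u, mat_v]; decide +kernel

theorem commute_zeta (A : IntUnitary) : Commute zeta A :=
  mat_injective (by simp [map_mul, mat_zeta])

theorem mat_zeta_pow (k : ℕ) : mat (zeta ^ k) = CycloInt.zeta ^ k • 1 := by
  rw [map_pow, mat_zeta, smul_pow, one_pow]

theorem zeta_pow_twelve : zeta ^ 12 = 1 :=
  mat_injective (by rw [mat_zeta_pow, CycloInt.zeta_pow_twelve]; simp)

end IntUnitary

/-- The central subgroup of scalar matrices `ζᵏ`. -/
def scalars : Subgroup IntUnitary := Subgroup.zpowers IntUnitary.zeta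

theorem mem_scalars {A : IntUnitary} : A ∈ scalars ↔ ∃ k < 12, mat A = zeta ^ k • 1 := by
  constructor
  · rintro ⟨n, rfl⟩
    obtain ⟨k, hk, h⟩ := exists_lt_zpow_eq_pow (by norm_num) IntUnitary.zeta_pow_twelve n
    exact ⟨k, hk, by simp only [h, IntUnitary.mat_zeta_pow]⟩
  · rintro ⟨k, -, h⟩
    have : A = IntUnitary.zeta ^ k := mat_injective (by rw [h, IntUnitary.mat_zeta_pow])
    rw [this]
    exact pow_mem (Subgroup.mem_zpowers IntUnitary.zeta) k

instance : scalars.Normal where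
  conj_mem := by
    rintro _ ⟨n, rfl⟩ g
    refine ⟨n, ?_⟩
    rw [← ((IntUnitary.commute_zeta g).zpow_left n).eq, mul_inv_cancel_right]

/-- The projective integral unitary group. -/
abbrev PU := IntUnitary ⧸ scalars

theorem mk_eq_mk_of_mat_eq_smul {A B : IntUnitary} (k : ℕ) (h : mat A = zeta ^ k • mat B) :
    (QuotientGroup.mk A : PU) = QuotientGroup.mk B := by
  symm
  rw [QuotientGroup.eq]
  have : A = B * IntUnitary.zeta ^ k :=
    mat_injective (by rw [map_mul, IntUnitary.mat_zeta_pow, h]; simp)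
  rw [this, inv_mul_cancel_left]
  exact pow_mem (Subgroup.mem_zpowers IntUnitary.zeta) k

theorem mk_eq_one_of_mat_eq_smul {A : IntUnitary} (k : ℕ) (h : mat A = zeta ^ k • 1) :
    (QuotientGroup.mk A : PU) = 1 :=
  mk_eq_mk_of_mat_eq_smul (B := 1) k (by rw [h, map_one])

theorem exists_mat_eq_smul_of_mk_eq_mk {A B : IntUnitary}
    (h : (QuotientGroup.mk A : PU) = QuotientGroup.mk B) :
    ∃ k < 12, mat B = zeta ^ k • mat A := by
  rw [QuotientGroup.eq, mem_scalars] at h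
  obtain ⟨k, hk, h⟩ := h
  refine ⟨k, hk, ?_⟩
  rw [← mul_inv_cancel_left A B, map_mul, h]; simp

/-- The images of the generators in the projective integral unitary group. -/
def genPU : CSgen → PU
  | .u => QuotientGroup.mk IntUnitary.u
  | .v => QuotientGroup.mk IntUnitary.v
  | .b => QuotientGroup.mk IntUnitary.b

namespace IntUnitary

-- On matrices the last two relators are the scalar `ζ⁻¹`; the others are `1`.
theorem lift_genPU_eq_one : ∀ w ∈ csRels, FreeGroup.lift genPU w = 1 := by
  intro w hw
  simp only [csRels, Set.mem_insert_iff, Set.mem_singleton_iff] at hw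
  rcases hw with rfl | rfl | rfl | rfl | rfl | rfl | rfl <;>
    simp only [map_pow, map_mul, map_inv, FreeGroup.lift_apply_of, genPU]
  · exact mk_eq_one_of_mat_eq_smul (A := u ^ 3) 0 (by
      simp only [map_pow, mat_u]; decide +kernel)
  · exact mk_eq_one_of_mat_eq_smul (A := v ^ 4) 0 (by
      simp only [map_pow, mat_v]; decide +kernel)
  · exact mk_eq_one_of_mat_eq_smul (A := b ^ 3) 0 (by
      simp only [map_pow, mat_b]; decide +kernel)
  · rw [mul_inv_eq_one]
    exact mk_eq_mk_of_mat_eq_smul (A := (u * v) ^ 2) (B := (v * u) ^ 2) 0 (by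
      simp only [map_pow, map_mul, mat_u, mat_v]; decide +kernel)
  · rw [mul_inv_eq_one]
    exact mk_eq_mk_of_mat_eq_smul (A := v * b) (B := b * v) 0 (by
      simp only [map_mul, mat_b, mat_v]; decide +kernel)
  · exact mk_eq_one_of_mat_eq_smul (A := (b * u * v) ^ 3) 11 (by
      simp only [map_pow, map_mul, mat_u, mat_v, mat_b]; decide +kernel)
  · exact mk_eq_one_of_mat_eq_smul (A := (b * u * v * u) ^ 2 * v) 11 (by
      simp only [map_pow, map_mul, mat_u, mat_v, mat_b]; decide +kernel)

end IntUnitary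

/-- The homomorphism from the presented group to the projective integral unitary group. -/
def toPU : CS →* PU := PresentedGroup.toGroup IntUnitary.lift_genPU_eq_one

theorem toPU_gu : toPU gu = QuotientGroup.mk IntUnitary.u :=
  PresentedGroup.toGroup.of IntUnitary.lift_genPU_eq_one
theorem toPU_gv : toPU gv = QuotientGroup.mk IntUnitary.v :=
  PresentedGroup.toGroup.of IntUnitary.lift_genPU_eq_one
theorem toPU_gb : toPU gb = QuotientGroup.mk IntUnitary.b :=
  PresentedGroup.toGroup.of IntUnitary.lift_genPU_eq_one

theorem latticeRel : LatticeRel gu gv gb gj := by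
  have rel {w : FreeGroup CSgen} (hw : w ∈ csRels) : PresentedGroup.mk csRels w = 1 :=
    PresentedGroup.one_of_mem hw
  have uvuv : gu * gv * gu * gv = gj := by rw [gj, pow_two]; simp only [mul_assoc]
  have mk_eq {w w' : FreeGroup CSgen} (hw : w * w'⁻¹ ∈ csRels) :
      PresentedGroup.mk csRels w = PresentedGroup.mk csRels w' := by
    rw [← mul_inv_eq_one, ← map_inv, ← map_mul, rel hw]
  let u : FreeGroup CSgen := .of .u
  let v : FreeGroup CSgen := .of .v
  let b : FreeGroup CSgen := .of .b
  refine
    { u_pow := rel (w := u ^ 3) (by simp [csRels, u])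
      v_pow := rel (w := v ^ 4) (by simp [csRels, v])
      uvuv := uvuv
      vuvu := ?_
      b_pow := rel (w := b ^ 3) (by simp [csRels, b])
      vb := mk_eq (w := v * b) (w' := b * v) (by simp [csRels, v, b])
      buv_pow := rel (w := (b * u * v) ^ 3) (by simp [csRels, b, u, v])
      buvu_sq := rel (w := (b * u * v * u) ^ 2 * v) (by simp [csRels, b, u, v]) }
  have := mk_eq (w := (u * v) ^ 2) (w' := (v * u) ^ 2) (by simp [csRels, u, v])
  rw [pow_two (v * u), ← mul_assoc] at this
  exact this.symm

/-! ### The finite group generated by `u` and `v` -/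

/-- The graph, inside `G × IntUnitary`, of an isomorphism between the subgroup of `G` generated by
`u` and `v` and a finite matrix group. -/
def Kgraph : Subgroup (CS × IntUnitary) :=
  Subgroup.closure {(gu, IntUnitary.u), (gv, IntUnitary.v)}

namespace Kgraph

/-- `u` together with its matrix. -/
def u : CS × IntUnitary := (gu, IntUnitary.u)

/-- `v` together with its matrix. -/
def v : CS × IntUnitary := (gv, IntUnitary.v)

/-- `j` together with its matrix. -/
def j : CS × IntUnitary := (gj, IntUnitary.j)

/-- The matrix of the second component of a pair. -/
def mat : CS × IntUnitary →* Mat3 := _root_.mat.comp (MonoidHom.snd CS IntUnitary)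

theorem mat_u : mat u = uPrime := rfl
theorem mat_v : mat v = vPrime := rfl
theorem mat_j : mat j = jPrime := IntUnitary.mat_j

theorem reflRel : ReflRel u v j where
  u_pow := Prod.ext latticeRel.u_pow (mat_injective (by
    change mat (u ^ 3) = 1
    rw [map_pow, mat_u]; decide +kernel))
  v_pow := Prod.ext latticeRel.v_pow (mat_injective (by
    change mat (v ^ 4) = 1
    rw [map_pow, mat_v]; decide +kernel))
  uvuv := Prod.ext latticeRel.uvuv rfl
  vuvu := Prod.ext latticeRel.vuvu (mat_injective (by
    change mat (v * u * v * u) = mat j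
    simp only [map_mul, mat_u, mat_v, mat_j]; decide +kernel))

theorem u_mem : u ∈ Kgraph := Subgroup.subset_closure (by simp [u])
theorem v_mem : v ∈ Kgraph := Subgroup.subset_closure (by simp [v])
theorem j_mem : j ∈ Kgraph := by
  rw [← reflRel.uvuv]
  exact mul_mem (mul_mem (mul_mem u_mem v_mem) u_mem) v_mem

theorem toPU_fst {k : CS × IntUnitary} (hk : k ∈ Kgraph) :
    toPU k.1 = QuotientGroup.mk k.2 := by
  have : Kgraph ≤ (toPU.comp (MonoidHom.fst CS IntUnitary)).eqLocus
      ((QuotientGroup.mk' scalars).comp (MonoidHom.snd CS IntUnitary)) := by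
    rw [Kgraph, Subgroup.closure_le]
    rintro x (rfl | rfl)
    · exact toPU_gu
    · exact toPU_gv
  exact this hk

theorem mat_blockDiagonal {k : CS × IntUnitary} (hk : k ∈ Kgraph) :
    mat k 2 0 = 0 ∧ mat k 2 1 = 0 ∧ mat k 2 2 = 1 ∧ mat k 0 2 = 0 ∧ mat k 1 2 = 0 := by
  refine reflRel.induction_closure (p := fun k => mat k 2 0 = 0 ∧ mat k 2 1 = 0 ∧
    mat k 2 2 = 1 ∧ mat k 0 2 = 0 ∧ mat k 1 2 = 0) ?_ ?_ ?_ hk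
  · rw [map_one]; decide +kernel
  · rintro k ⟨h20, h21, h22, h02, h12⟩
    rw [map_mul, mat_u]
    simp [Matrix.mul_apply, Fin.sum_univ_three, uPrime, h20, h21, h22, h02, h12]
  · rintro k ⟨h20, h21, h22, h02, h12⟩
    rw [map_mul, mat_v]
    simp [Matrix.mul_apply, Fin.sum_univ_three, vPrime, h20, h21, h22, h02, h12]

theorem reflWord_eq_one_imp : ∀ (n : Fin 12) (i : Fin 4),
    (jPrime ^ (n : ℕ) * vPrime ^ (i : ℕ) = 1 → n = 0 ∧ i = 0) ∧
    (∀ l : Fin 4, jPrime ^ (n : ℕ) * vPrime ^ (i : ℕ) * uPrime * vPrime ^ (l : ℕ) ≠ 1) ∧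
    jPrime ^ (n : ℕ) * vPrime ^ (i : ℕ) * (uPrime * vPrime ^ 3 * uPrime) ≠ 1 := by
  decide +kernel

theorem eq_one_of_mat_eq_one {k : CS × IntUnitary} (hk : k ∈ Kgraph) (h : mat k = 1) : k = 1 := by
  obtain ⟨n, hn, i, hi, rfl | ⟨l, hl, rfl⟩ | rfl⟩ := reflRel.exists_eq_pow hk <;>
    simp only [map_mul, map_pow, mat_u, mat_v, mat_j] at h
  · obtain ⟨n_eq, i_eq⟩ := (reflWord_eq_one_imp ⟨n, hn⟩ ⟨i, hi⟩).1 h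
    rw [show n = 0 from congrArg Fin.val n_eq, show i = 0 from congrArg Fin.val i_eq]
    simp
  · exact absurd h ((reflWord_eq_one_imp ⟨n, hn⟩ ⟨i, hi⟩).2.1 ⟨l, hl⟩)
  · exact absurd h (reflWord_eq_one_imp ⟨n, hn⟩ ⟨i, hi⟩).2.2

theorem mat_injOn : Set.InjOn mat Kgraph := fun k hk l hl h =>
  inv_mul_eq_one.mp <| eq_one_of_mat_eq_one (mul_mem (inv_mem hk) hl) <| by
    rw [map_mul, ← h, ← map_mul, inv_mul_cancel, map_one]

end Kgraph

/-! ### The double cosets of the finite group -/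

/-- The element `t = b u⁻¹ b` of the presented group. -/
def gt : CS := gb * gu⁻¹ * gb

/-- The element `t = b u⁻¹ b` of the integral unitary group. -/
def IntUnitary.t : IntUnitary := IntUnitary.b * IntUnitary.u⁻¹ * IntUnitary.b

/-- The matrix `b' u'⁻¹ b'`. -/
def tPrime : Mat3 := !![⟨1, 0, -1, -1⟩, ⟨-1, 0, 1, 0⟩, ⟨0, 0, -1, 0⟩;
  ⟨2, 1, -2, -2⟩, ⟨-1, -2, 0, 2⟩, ⟨1, 0, -2, -2⟩; ⟨0, 1, 1, 0⟩, ⟨0, 0, -1, -1⟩, ⟨1, 2, 0, -1⟩]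

theorem IntUnitary.mat_t : mat IntUnitary.t = tPrime := by
  have mat_u_inv : mat IntUnitary.u⁻¹ = uPrime * uPrime := rfl
  simp only [IntUnitary.t, map_mul, mat_b, mat_u_inv]; decide +kernel

theorem toPU_gt : toPU gt = QuotientGroup.mk IntUnitary.t := by
  simp only [gt, IntUnitary.t, map_mul, map_inv, toPU_gb, toPU_gu, QuotientGroup.mk_mul,
    QuotientGroup.mk_inv]

theorem toPU_gj : toPU gj = QuotientGroup.mk IntUnitary.j := Kgraph.toPU_fst Kgraph.j_mem

theorem gt_inv : gt⁻¹ = gu * gt := by rw [gt, latticeRel.word_ut]; group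

theorem commute_gt_gu : Commute gt gu := latticeRel.word_tu

theorem gj_pow_eleven : gj ^ 11 = gj⁻¹ := by
  rw [eq_inv_iff_mul_eq_one, ← pow_succ, latticeRel.j_pow_twelve]

theorem exists_fin_gj_pow_eq (n : ℕ) : ∃ m : Fin 12, gj ^ n = gj ^ (m : ℕ) := by
  obtain ⟨k, hk, h⟩ := exists_lt_zpow_eq_pow (by norm_num) latticeRel.j_pow_twelve n
  exact ⟨⟨k, hk⟩, by simpa using h⟩

/-- The finite subgroup of `G` generated by `u` and `v`, the stabiliser of a point. -/
def K : Subgroup CS := Subgroup.closure {gu, gv}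

@[simp] theorem gu_mem_K : gu ∈ K := Subgroup.subset_closure (by simp)
@[simp] theorem gv_mem_K : gv ∈ K := Subgroup.subset_closure (by simp)
@[simp] theorem gj_mem_K : gj ∈ K := by
  rw [← latticeRel.uvuv]
  exact mul_mem (mul_mem (mul_mem gu_mem_K gv_mem_K) gu_mem_K) gv_mem_K

theorem map_fst_Kgraph : Kgraph.map (MonoidHom.fst CS IntUnitary) = K := by
  rw [Kgraph, MonoidHom.map_closure, Set.image_pair]; rfl

theorem exists_Kgraph_fst_eq {k : CS} (hk : k ∈ K) : ∃ l ∈ Kgraph, l.1 = k := by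
  rwa [← map_fst_Kgraph] at hk

namespace Kgraph

/-- An identity between words in `u`, `v` and `j` can be checked on matrices; by default both the
membership conditions and the matrix identity are discharged automatically. -/
theorem fst_eq (k l : CS × IntUnitary)
    (hk : k ∈ Kgraph := by apply_rules [mul_mem, pow_mem, one_mem, u_mem, v_mem, j_mem])
    (hl : l ∈ Kgraph := by apply_rules [mul_mem, pow_mem, one_mem, u_mem, v_mem, j_mem])
    (h : mat k = mat l := by
      simp only [map_mul, map_pow, map_one, mat_u, mat_v, mat_j]; decide +kernel) : k.1 = l.1 :=
  congrArg Prod.fst (mat_injOn hk hl h)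

end Kgraph

namespace K

section
open Kgraph

theorem exists_eq_vv {k : CS} (hk : k ∈ K) :
    ∃ n i l : ℕ, ∃ x ∈ ({1, gu, gu * gv ^ 3 * gu} : Set CS),
      k = gj ^ n * gv ^ i * (x * gv ^ l) := by
  obtain ⟨n, -, i, -, rfl | ⟨l, -, rfl⟩ | rfl⟩ := latticeRel.exists_eq_pow hk
  · exact ⟨n, i, 0, 1, by simp, by simp⟩
  · exact ⟨n, i, l, gu, by simp, by simp only [mul_assoc]⟩
  · exact ⟨n, i, 0, gu * gv ^ 3 * gu, by simp, by simp⟩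

theorem gj_pow_mul_pow_mul {x : CS} (hx : Commute gj x) (n i c d : ℕ) (w : CS) :
    gj ^ n * x ^ i * (gj ^ c * x ^ d * w) = gj ^ (n + c) * x ^ (i + d) * w := by
  calc _ = gj ^ n * (x ^ i * gj ^ c) * x ^ d * w := by simp only [mul_assoc]
    _ = _ := by rw [← (hx.pow_pow c i).eq]; simp only [pow_add, mul_assoc]

theorem exists_eq_vu {k : CS} (hk : k ∈ K) :
    ∃ n i l : ℕ, ∃ x ∈ ({1, gu * gv ^ 2} : Set CS), k = gj ^ n * gv ^ i * (x * gu ^ l) := by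
  obtain ⟨n, -, i, -, rfl | ⟨l, hl, rfl⟩ | rfl⟩ := latticeRel.exists_eq_pow hk
  · exact ⟨n, i, 0, 1, by simp, by simp⟩
  · have u_v_pow : ∃ c d e : ℕ, ∃ x ∈ ({1, gu * gv ^ 2} : Set CS),
        gu * gv ^ l = gj ^ c * gv ^ d * (x * gu ^ e) := by
      interval_cases l
      · exact ⟨0, 0, 1, 1, by simp, by simp⟩
      · exact ⟨1, 3, 2, 1, by simp, fst_eq (u * v ^ 1) (j ^ 1 * v ^ 3 * (1 * u ^ 2))⟩
      · exact ⟨0, 0, 0, gu * gv ^ 2, by simp, by simp⟩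
      · exact ⟨10, 1, 1, gu * gv ^ 2, by simp,
          fst_eq (u * v ^ 3) (j ^ 10 * v ^ 1 * (u * v ^ 2 * u ^ 1))⟩
    obtain ⟨c, d, e, x, hx, h⟩ := u_v_pow
    exact ⟨n + c, i + d, e, x, hx, by
      rw [mul_assoc _ gu, h, gj_pow_mul_pow_mul latticeRel.commute_j_v]⟩
  · have u_v_u : gu * gv ^ 3 * gu = gj ^ 10 * gv ^ 1 * (gu * gv ^ 2 * gu ^ 2) :=
      fst_eq (u * v ^ 3 * u) (j ^ 10 * v ^ 1 * (u * v ^ 2 * u ^ 2))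
    exact ⟨n + 10, i + 1, 2, gu * gv ^ 2, by simp, by
      rw [u_v_u, gj_pow_mul_pow_mul latticeRel.commute_j_v]⟩

/-- Representatives of `⟨u⟩ \ K / ⟨u⟩` modulo the powers of `j`. -/
def uuReps : Set CS := {1, gv, gv ^ 2, gv ^ 2 * gu ^ 2 * gv}

theorem uuReps_mul_v {x : CS} (hx : x ∈ uuReps) {l : ℕ} (hl : l < 3) :
    ∃ c d e : ℕ, ∃ y ∈ uuReps, x * gu ^ l * gv = gj ^ c * gu ^ d * (y * gu ^ e) := by
  simp only [uuReps, Set.mem_insert_iff, Set.mem_singleton_iff, exists_eq_or_imp,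
    exists_eq_left] at hx ⊢
  rcases hx with rfl | rfl | rfl | rfl <;> interval_cases l
  · exact ⟨0, 0, 0, .inr <| .inl <| by simp⟩
  · exact ⟨0, 1, 0, .inr <| .inl <| by simp⟩
  · exact ⟨0, 2, 0, .inr <| .inl <| by simp⟩
  · exact ⟨0, 0, 0, .inr <| .inr <| .inl <| by simp [pow_two]⟩
  · exact ⟨1, 2, 0, .inl <| fst_eq (v * u ^ 1 * v) (j ^ 1 * u ^ 2 * (1 * u ^ 0))⟩
  · exact ⟨2, 2, 2, .inr <| .inr <| .inl <|
      fst_eq (v * u ^ 2 * v) (j ^ 2 * u ^ 2 * (v ^ 2 * u ^ 2))⟩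
  · exact ⟨11, 1, 1, .inr <| .inl <| fst_eq (v ^ 2 * u ^ 0 * v) (j ^ 11 * u ^ 1 * (v * u ^ 1))⟩
  · exact ⟨1, 0, 2, .inr <| .inl <| fst_eq (v ^ 2 * u ^ 1 * v) (j ^ 1 * u ^ 0 * (v * u ^ 2))⟩
  · exact ⟨0, 0, 0, .inr <| .inr <| .inr <| by simp⟩
  · exact ⟨9, 1, 1, .inr <| .inr <| .inl <|
      fst_eq (v ^ 2 * u ^ 2 * v * u ^ 0 * v) (j ^ 9 * u ^ 1 * (v ^ 2 * u ^ 1))⟩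
  · exact ⟨1, 0, 1, .inr <| .inr <| .inl <|
      fst_eq (v ^ 2 * u ^ 2 * v * u ^ 1 * v) (j ^ 1 * u ^ 0 * (v ^ 2 * u ^ 1))⟩
  · exact ⟨5, 2, 1, .inr <| .inr <| .inl <|
      fst_eq (v ^ 2 * u ^ 2 * v * u ^ 2 * v) (j ^ 5 * u ^ 2 * (v ^ 2 * u ^ 1))⟩

theorem exists_eq_uu {k : CS} (hk : k ∈ K) :
    ∃ n i l : ℕ, ∃ x ∈ uuReps, k = gj ^ n * gu ^ i * (x * gu ^ l) := by
  refine latticeRel.induction_closure (p := fun k => ∃ n i l : ℕ, ∃ x ∈ uuReps,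
    k = gj ^ n * gu ^ i * (x * gu ^ l)) ⟨0, 0, 0, 1, by simp [uuReps], by simp⟩ ?_ ?_ hk
  · rintro _ ⟨n, i, l, x, hx, rfl⟩
    exact ⟨n, i, l + 1, x, hx, by simp only [pow_succ, mul_assoc]⟩
  · rintro _ ⟨n, i, l, x, hx, rfl⟩
    obtain ⟨m, hm, h⟩ := exists_lt_zpow_eq_pow (by norm_num) latticeRel.u_pow l
    rw [zpow_natCast] at h
    obtain ⟨c, d, e, y, hy, hxy⟩ := uuReps_mul_v hx hm
    exact ⟨n + c, i + d, e, y, hy, by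
      rw [h, mul_assoc _ _ gv, hxy, gj_pow_mul_pow_mul latticeRel.commute_j_u]⟩

end

end K

/-! ### The corner entry -/

theorem one_sub_r_mul_cancel {x y : CycloInt} (h : (1 - r) * x = (1 - r) * y) : x = y := by
  have two_mul_eq : ofZsqrt (-2) * x = ofZsqrt (-2) * y := by
    rw [show ofZsqrt (-2) = (1 + r) * (1 - r) by decide +kernel, mul_assoc, h, mul_assoc]
  simp only [ofZsqrt_eq, mul_def, CycloInt.mk.injEq, Zsqrtd.re_neg, Zsqrtd.im_neg,
    Zsqrtd.re_ofNat, Zsqrtd.im_ofNat] at two_mul_eq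
  ext <;> lia

theorem mat_inv_corner (A : IntUnitary) : mat A⁻¹ 2 2 = star (mat A 2 2) := by
  have adjoint : (mat A)ᴴ * gramMatrix = gramMatrix * mat A⁻¹ := by
    calc _ = (mat A)ᴴ * gramMatrix * (mat A * mat A⁻¹) := by simp [← map_mul]
      _ = (mat A)ᴴ * gramMatrix * mat A * mat A⁻¹ := by simp only [Matrix.mul_assoc]
      _ = _ := by rw [mat_unitary]
  have corner := congrFun (congrFun adjoint 2) 2
  simp only [Matrix.mul_apply, Fin.sum_univ_three, gramMatrix, Matrix.conjTranspose_apply] at corner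
  apply one_sub_r_mul_cancel
  simpa [mul_comm] using corner.symm

theorem absSq_corner_congr {A B : IntUnitary}
    (h : (QuotientGroup.mk A : PU) = QuotientGroup.mk B) :
    absSq (mat A 2 2) = absSq (mat B 2 2) := by
  obtain ⟨k, -, h⟩ := exists_mat_eq_smul_of_mk_eq_mk h
  rw [h, Matrix.smul_apply, smul_eq_mul, absSq_zeta_pow_mul]

/-- The square absolute value of the lower right entry. It measures how far the base point, the line
of the last basis vector, is moved. -/
def cornerAbsSq : PU → ℤ√3 :=
  Quotient.lift (fun A => absSq (mat A 2 2)) fun _ _ h => absSq_corner_congr (Quotient.sound h)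

theorem cornerAbsSq_mk (A : IntUnitary) :
    cornerAbsSq (QuotientGroup.mk A) = absSq (mat A 2 2) := rfl

theorem cornerAbsSq_inv (x : PU) : cornerAbsSq x⁻¹ = cornerAbsSq x := by
  obtain ⟨A, rfl⟩ := QuotientGroup.mk_surjective x
  rw [← QuotientGroup.mk_inv, cornerAbsSq_mk, cornerAbsSq_mk, mat_inv_corner, absSq_star]

theorem cornerAbsSq_K_mul {k : CS} (hk : k ∈ K) (x : PU) :
    cornerAbsSq (toPU k * x) = cornerAbsSq x := by
  obtain ⟨A, rfl⟩ := QuotientGroup.mk_surjective x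
  obtain ⟨k, hl, rfl⟩ := exists_Kgraph_fst_eq hk
  obtain ⟨h20, h21, h22, -, -⟩ := Kgraph.mat_blockDiagonal hl
  change mat k.2 2 0 = 0 at h20
  change mat k.2 2 1 = 0 at h21
  change mat k.2 2 2 = 1 at h22
  rw [Kgraph.toPU_fst hl, ← QuotientGroup.mk_mul, cornerAbsSq_mk, cornerAbsSq_mk, map_mul,
    Matrix.mul_apply, Fin.sum_univ_three, h20, h21, h22]
  simp

theorem cornerAbsSq_mul_K {k : CS} (hk : k ∈ K) (x : PU) :
    cornerAbsSq (x * toPU k) = cornerAbsSq x := by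
  rw [← cornerAbsSq_inv, _root_.mul_inv_rev, ← map_inv, cornerAbsSq_K_mul (inv_mem hk),
    cornerAbsSq_inv]

/-- The values of `cornerAbsSq` on the double cosets `K`, `K b K` and `K t K`, which are the
smallest ones. -/
def IsSmallCorner (x : ℤ√3) : Prop := x = 1 ∨ x = ⟨2, 1⟩ ∨ x = ⟨4, 2⟩

instance (x : ℤ√3) : Decidable (IsSmallCorner x) := by unfold IsSmallCorner; infer_instance

/-- The image of an element of the presented group in the projective unitary group has a small
corner entry. -/
def HasSmallCorner (g : CS) : Prop := IsSmallCorner (cornerAbsSq (toPU g))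

theorem HasSmallCorner.isSmallCorner {g : CS} (h : HasSmallCorner g) {A : IntUnitary}
    (hA : toPU g = QuotientGroup.mk A) : IsSmallCorner (absSq (mat A 2 2)) := by
  rwa [HasSmallCorner, hA] at h

/-- The union of the double cosets `K`, `K b K` and `K t K`. -/
def neighbors : Set CS :=
  {g | ∃ k ∈ K, ∃ k' ∈ K, ∃ x ∈ ({1, gb, gt} : Set CS), g = k * x * k'}

namespace neighbors

theorem mul_left {g k : CS} (hk : k ∈ K) (h : g ∈ neighbors) : k * g ∈ neighbors := by
  obtain ⟨k₁, h₁, k₂, h₂, x, hx, rfl⟩ := h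
  exact ⟨k * k₁, mul_mem hk h₁, k₂, h₂, x, hx, by simp only [mul_assoc]⟩

theorem mul_right {g k : CS} (hk : k ∈ K) (h : g ∈ neighbors) : g * k ∈ neighbors := by
  obtain ⟨k₁, h₁, k₂, h₂, x, hx, rfl⟩ := h
  exact ⟨k₁, h₁, k₂ * k, mul_mem h₂ hk, x, hx, by simp only [mul_assoc]⟩

theorem K_subset {k : CS} (hk : k ∈ K) : k ∈ neighbors :=
  ⟨k, hk, 1, one_mem K, 1, by simp, by simp⟩

theorem gb_mem : gb ∈ neighbors := ⟨1, one_mem K, 1, one_mem K, gb, by simp, by simp⟩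

theorem gt_mem : gt ∈ neighbors := ⟨1, one_mem K, 1, one_mem K, gt, by simp, by simp⟩

theorem inv {g : CS} (h : g ∈ neighbors) : g⁻¹ ∈ neighbors := by
  obtain ⟨k, hk, k', hk', x, hx, rfl⟩ := h
  rw [_root_.mul_inv_rev, _root_.mul_inv_rev]
  refine mul_left (inv_mem hk') (mul_right (inv_mem hk) ?_)
  rcases hx with rfl | rfl | rfl
  · simpa using K_subset (one_mem K)
  · rw [latticeRel.b_inv]
    exact mul_right (by simp [mul_mem]) (mul_left gj_mem_K gb_mem)
  · rw [gt_inv]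
    exact mul_left gu_mem_K gt_mem

theorem cornerAbsSq_eq {k k' : CS} (hk : k ∈ K) (hk' : k' ∈ K) (x : CS) :
    cornerAbsSq (toPU (k * x * k')) = cornerAbsSq (toPU x) := by
  rw [map_mul, map_mul, cornerAbsSq_mul_K hk', cornerAbsSq_K_mul hk]

theorem cornerAbsSq_one : cornerAbsSq (toPU 1) = 1 := by rw [map_one]; decide +kernel
theorem cornerAbsSq_gb : cornerAbsSq (toPU gb) = ⟨2, 1⟩ := by rw [toPU_gb]; decide +kernel
theorem cornerAbsSq_gt : cornerAbsSq (toPU gt) = ⟨4, 2⟩ := by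
  rw [toPU_gt, cornerAbsSq_mk, IntUnitary.mat_t]; decide +kernel

theorem eq_one {g : CS} (hg : g ∈ neighbors) (h : toPU g = 1) : g = 1 := by
  have corner_one : cornerAbsSq (toPU g) = 1 := by rw [h, ← map_one toPU, cornerAbsSq_one]
  obtain ⟨k, hk, k', hk', x, hx, rfl⟩ := hg
  rw [cornerAbsSq_eq hk hk'] at corner_one
  rcases hx with rfl | rfl | rfl
  · rw [mul_one] at h ⊢
    obtain ⟨l, hl, hlk⟩ := exists_Kgraph_fst_eq (mul_mem hk hk')
    rw [← hlk, Kgraph.toPU_fst hl] at h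
    obtain ⟨n, -, scalar⟩ := exists_mat_eq_smul_of_mk_eq_mk h.symm
    rw [map_one] at scalar
    have corner := (Kgraph.mat_blockDiagonal hl).2.2.1
    change mat l.2 2 2 = 1 at corner
    rw [scalar] at corner
    simp only [Matrix.smul_apply, Matrix.one_apply_eq, smul_eq_mul, mul_one] at corner
    rw [corner, one_smul] at scalar
    rw [← hlk, Kgraph.eq_one_of_mat_eq_one hl scalar, Prod.fst_one]
  · rw [cornerAbsSq_gb] at corner_one
    exact absurd corner_one (by decide)
  · rw [cornerAbsSq_gt] at corner_one
    exact absurd corner_one (by decide)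

end neighbors

/-! ### Products of the small double cosets -/

/-- `g` lies in `neighbors` as soon as its image in the projective unitary group is small enough. -/
def Detected (g : CS) : Prop := HasSmallCorner g → g ∈ neighbors

namespace Detected

theorem of_mem {g : CS} (h : g ∈ neighbors) : Detected g := fun _ => h

theorem K_mul_mul_K {g k k' : CS} (h : Detected g) (hk : k ∈ K) (hk' : k' ∈ K) :
    Detected (k * g * k') := fun small => by
  rw [HasSmallCorner, neighbors.cornerAbsSq_eq hk hk'] at small
  exact neighbors.mul_right hk' (neighbors.mul_left hk (h small))

theorem inv {g : CS} (h : Detected g) : Detected g⁻¹ := fun small => by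
  rw [HasSmallCorner, map_inv, cornerAbsSq_inv] at small
  exact neighbors.inv (h small)

theorem b_mul_b (n : Fin 12) : Detected (gb * gj ^ (n : ℕ) * gb) := fun small => by
  have n_eq : n = 0 ∨ n = 1 ∨ n = 2 := by
    replace small := small.isSmallCorner (A := IntUnitary.b * IntUnitary.j ^ (n : ℕ) * IntUnitary.b)
      (by simp only [map_mul, map_pow, toPU_gb, toPU_gj]; rfl)
    simp only [map_mul, map_pow, IntUnitary.mat_b, IntUnitary.mat_j] at small
    revert n; decide +kernel
  rcases n_eq with rfl | rfl | rfl
  · refine ⟨gj, by simp, gj * gv⁻¹, by simp [mul_mem], gb, by simp, ?_⟩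
    simp [latticeRel.word_bb, ← latticeRel.b_inv]
  · refine ⟨gv, by simp, gj⁻¹, by simp, 1, by simp, ?_⟩
    simp [latticeRel.word_bjb]
  · refine ⟨gv * gj⁻¹, by simp [mul_mem], gv * gj⁻¹, by simp [mul_mem], gb, by simp, ?_⟩
    rw [← latticeRel.word_bjjb, ← pow_two]; rfl

theorem b_mul_u_mul_b (n : Fin 12) : Detected (gb * gj ^ (n : ℕ) * gu * gb) := fun small => by
  have n_eq : n = 0 ∨ n = 1 ∨ n = 2 ∨ n = 11 := by
    replace small := small.isSmallCorner
      (A := IntUnitary.b * IntUnitary.j ^ (n : ℕ) * IntUnitary.u * IntUnitary.b)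
      (by simp only [map_mul, map_pow, toPU_gb, toPU_gj, toPU_gu]; rfl)
    simp only [map_mul, map_pow, IntUnitary.mat_b, IntUnitary.mat_j, IntUnitary.mat_u] at small
    revert n; decide +kernel
  rcases n_eq with rfl | rfl | rfl | rfl
  · refine ⟨gu, by simp, gu, by simp, gb, by simp, ?_⟩
    simp [latticeRel.word_bub]
  · refine ⟨gv * gj⁻¹ * gu, by simp [mul_mem], gu⁻¹, by simp, gb, by simp, ?_⟩
    simp [latticeRel.word_bjub]
  · refine ⟨gv * gj⁻¹ * gu, by simp [mul_mem], gv * gj⁻¹, by simp [mul_mem], gt, by simp, ?_⟩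
    rw [gt, ← latticeRel.word_bjjub, ← pow_two]; rfl
  · refine ⟨gv⁻¹, by simp, gv⁻¹, by simp, gt, by simp, ?_⟩
    rw [gt, ← latticeRel.word_bJiub, ← gj_pow_eleven]; rfl

theorem b_mul_uvvvu_mul_b (n : Fin 12) :
    Detected (gb * gj ^ (n : ℕ) * (gu * gv ^ 3 * gu) * gb) := fun small => by
  replace small := small.isSmallCorner
    (A := IntUnitary.b * IntUnitary.j ^ (n : ℕ) *
      (IntUnitary.u * IntUnitary.v ^ 3 * IntUnitary.u) * IntUnitary.b)
    (by simp only [map_mul, map_pow, toPU_gb, toPU_gj, toPU_gu, toPU_gv]; rfl)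
  simp only [map_mul, map_pow, IntUnitary.mat_b, IntUnitary.mat_j, IntUnitary.mat_u,
    IntUnitary.mat_v] at small
  exfalso; revert n; decide +kernel

theorem b_mul_t (n : Fin 12) : Detected (gb * gj ^ (n : ℕ) * gt) := fun small => by
  have n_eq : n = 0 ∨ n = 1 := by
    replace small := small.isSmallCorner (A := IntUnitary.b * IntUnitary.j ^ (n : ℕ) * IntUnitary.t)
      (by simp only [map_mul, map_pow, toPU_gb, toPU_gj, toPU_gt]; rfl)
    simp only [map_mul, map_pow, IntUnitary.mat_b, IntUnitary.mat_j, IntUnitary.mat_t] at small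
    revert n; decide +kernel
  rcases n_eq with rfl | rfl
  · refine ⟨gu * gj, by simp [mul_mem], gj * gv⁻¹ * gu⁻¹, by simp [mul_mem], gb, by simp, ?_⟩
    calc _ = gu * (gj * gb * (gj * gv⁻¹)) * gu⁻¹ := by
          rw [← latticeRel.b_inv, ← latticeRel.word_bt]; simp [gt]
      _ = _ := by simp only [mul_assoc]
  · refine ⟨gv * gj⁻¹ * gu⁻¹, by simp [mul_mem], 1, one_mem K, gb, by simp, ?_⟩
    rw [mul_one, ← latticeRel.word_bjt]; simp [gt]

theorem b_mul_uvv_mul_t (n : Fin 12) :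
    Detected (gb * gj ^ (n : ℕ) * (gu * gv ^ 2) * gt) := fun small => by
  replace small := small.isSmallCorner
    (A := IntUnitary.b * IntUnitary.j ^ (n : ℕ) * (IntUnitary.u * IntUnitary.v ^ 2) * IntUnitary.t)
    (by simp only [map_mul, map_pow, toPU_gb, toPU_gj, toPU_gu, toPU_gv, toPU_gt]; rfl)
  simp only [map_mul, map_pow, IntUnitary.mat_b, IntUnitary.mat_j, IntUnitary.mat_u,
    IntUnitary.mat_v, IntUnitary.mat_t] at small
  exfalso; revert n; decide +kernel

theorem t_mul_t (n : Fin 12) : Detected (gt * gj ^ (n : ℕ) * gt) := fun small => by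
  obtain rfl : n = 0 := by
    replace small := small.isSmallCorner (A := IntUnitary.t * IntUnitary.j ^ (n : ℕ) * IntUnitary.t)
      (by simp only [map_mul, map_pow, toPU_gj, toPU_gt]; rfl)
    simp only [map_mul, map_pow, IntUnitary.mat_j, IntUnitary.mat_t] at small
    revert n; decide +kernel
  refine ⟨gu⁻¹, by simp, 1, one_mem K, 1, by simp, ?_⟩
  rw [← latticeRel.word_tt]; simp [gt]

theorem t_mul_v_mul_t (n : Fin 12) : Detected (gt * gj ^ (n : ℕ) * gv * gt) := fun small => by
  have n_eq : n = 0 ∨ n = 11 := by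
    replace small := small.isSmallCorner
      (A := IntUnitary.t * IntUnitary.j ^ (n : ℕ) * IntUnitary.v * IntUnitary.t)
      (by simp only [map_mul, map_pow, toPU_gj, toPU_gv, toPU_gt]; rfl)
    simp only [map_mul, map_pow, IntUnitary.mat_j, IntUnitary.mat_v, IntUnitary.mat_t] at small
    revert n; decide +kernel
  rcases n_eq with rfl | rfl
  · refine ⟨gu⁻¹ * gv⁻¹, by simp [mul_mem], gv⁻¹ * gu⁻¹, by simp [mul_mem], gt, by simp, ?_⟩
    rw [gt, ← latticeRel.word_tvt]; simp
  · refine ⟨gu⁻¹ * gv * gu, by simp [mul_mem], gv * gu⁻¹, by simp [mul_mem], gt, by simp, ?_⟩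
    have j_inv_v : gj⁻¹ * gv = gu⁻¹ * gv⁻¹ * gu⁻¹ := by
      rw [inv_mul_eq_iff_eq_mul, ← latticeRel.vuvu]; group
    have commute_t_u_inv : gt * gu⁻¹ = gu⁻¹ * gt := commute_gt_gu.inv_right.eq
    calc _ = gt * (gj⁻¹ * gv) * gt := by rw [← gj_pow_eleven]; simp only [mul_assoc]; rfl
      _ = (gt * gu⁻¹) * gv⁻¹ * (gu⁻¹ * gt) := by rw [j_inv_v]; simp only [mul_assoc]
      _ = (gu⁻¹ * gt) * gv⁻¹ * (gt * gu⁻¹) := by rw [commute_t_u_inv]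
      _ = gu⁻¹ * (gt * gv⁻¹ * gt) * gu⁻¹ := by simp only [mul_assoc]
      _ = _ := by rw [gt, latticeRel.word_tVit]; simp only [mul_assoc]

theorem t_mul_vv_mul_t (n : Fin 12) : Detected (gt * gj ^ (n : ℕ) * gv ^ 2 * gt) := fun small => by
  replace small := small.isSmallCorner
    (A := IntUnitary.t * IntUnitary.j ^ (n : ℕ) * IntUnitary.v ^ 2 * IntUnitary.t)
    (by simp only [map_mul, map_pow, toPU_gj, toPU_gv, toPU_gt]; rfl)
  simp only [map_mul, map_pow, IntUnitary.mat_j, IntUnitary.mat_v, IntUnitary.mat_t] at small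
  exfalso; revert n; decide +kernel

theorem t_mul_vvuuv_mul_t (n : Fin 12) :
    Detected (gt * gj ^ (n : ℕ) * (gv ^ 2 * gu ^ 2 * gv) * gt) := fun small => by
  replace small := small.isSmallCorner
    (A := IntUnitary.t * IntUnitary.j ^ (n : ℕ) *
      (IntUnitary.v ^ 2 * IntUnitary.u ^ 2 * IntUnitary.v) * IntUnitary.t)
    (by simp only [map_mul, map_pow, toPU_gj, toPU_gu, toPU_gv, toPU_gt]; rfl)
  simp only [map_mul, map_pow, IntUnitary.mat_j, IntUnitary.mat_u, IntUnitary.mat_v,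
    IntUnitary.mat_t] at small
  exfalso; revert n; decide +kernel

theorem mul_word_mul_eq {G : Type*} [Group G] {y z p q c : G} (hy : Commute y p)
    (hz : Commute z q) (hc : Commute c p) (i l : ℕ) (x : G) :
    y * (c * p ^ i * (x * q ^ l)) * z = p ^ i * (y * c * x * z) * q ^ l := by
  calc _ = y * (c * p ^ i) * x * (q ^ l * z) := by simp only [mul_assoc]
    _ = (y * p ^ i) * c * x * (z * q ^ l) := by
      rw [(hz.pow_right l).eq, (hc.pow_right i).eq]; simp only [mul_assoc]
    _ = _ := by rw [(hy.pow_right i).eq]; simp only [mul_assoc]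

theorem b_mul_K_mul_b {k : CS} (hk : k ∈ K) : Detected (gb * k * gb) := by
  obtain ⟨n, i, l, x, hx, rfl⟩ := K.exists_eq_vv hk
  obtain ⟨n, hn⟩ := exists_fin_gj_pow_eq n
  rw [hn, mul_word_mul_eq latticeRel.commute_v_b.symm latticeRel.commute_v_b.symm
    (latticeRel.commute_j_v.pow_left n)]
  refine K_mul_mul_K ?_ (pow_mem gv_mem_K i) (pow_mem gv_mem_K l)
  rcases hx with rfl | rfl | rfl
  · rw [mul_one]; exact b_mul_b n
  · exact b_mul_u_mul_b n
  · exact b_mul_uvvvu_mul_b n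

theorem b_mul_K_mul_t {k : CS} (hk : k ∈ K) : Detected (gb * k * gt) := by
  obtain ⟨n, i, l, x, hx, rfl⟩ := K.exists_eq_vu hk
  obtain ⟨n, hn⟩ := exists_fin_gj_pow_eq n
  rw [hn, mul_word_mul_eq latticeRel.commute_v_b.symm commute_gt_gu
    (latticeRel.commute_j_v.pow_left n)]
  refine K_mul_mul_K ?_ (pow_mem gv_mem_K i) (pow_mem gu_mem_K l)
  rcases hx with rfl | rfl
  · rw [mul_one]; exact b_mul_t n
  · exact b_mul_uvv_mul_t n

theorem t_mul_K_mul_b {k : CS} (hk : k ∈ K) : Detected (gt * k * gb) := by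
  have inv_eq : (gt * k * gb)⁻¹ = gj * (gb * ((gj * gv⁻¹) * k⁻¹ * gu) * gt) * 1 := by
    rw [_root_.mul_inv_rev, _root_.mul_inv_rev, gt_inv, latticeRel.b_inv]
    simp only [mul_assoc, mul_one]
  rw [← _root_.inv_inv (gt * k * gb), inv_eq]
  refine ((b_mul_K_mul_t ?_).K_mul_mul_K gj_mem_K (one_mem K)).inv
  exact mul_mem (mul_mem (mul_mem gj_mem_K (inv_mem gv_mem_K)) (inv_mem hk)) gu_mem_K

theorem t_mul_K_mul_t {k : CS} (hk : k ∈ K) : Detected (gt * k * gt) := by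
  obtain ⟨n, i, l, x, hx, rfl⟩ := K.exists_eq_uu hk
  obtain ⟨n, hn⟩ := exists_fin_gj_pow_eq n
  rw [hn, mul_word_mul_eq commute_gt_gu commute_gt_gu (latticeRel.commute_j_u.pow_left n)]
  refine K_mul_mul_K ?_ (pow_mem gu_mem_K i) (pow_mem gu_mem_K l)
  rcases hx with rfl | rfl | rfl | rfl
  · rw [mul_one]; exact t_mul_t n
  · exact t_mul_v_mul_t n
  · exact t_mul_vv_mul_t n
  · exact t_mul_vvuuv_mul_t n

end Detected

/-- This is where the relations involving `b` are used. -/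
theorem neighbors.detected_mul {p q : CS} (hp : p ∈ neighbors) (hq : q ∈ neighbors) :
    Detected (p * q) := by
  obtain ⟨k₁, h₁, k₂, h₂, x, hx, rfl⟩ := hp
  obtain ⟨k₃, h₃, k₄, h₄, y, hy, rfl⟩ := hq
  have regroup : k₁ * x * k₂ * (k₃ * y * k₄) = k₁ * (x * (k₂ * k₃) * y) * k₄ := by
    simp only [mul_assoc]
  rw [regroup]
  refine Detected.K_mul_mul_K ?_ h₁ h₄
  have h₂₃ := mul_mem h₂ h₃
  rcases hx with rfl | rfl | rfl
  · rw [one_mul]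
    exact .of_mem (neighbors.mul_left h₂₃ ⟨1, one_mem K, 1, one_mem K, y, hy, by simp⟩)
  all_goals rcases hy with rfl | rfl | rfl
  · rw [mul_one]
    exact .of_mem (neighbors.mul_right h₂₃ neighbors.gb_mem)
  · exact Detected.b_mul_K_mul_b h₂₃
  · exact Detected.b_mul_K_mul_t h₂₃
  · rw [mul_one]
    exact .of_mem (neighbors.mul_right h₂₃ neighbors.gt_mem)
  · exact Detected.t_mul_K_mul_b h₂₃
  · exact Detected.t_mul_K_mul_t h₂₃

/-! ### Unitary matrices with a small corner entry -/

theorem one_sub_r_dvd_iff (x : CycloInt) : 1 - r ∣ x ↔ 2 ∣ x.a + x.c + x.d ∧ 2 ∣ x.b + x.c := by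
  have one_sub_r : 1 - r = ⟨1, -2, 0, 1⟩ := by decide +kernel
  rw [one_sub_r]
  constructor
  · rintro ⟨y, rfl⟩
    simp only [mul_def]
    lia
  · rintro ⟨⟨m, hm⟩, ⟨n, hn⟩⟩
    refine ⟨⟨x.c + x.d - m - n, -n - x.a, -n - x.d, m - x.c - x.d⟩, ?_⟩
    rw [mul_def]
    ext <;> lia

instance (x : CycloInt) : Decidable (1 - r ∣ x) := decidable_of_iff' _ (one_sub_r_dvd_iff x)

/-- Together with the first coordinate, this diagonalises the form on the definite plane spanned by
the first two basis vectors. -/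
def diagSnd (x : Fin 3 → CycloInt) : CycloInt := x 0 + (1 - r) * x 1

/-- The square length of the projection to the definite plane. -/
def planeNormSq (x : Fin 3 → CycloInt) : ℤ√3 := absSq (x 0) + absSq (diagSnd x)

theorem diagSnd_smul (c : CycloInt) (x : Fin 3 → CycloInt) : diagSnd (c • x) = c * diagSnd x := by
  simp only [diagSnd, Pi.smul_apply, smul_eq_mul]; ring

theorem planeNormSq_zeta_pow_smul (n : ℕ) (x : Fin 3 → CycloInt) :
    planeNormSq (zeta ^ n • x) = planeNormSq x := by
  rw [planeNormSq, diagSnd_smul, Pi.smul_apply, smul_eq_mul, absSq_zeta_pow_mul,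
    absSq_zeta_pow_mul, planeNormSq]

theorem eq_of_diagSnd_eq {x y : Fin 3 → CycloInt} (h0 : x 0 = y 0) (h : diagSnd x = diagSnd y)
    (h2 : x 2 = y 2) : x = y := by
  have h1 : x 1 = y 1 := one_sub_r_mul_cancel <| by simpa [diagSnd, h0] using h
  ext1 i
  fin_cases i
  exacts [h0, h1, h2]

theorem inner_col (A : IntUnitary) (j k : Fin 3) :
    star (mat A 0 j) * mat A 0 k + star (diagSnd ((mat A).col j)) * diagSnd ((mat A).col k) +
      (1 - r) * (star (mat A 2 j) * mat A 2 k) = gramMatrix j k := by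
  conv_rhs => rw [← mat_unitary A]
  simp only [diagSnd, col_apply, star_add, star_mul, star_sub, star_one, star_r, mul_apply,
    Fin.sum_univ_three, conjTranspose_apply, gramMatrix, of_apply, cons_val_zero, cons_val_one,
    cons_val]
  linear_combination star (mat A 1 j) * mat A 1 k * r_mul_self

theorem planeNormSq_col (A : IntUnitary) (j : Fin 3) {n : ℤ√3} (h : ofZsqrt n = gramMatrix j j) :
    planeNormSq ((mat A).col j) + ⟨1, -1⟩ * absSq (mat A 2 j) = n := by
  apply ofZsqrt_injective
  rw [planeNormSq, map_add, map_add, map_mul, ofZsqrt_absSq, ofZsqrt_absSq, ofZsqrt_absSq, h,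
    ← inner_col A j j]
  rfl

theorem planeNormSq_col_two (A : IntUnitary) :
    planeNormSq ((mat A).col 2) = ⟨1, -1⟩ * (1 - absSq (mat A 2 2)) := by
  linear_combination planeNormSq_col A 2 (n := ⟨1, -1⟩) (by decide +kernel)

/-- `x` lies in the orbit of `y` under `K`. -/
def KOrbitRel (y x : Fin 3 → CycloInt) : Prop := ∃ k ∈ Kgraph, Kgraph.mat k *ᵥ y = x

/-- Words `vᵉ uᵃ vᶜ uᵈ` representing enough elements of `K` modulo its centre to reach the vectors
of `exists_kWord_mulVec_eq_of_two` and `exists_kWord_mulVec_eq_of_three`. -/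
def kWord (i : Fin 13) : CS × IntUnitary :=
  let (e, a, c, d) : ℕ × ℕ × ℕ × ℕ :=
    ![(0, 0, 0, 0), (0, 0, 0, 1), (0, 0, 0, 2), (0, 0, 1, 0), (0, 0, 2, 0), (0, 1, 2, 0),
      (0, 0, 1, 2), (0, 0, 2, 2), (0, 1, 2, 2), (0, 0, 3, 0), (0, 2, 1, 0), (0, 2, 2, 0),
      (1, 2, 2, 0)] i
  Kgraph.v ^ e * Kgraph.u ^ a * Kgraph.v ^ c * Kgraph.u ^ d

theorem kWord_mem (i : Fin 13) : kWord i ∈ Kgraph :=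
  mul_mem (mul_mem (mul_mem (pow_mem Kgraph.v_mem _) (pow_mem Kgraph.u_mem _))
    (pow_mem Kgraph.v_mem _)) (pow_mem Kgraph.u_mem _)

theorem mat_j_pow_mulVec (n : ℕ) (x : Fin 3 → CycloInt) :
    Kgraph.mat (Kgraph.j ^ n) *ᵥ x = ![zeta ^ n * x 0, zeta ^ n * x 1, x 2] := by
  induction n with
  | zero => ext1 i; fin_cases i <;> simp
  | succ n ih =>
    rw [pow_succ', map_mul, ← mulVec_mulVec, ih, Kgraph.mat_j]
    ext1 i
    fin_cases i <;> simp [mulVec, dotProduct, Fin.sum_univ_three, jPrime] <;> ring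

/-- `K` contains the multiplications of the plane by roots of unity, so only the coordinates up to
a common root of unity matter. -/
theorem KOrbitRel.of_zeta_pow_mul {x y : Fin 3 → CycloInt} {p q : CycloInt} {n : ℕ}
    (h2 : x 2 = y 2) (hp : x 0 = zeta ^ n * p) (hq : diagSnd x = zeta ^ n * q)
    (h : 1 - r ∣ q - p → ∃ (i : Fin 13) (m : Fin 12),
      zeta ^ (m : ℕ) * (Kgraph.mat (kWord i) *ᵥ y) 0 = p ∧
        zeta ^ (m : ℕ) * diagSnd (Kgraph.mat (kWord i) *ᵥ y) = q) : KOrbitRel y x := by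
  have dvd : 1 - r ∣ q - p := by
    have snd_def : diagSnd x = x 0 + (1 - r) * x 1 := rfl
    refine ⟨star (zeta ^ n) * x 1, ?_⟩
    linear_combination (p - q) * star_zeta_pow_mul_self n + star (zeta ^ n) * (hp - hq + snd_def)
  obtain ⟨i, m, rfl, rfl⟩ := h dvd
  refine ⟨Kgraph.j ^ (n + m) * kWord i, mul_mem (pow_mem Kgraph.j_mem _) (kWord_mem i), ?_⟩
  rw [map_mul, ← mulVec_mulVec, mat_j_pow_mulVec, pow_add]
  refine eq_of_diagSnd_eq ?_ ?_ ?_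
  · rw [hp, mul_assoc]; rfl
  · rw [hq]
    simp only [diagSnd, cons_val_zero, cons_val_one]
    ring
  · obtain ⟨h20, h21, h22, -, -⟩ := Kgraph.mat_blockDiagonal (kWord_mem i)
    simp [mulVec, dotProduct, Fin.sum_univ_three, h20, h21, h22, h2]

theorem exists_kWord_mulVec_eq_of_two : ∀ y ∈ [Pi.single 0 1, bPrime.col 2],
    ∀ pq ∈ (0, 1 + zeta ^ 3) :: (1 + zeta ^ 3, 0) ::
      (List.finRange 12).map fun d : Fin 12 => (1, zeta ^ (d : ℕ)),
    1 - r ∣ pq.2 - pq.1 → ∃ (i : Fin 13) (m : Fin 12),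
      zeta ^ (m : ℕ) * (Kgraph.mat (kWord i) *ᵥ y) 0 = pq.1 ∧
        zeta ^ (m : ℕ) * diagSnd (Kgraph.mat (kWord i) *ᵥ y) = pq.2 := by
  decide +kernel

theorem exists_kWord_mulVec_eq_of_three : ∀ d : Fin 12,
    ∀ pq ∈ [(1, zeta ^ (d : ℕ) * (1 + star zeta)), (1 + star zeta, zeta ^ (d : ℕ))],
    1 - r ∣ pq.2 - pq.1 → ∃ (i : Fin 13) (m : Fin 12),
      zeta ^ (m : ℕ) * (Kgraph.mat (kWord i) *ᵥ tPrime.col 2) 0 = pq.1 ∧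
        zeta ^ (m : ℕ) * diagSnd (Kgraph.mat (kWord i) *ᵥ tPrime.col 2) = pq.2 := by
  decide +kernel

theorem exists_zeta_pow_mul_zeta_pow_mul (a d : Fin 12) (x : CycloInt) :
    ∃ e : Fin 12, zeta ^ (d : ℕ) * x = zeta ^ (a : ℕ) * (zeta ^ (e : ℕ) * x) := by
  have zeta_pow_sub : ∀ a d : Fin 12,
      zeta ^ (d : ℕ) = zeta ^ (a : ℕ) * zeta ^ ((d - a : Fin 12) : ℕ) := by decide +kernel
  exact ⟨d - a, by rw [zeta_pow_sub a d, mul_assoc]⟩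

theorem kOrbitRel_of_planeNormSq_eq_two {x y : Fin 3 → CycloInt}
    (hy : y ∈ [Pi.single 0 1, bPrime.col 2]) (h2 : x 2 = y 2) (h : planeNormSq x = 2) :
    KOrbitRel y x := by
  have table := exists_kWord_mulVec_eq_of_two y hy
  have absSq_zero : absSq 0 = 0 := rfl
  rw [planeNormSq] at h
  have re_add : (absSq (x 0)).re + (absSq (diagSnd x)).re = 2 := congrArg Zsqrtd.re h
  have re_cases : (absSq (x 0)).re = 0 ∨ (absSq (x 0)).re = 1 ∨ (absSq (diagSnd x)).re = 0 := by
    have := re_absSq_nonneg (x 0)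
    have := re_absSq_nonneg (diagSnd x)
    lia
  rcases re_cases with re_eq | re_eq | re_eq
  · have fst_eq := eq_zero_of_re_absSq re_eq
    rw [fst_eq, absSq_zero, zero_add] at h
    obtain ⟨a, ha⟩ := exists_zeta_pow_mul_of_absSq_eq (y := 1 + zeta ^ 3) h (by simp)
    exact .of_zeta_pow_mul h2 (by rw [fst_eq, mul_zero]) ha (table (0, 1 + zeta ^ 3) (by simp))
  · have fst_eq := absSq_eq_one_of_re_absSq re_eq
    have snd_eq : absSq (diagSnd x) = 1 := by linear_combination h - fst_eq
    obtain ⟨a, ha⟩ := exists_zeta_pow_mul_of_absSq_eq (y := 1) fst_eq (by simp)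
    obtain ⟨d, hd⟩ := exists_zeta_pow_mul_of_absSq_eq (y := 1) snd_eq (by simp)
    obtain ⟨e, he⟩ := exists_zeta_pow_mul_zeta_pow_mul a d 1
    exact .of_zeta_pow_mul h2 ha (hd.trans he) (table (1, zeta ^ (e : ℕ) * 1) (by simp))
  · have snd_eq := eq_zero_of_re_absSq re_eq
    rw [snd_eq, absSq_zero, add_zero] at h
    obtain ⟨a, ha⟩ := exists_zeta_pow_mul_of_absSq_eq (y := 1 + zeta ^ 3) h (by simp)
    exact .of_zeta_pow_mul h2 ha (by rw [snd_eq, mul_zero]) (table (1 + zeta ^ 3, 0) (by simp))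

theorem kOrbitRel_of_planeNormSq_eq_three {x : Fin 3 → CycloInt} (h2 : x 2 = tPrime 2 2)
    (h : planeNormSq x = ⟨3, 1⟩) : KOrbitRel (tPrime.col 2) x := by
  have absSq_zero : absSq 0 = 0 := rfl
  rw [planeNormSq] at h
  have re_add : (absSq (x 0)).re + (absSq (diagSnd x)).re = 3 := congrArg Zsqrtd.re h
  have re_cases : (absSq (x 0)).re = 0 ∨ (absSq (x 0)).re = 1 ∨
      (absSq (diagSnd x)).re = 1 ∨ (absSq (diagSnd x)).re = 0 := by
    have := re_absSq_nonneg (x 0)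
    have := re_absSq_nonneg (diagSnd x)
    lia
  rcases re_cases with re_eq | re_eq | re_eq | re_eq
  · rw [eq_zero_of_re_absSq re_eq, absSq_zero, zero_add] at h
    exact absurd h (absSq_ne_three_add_sqrt_three _)
  · have fst_eq := absSq_eq_one_of_re_absSq re_eq
    have snd_eq : absSq (diagSnd x) = absSq (1 + star zeta) :=
      (eq_sub_of_add_eq' h).trans (by rw [fst_eq]; rfl)
    obtain ⟨a, ha⟩ := exists_zeta_pow_mul_of_absSq_eq (y := 1) fst_eq (by simp)
    obtain ⟨d, hd⟩ := exists_zeta_pow_mul_of_absSq_eq snd_eq (by simp)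
    obtain ⟨e, he⟩ := exists_zeta_pow_mul_zeta_pow_mul a d (1 + star zeta)
    exact .of_zeta_pow_mul h2 ha (hd.trans he)
      (exists_kWord_mulVec_eq_of_three e (1, zeta ^ (e : ℕ) * (1 + star zeta)) (by simp))
  · have snd_eq := absSq_eq_one_of_re_absSq re_eq
    have fst_eq : absSq (x 0) = absSq (1 + star zeta) :=
      (eq_sub_of_add_eq h).trans (by rw [snd_eq]; rfl)
    obtain ⟨a, ha⟩ := exists_zeta_pow_mul_of_absSq_eq fst_eq (by simp)
    obtain ⟨d, hd⟩ := exists_zeta_pow_mul_of_absSq_eq (y := 1) snd_eq (by simp)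
    obtain ⟨e, he⟩ := exists_zeta_pow_mul_zeta_pow_mul a d 1
    rw [mul_one, mul_one] at he
    exact .of_zeta_pow_mul h2 ha (hd.trans ((mul_one _).trans he))
      (exists_kWord_mulVec_eq_of_three e (1 + star zeta, zeta ^ (e : ℕ)) (by simp))
  · rw [eq_zero_of_re_absSq re_eq, absSq_zero, add_zero] at h
    exact absurd h (absSq_ne_three_add_sqrt_three _)

theorem eq_of_planeNormSq_eq_zero {x : Fin 3 → CycloInt} (h : planeNormSq x = 0) :
    x = Pi.single 2 (x 2) := by
  rw [planeNormSq] at h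
  have re_add : (absSq (x 0)).re + (absSq (diagSnd x)).re = 0 := congrArg Zsqrtd.re h
  have := re_absSq_nonneg (x 0)
  have := re_absSq_nonneg (diagSnd x)
  refine eq_of_diagSnd_eq ?_ ?_ (by simp)
  · simpa using eq_zero_of_re_absSq (x := x 0) (by lia)
  · simpa [diagSnd] using eq_zero_of_re_absSq (x := diagSnd x) (by lia)

/-! ### Stabilisers -/

theorem col_inv_mul {A B : IntUnitary} {j : Fin 3} (h : (mat A).col j = (mat B).col j) :
    (mat (B⁻¹ * A)).col j = Pi.single j 1 := by
  rw [← mulVec_single_one, ← mulVec_single_one] at h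
  rw [← mulVec_single_one, map_mul, ← mulVec_mulVec, h, mulVec_mulVec, ← map_mul, inv_mul_cancel,
    map_one, one_mulVec]

theorem corner_row_of_col_two {A : IntUnitary} (h : (mat A).col 2 = Pi.single 2 1) :
    mat A 2 0 = 0 ∧ mat A 2 1 = 0 := by
  have h0 : mat A 0 2 = 0 := congrFun h 0
  have h2 : mat A 2 2 = 1 := congrFun h 2
  have inner_0 := inner_col A 2 0
  have inner_1 := inner_col A 2 1
  rw [h] at inner_0 inner_1
  constructor <;> apply one_sub_r_mul_cancel
  · simpa [diagSnd, h0, h2, gramMatrix] using inner_0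
  · simpa [diagSnd, h0, h2, gramMatrix] using inner_1

/-- The complex reflections in `K` fixing `e₁` and `e₃`. -/
theorem exists_reflection_pow : ∀ k : Fin 12, 1 - r ∣ 1 - zeta ^ (k : ℕ) → ∃ i : Fin 4,
    let B := (jPrime ^ 2 * vPrime * uPrime ^ 2) ^ (i : ℕ)
    B.col 0 = Pi.single 0 1 ∧ (1 - r) * B 0 1 = (2 - r) * (1 - zeta ^ (k : ℕ)) ∧
      B 1 1 = zeta ^ (k : ℕ) ∧ B 2 1 = 0 ∧ B.col 2 = Pi.single 2 1 := by
  decide +kernel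

theorem exists_zeta_pow_of_col_zero {A : IntUnitary} (col_0 : (mat A).col 0 = Pi.single 0 1)
    (col_2 : (mat A).col 2 = Pi.single 2 1) : ∃ n : Fin 12, mat A 1 1 = zeta ^ (n : ℕ) ∧
      (1 - r) * mat A 0 1 = (2 - r) * (1 - zeta ^ (n : ℕ)) := by
  have h00 : mat A 0 0 = 1 := congrFun col_0 0
  have h21 := (corner_row_of_col_two col_2).2
  set p := mat A 0 1
  set w := mat A 1 1
  have inner_01 : p + (p + (1 - r) * w) = 1 - r := by
    have := inner_col A 0 1
    rw [col_0] at this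
    simpa [diagSnd, h00, h21, gramMatrix] using this
  have inner_11 : star p * p + star (p + (1 - r) * w) * (p + (1 - r) * w) = 4 - 2 * r := by
    simpa [diagSnd, h21, gramMatrix] using inner_col A 1 1
  have star_inner_01 := congrArg star inner_01
  simp only [star_add, star_mul, star_sub, star_one, star_r] at star_inner_01 inner_11
  have norm_w : star w * w = 1 := by
    -- `|p|² + |q|² = |p + q|²` forces `|q - p|² = |p + q|²`
    refine one_sub_r_mul_cancel (one_sub_r_mul_cancel ?_)
    linear_combination 2 * inner_11 - star_inner_01 * (2 * p + (1 - r) * w) - (1 - r) * inner_01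
      - 2 * r_mul_self
  obtain ⟨n, hn⟩ := exists_zeta_pow_mul_of_absSq_eq (x := w) (y := 1)
    (ofZsqrt_injective (by rw [ofZsqrt_absSq, ofZsqrt_absSq, norm_w]; simp)) (by simp)
  rw [mul_one] at hn
  refine ⟨n, hn, one_sub_r_mul_cancel ?_⟩
  rw [← hn]
  linear_combination (2 - r) * inner_01 + p * r_mul_self

theorem exists_Kgraph_of_col_zero {A : IntUnitary} (col_0 : (mat A).col 0 = Pi.single 0 1)
    (col_2 : (mat A).col 2 = Pi.single 2 1) : ∃ k ∈ Kgraph, k.2 = A := by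
  obtain ⟨n, h11, h01⟩ := exists_zeta_pow_of_col_zero col_0 col_2
  have dvd : 1 - r ∣ 1 - zeta ^ (n : ℕ) :=
    ⟨(2 + r) * mat A 0 1,
      by linear_combination -(2 + r) * h01 + (1 - zeta ^ (n : ℕ)) * r_mul_self⟩
  obtain ⟨i, B_col_0, B_01, B_11, B_21, B_col_2⟩ := exists_reflection_pow n dvd
  suffices Kgraph.mat ((Kgraph.j ^ 2 * Kgraph.v * Kgraph.u ^ 2) ^ (i : ℕ)) = mat A from
    ⟨_, pow_mem (mul_mem (mul_mem (pow_mem Kgraph.j_mem _) Kgraph.v_mem)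
      (pow_mem Kgraph.u_mem _)) _, mat_injective this⟩
  simp only [map_mul, map_pow, Kgraph.mat_u, Kgraph.mat_v, Kgraph.mat_j]
  refine Matrix.ext_col fun k => ?_
  fin_cases k
  · exact B_col_0.trans col_0.symm
  · ext1 l
    fin_cases l
    · exact one_sub_r_mul_cancel (B_01.trans h01.symm)
    · exact B_11.trans h11.symm
    · exact B_21.trans (corner_row_of_col_two col_2).2.symm
  · exact B_col_2.trans col_2.symm

theorem exists_Kgraph_of_col_two {A : IntUnitary} (col_2 : (mat A).col 2 = Pi.single 2 1) :
    ∃ k ∈ Kgraph, k.2 = A := by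
  have h20 := (corner_row_of_col_two col_2).1
  have normSq_col_0 : planeNormSq ((mat A).col 0) = 2 := by
    have := planeNormSq_col A 0 (n := 2) (by decide +kernel)
    rwa [h20, show absSq 0 = 0 from rfl, mul_zero, add_zero] at this
  obtain ⟨k, hk, col_0⟩ := kOrbitRel_of_planeNormSq_eq_two (y := Pi.single 0 1) (by simp)
    (by simpa using h20) normSq_col_0
  have k_col_2 : (mat k.2).col 2 = Pi.single 2 1 := by
    obtain ⟨-, -, h22, h02, h12⟩ := Kgraph.mat_blockDiagonal hk
    ext1 i
    fin_cases i
    exacts [h02, h12, h22]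
  rw [mulVec_single_one] at col_0
  obtain ⟨l, hl, l_eq⟩ := exists_Kgraph_of_col_zero (col_inv_mul (B := k.2) col_0.symm)
    (col_inv_mul (col_2.trans k_col_2.symm))
  exact ⟨k * l, mul_mem hk hl, by rw [Prod.snd_mul, l_eq, mul_inv_cancel_left]⟩

theorem exists_toPU_K_mul_mul_K_eq {A B : IntUnitary} {g : CS} (hg : toPU g = QuotientGroup.mk B)
    (n : ℕ) {x : Fin 3 → CycloInt} (hx : (mat A).col 2 = zeta ^ n • x)
    (h : KOrbitRel ((mat B).col 2) x) :
    ∃ k ∈ K, ∃ k' ∈ K, toPU (k * g * k') = QuotientGroup.mk A := by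
  obtain ⟨k, hk, rfl⟩ := h
  have col_eq : (mat A).col 2 = (mat (IntUnitary.zeta ^ n * (k.2 * B))).col 2 := by
    rw [hx, map_mul, map_mul, IntUnitary.mat_zeta_pow, smul_one_mul, ← mulVec_single_one,
      ← mulVec_single_one, smul_mulVec, mulVec_mulVec]
    rfl
  obtain ⟨l, hl, l_eq⟩ := exists_Kgraph_of_col_two (col_inv_mul col_eq)
  have fst_mem_K {m : CS × IntUnitary} (hm : m ∈ Kgraph) : m.1 ∈ K := by
    rw [← map_fst_Kgraph]; exact ⟨m, hm, rfl⟩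
  refine ⟨k.1, fst_mem_K hk, l.1, fst_mem_K hl, ?_⟩
  rw [map_mul, map_mul, Kgraph.toPU_fst hk, Kgraph.toPU_fst hl, hg, l_eq, ← QuotientGroup.mk_mul,
    ← QuotientGroup.mk_mul]
  refine (mk_eq_mk_of_mat_eq_smul n ?_).symm
  have A_eq : A = IntUnitary.zeta ^ n * (k.2 * B * ((IntUnitary.zeta ^ n * (k.2 * B))⁻¹ * A)) := by
    group
  nth_rewrite 1 [A_eq]
  rw [map_mul, IntUnitary.mat_zeta_pow, smul_one_mul]

/-! ### Classification of the small corner entries -/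

theorem exists_neighbors_of_kOrbitRel {A B : IntUnitary} {g : CS} (hg : g ∈ neighbors)
    (hB : toPU g = QuotientGroup.mk B) (hAB : absSq (mat A 2 2) = absSq (mat B 2 2))
    (B_mem : mat B 2 2 ∈ [1, 1 + zeta ^ 3, 1 + star zeta, 1 + r])
    (h : ∀ x : Fin 3 → CycloInt, x 2 = mat B 2 2 →
      planeNormSq x = planeNormSq ((mat B).col 2) → KOrbitRel ((mat B).col 2) x) :
    ∃ g ∈ neighbors, toPU g = QuotientGroup.mk A := by
  obtain ⟨n, hn⟩ := exists_zeta_pow_mul_of_absSq_eq hAB B_mem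
  set x := zeta ^ (11 * n : ℕ) • (mat A).col 2 with hx
  have zeta_pow_mul : zeta ^ (n : ℕ) * zeta ^ (11 * n : ℕ) = 1 := by
    rw [← pow_add, show (n : ℕ) + 11 * n = 12 * n by ring, pow_mul, zeta_pow_twelve, one_pow]
  have col_eq : (mat A).col 2 = zeta ^ (n : ℕ) • x := by
    rw [hx, smul_smul, zeta_pow_mul, one_smul]
  have corner_eq : x 2 = mat B 2 2 := by
    change zeta ^ (11 * n : ℕ) * mat A 2 2 = _
    rw [hn, ← mul_assoc, mul_comm (zeta ^ _), zeta_pow_mul, one_mul]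
  have normSq_eq : planeNormSq x = planeNormSq ((mat B).col 2) := by
    rw [hx, planeNormSq_zeta_pow_smul, planeNormSq_col_two, planeNormSq_col_two, hAB]
  obtain ⟨k, hk, k', hk', h⟩ := exists_toPU_K_mul_mul_K_eq hB n col_eq (h x corner_eq normSq_eq)
  exact ⟨_, neighbors.mul_right hk' (neighbors.mul_left hk hg), h⟩

theorem exists_neighbors_toPU_eq {A : IntUnitary} (h : IsSmallCorner (absSq (mat A 2 2))) :
    ∃ g ∈ neighbors, toPU g = QuotientGroup.mk A := by
  rcases h with h | h | h
  · refine exists_neighbors_of_kOrbitRel (neighbors.K_subset (one_mem K)) (map_one toPU)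
      (h.trans (by rw [map_one]; rfl)) (by simp) fun x hx normSq_x => ⟨1, one_mem _, ?_⟩
    rw [eq_of_planeNormSq_eq_zero (normSq_x.trans (by rw [map_one]; decide +kernel)), hx]
    rw [map_one, one_mulVec, map_one, ← mulVec_single_one, one_mulVec, one_apply_eq]
  · refine exists_neighbors_of_kOrbitRel neighbors.gb_mem toPU_gb
      (h.trans (by decide +kernel)) (by decide +kernel) fun x hx normSq_x => ?_
    exact kOrbitRel_of_planeNormSq_eq_two (by simp [IntUnitary.mat_b]) hx
      (normSq_x.trans (by decide +kernel))
  · have corner_t : absSq (tPrime 2 2) = ⟨4, 2⟩ := by decide +kernel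
    refine exists_neighbors_of_kOrbitRel neighbors.gt_mem toPU_gt
      (by rw [h, IntUnitary.mat_t, corner_t]) (by rw [IntUnitary.mat_t]; decide +kernel) ?_
    rw [IntUnitary.mat_t]
    exact fun x hx normSq_x => kOrbitRel_of_planeNormSq_eq_three hx
      (normSq_x.trans (by decide +kernel))

/-! ### Developing over a convex domain -/

theorem unitInterval_induction {P : ℝ → Prop} {δ : ℝ} (δ_pos : 0 < δ) (zero : P 0)
    (step : ∀ s t, 0 ≤ s → s ≤ t → t ≤ 1 → t - s < δ → P s → P t) : P 1 := by
  have main (n : ℕ) : P (min 1 (n * (δ / 2))) := by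
    induction n with
    | zero => simpa using zero
    | succ n ih =>
      refine step _ _ (by positivity) ?_ (min_le_left _ _) ?_ ih
      · gcongr
        simp
      · push_cast
        rcases min_cases 1 (n * (δ / 2)) with h | h <;>
          rcases min_cases 1 ((n + 1) * (δ / 2)) with h' | h' <;> linarith
  obtain ⟨n, hn⟩ := exists_nat_gt (1 / (δ / 2))
  rw [div_lt_iff₀ (by positivity)] at hn
  simpa [hn.le] using main n

/-- Convex open sets `nbhd g`, indexed by a group `G`, which cover the domain `{gauge < 1}`, and a
set of transitions `g⁻¹ * h` such that being in transition is an equivalence relation among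
the indices of the sets containing a given point. Every set meeting `nbhd g` can be re-indexed so as
to be in transition with `g`. -/
structure ConvexDevelopment (G E : Type*) [Group G] [NormedAddCommGroup E] [NormedSpace ℝ E] where
  nbhd : G → Set E
  transitions : Set G
  gauge : E → ℝ
  isCompact_sublevel : ∀ ρ < 1, IsCompact {x | gauge x ≤ ρ}
  convex_sublevel : ∀ ρ, Convex ℝ {x | gauge x ≤ ρ}
  gauge_zero : gauge 0 = 0
  gauge_lt_one : ∀ g, ∀ x ∈ nbhd g, gauge x < 1
  isOpen_nbhd : ∀ g, IsOpen (nbhd g)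
  convex_nbhd : ∀ g, Convex ℝ (nbhd g)
  exists_mem_nbhd : ∀ x, gauge x < 1 → ∃ g, x ∈ nbhd g
  zero_mem_nbhd_one : 0 ∈ nbhd 1
  one_mem : 1 ∈ transitions
  inv_mem : ∀ s ∈ transitions, s⁻¹ ∈ transitions
  trans : ∀ x g h k, x ∈ nbhd g → x ∈ nbhd h → x ∈ nbhd k →
    g⁻¹ * h ∈ transitions → h⁻¹ * k ∈ transitions → g⁻¹ * k ∈ transitions
  exists_transition : ∀ x g h, x ∈ nbhd g → x ∈ nbhd h →
    ∃ h', nbhd h' = nbhd h ∧ g⁻¹ * h' ∈ transitions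

namespace ConvexDevelopment

variable {G E : Type*} [Group G] [NormedAddCommGroup E] [NormedSpace ℝ E]
  {D : ConvexDevelopment G E} {ρ ε t : ℝ} {c : E → G}

theorem symm {g h : G} (hgh : g⁻¹ * h ∈ D.transitions) : h⁻¹ * g ∈ D.transitions := by
  simpa using D.inv_mem _ hgh

theorem smul_mem_sublevel {x : E} (hρ : 0 ≤ ρ) (hx : D.gauge x ≤ ρ) (ht0 : 0 ≤ t) (ht1 : t ≤ 1) :
    D.gauge (t • x) ≤ ρ :=
  (D.convex_sublevel ρ).smul_mem_of_zero_mem (by simpa [D.gauge_zero] using hρ) hx ⟨ht0, ht1⟩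

variable (D) in
/-- A locally constant choice (up to transitions) of an index `c x` at the points `t • x` with
`gauge x ≤ ρ`, starting from the index `1` at the origin. The number `ε` is the margin by which
`t • x` lies in `nbhd (c x)`. -/
structure IsSection (ρ ε t : ℝ) (c : E → G) : Prop where
  ball_subset : ∀ x, D.gauge x ≤ ρ → Metric.ball (t • x) ε ⊆ D.nbhd (c x)
  transition : ∀ x y, D.gauge x ≤ ρ → D.gauge y ≤ ρ → dist x y < ε / 2 →
    (c x)⁻¹ * c y ∈ D.transitions
  transition_one : (c 0)⁻¹ * 1 ∈ D.transitions

theorem isSection_zero_one (hε : Metric.ball 0 ε ⊆ D.nbhd 1) : D.IsSection ρ ε 0 fun _ => 1 where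
  ball_subset x _ := by rwa [zero_smul]
  transition x y _ _ _ := by simpa using D.one_mem
  transition_one := by simpa using D.one_mem

theorem IsSection.mem_nbhd (hc : D.IsSection ρ ε t c) {x y : E} (hx : D.gauge x ≤ ρ)
    (hy : dist y (t • x) < ε) : y ∈ D.nbhd (c x) :=
  hc.ball_subset x hx hy

/-- The four indices chosen at `x` and `y` at the levels `s` and `t` all share the point `t • x`. -/
theorem IsSection.exists_of_dist_lt {s : ℝ} (hc : D.IsSection ρ ε s c) (hε : 0 < ε) (hρ : 0 ≤ ρ)
    (lebesgue : ∀ x, D.gauge x ≤ ρ → ∃ g, Metric.ball x ε ⊆ D.nbhd g) (ht0 : 0 ≤ t) (ht1 : t ≤ 1)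
    (dist_lt : ∀ x, D.gauge x ≤ ρ → dist (t • x) (s • x) < ε / 2) :
    ∃ c', D.IsSection ρ ε t c' := by
  have exists_next (x : E) : ∃ h, D.gauge x ≤ ρ →
      Metric.ball (t • x) ε ⊆ D.nbhd h ∧ (c x)⁻¹ * h ∈ D.transitions := by
    by_cases hx : D.gauge x ≤ ρ
    · obtain ⟨g, hg⟩ := lebesgue _ (smul_mem_sublevel hρ hx ht0 ht1)
      obtain ⟨h, nbhd_eq, transition⟩ := D.exists_transition (t • x) (c x) g
        (hc.mem_nbhd hx ((dist_lt x hx).trans (half_lt_self hε))) (hg (Metric.mem_ball_self hε))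
      exact ⟨h, fun _ => ⟨nbhd_eq ▸ hg, transition⟩⟩
    · exact ⟨1, fun h => absurd h hx⟩
  choose c' hc' using exists_next
  refine ⟨c', fun x hx => (hc' x hx).1, fun x y hx hy hxy => ?_, ?_⟩
  · have dist_smul_lt : dist (t • x) (t • y) < ε / 2 := by
      rw [dist_smul₀, Real.norm_of_nonneg ht0]
      exact (mul_le_of_le_one_left dist_nonneg ht1).trans_lt hxy
    have mem_x : t • x ∈ D.nbhd (c x) := hc.mem_nbhd hx ((dist_lt x hx).trans (half_lt_self hε))
    have mem_y : t • x ∈ D.nbhd (c y) := hc.mem_nbhd hy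
      ((dist_triangle _ _ _).trans_lt (by linarith [dist_lt y hy]))
    have mem_x' : t • x ∈ D.nbhd (c' x) := (hc' x hx).1 (Metric.mem_ball_self hε)
    have mem_y' : t • x ∈ D.nbhd (c' y) :=
      (hc' y hy).1 (Metric.mem_ball.mpr (dist_smul_lt.trans (half_lt_self hε)))
    exact D.trans _ _ _ _ mem_x' mem_x mem_y' (symm (hc' x hx).2)
      (D.trans _ _ _ _ mem_x mem_y mem_y' (hc.transition x y hx hy hxy) (hc' y hy).2)
  · have zero_le : D.gauge 0 ≤ ρ := D.gauge_zero.trans_le hρ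
    exact D.trans 0 _ _ _ ((hc' 0 zero_le).1 (by simpa using hε))
      (hc.mem_nbhd zero_le (by simpa using hε)) D.zero_mem_nbhd_one (symm (hc' 0 zero_le).2)
      hc.transition_one

variable (D) in
theorem exists_pos_forall_ball_subset (hρ : ρ < 1) : ∃ ε > 0, Metric.ball 0 ε ⊆ D.nbhd 1 ∧
    ∀ x, D.gauge x ≤ ρ → ∃ g, Metric.ball x ε ⊆ D.nbhd g := by
  obtain ⟨δ, δ_pos, lebesgue⟩ := lebesgue_number_lemma_of_metric (D.isCompact_sublevel ρ hρ)
    D.isOpen_nbhd fun x hx => Set.mem_iUnion.mpr (D.exists_mem_nbhd x (lt_of_le_of_lt hx hρ))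
  obtain ⟨δ', δ'_pos, ball_subset⟩ :=
    Metric.isOpen_iff.mp (D.isOpen_nbhd 1) 0 D.zero_mem_nbhd_one
  exact ⟨min δ δ', lt_min δ_pos δ'_pos,
    (Metric.ball_subset_ball (min_le_right _ _)).trans ball_subset,
    fun x hx => (lebesgue x hx).imp fun _ => (Metric.ball_subset_ball (min_le_left _ _)).trans⟩

variable (D) in
theorem exists_isSection (hρ0 : 0 ≤ ρ) (hρ1 : ρ < 1) : ∃ ε > 0, ∃ c, D.IsSection ρ ε 1 c := by
  obtain ⟨ε, ε_pos, ball_subset, lebesgue⟩ := D.exists_pos_forall_ball_subset hρ1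
  obtain ⟨R, R_pos, norm_le⟩ := (D.isCompact_sublevel ρ hρ1).isBounded.exists_pos_norm_le
  refine ⟨ε, ε_pos, unitInterval_induction (P := fun s => ∃ c, D.IsSection ρ ε s c)
    (δ := ε / 2 / R) (by positivity)
    ⟨_, isSection_zero_one ball_subset⟩ fun s t s_nonneg s_le t_le lt ⟨c, hc⟩ =>
    hc.exists_of_dist_lt ε_pos hρ0 lebesgue (s_nonneg.trans s_le) t_le fun x hx => ?_⟩
  calc dist (t • x) (s • x) = (t - s) * ‖x‖ := by
        rw [dist_eq_norm, ← sub_smul, norm_smul, Real.norm_of_nonneg (sub_nonneg.mpr s_le)]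
    _ ≤ (t - s) * R := mul_le_mul_of_nonneg_left (norm_le x hx) (sub_nonneg.mpr s_le)
    _ < ε / 2 := (lt_div_iff₀ R_pos).mp lt

theorem IsSection.transition_of_mem_nbhd (hc : D.IsSection ρ ε 1 c) (hε : 0 < ε) {g : G} {x y : E}
    (hx : D.gauge x ≤ ρ) (hy : D.gauge y ≤ ρ) (hgx : x ∈ D.nbhd g) (hgy : y ∈ D.nbhd g)
    (h : (c x)⁻¹ * g ∈ D.transitions) : (c y)⁻¹ * g ∈ D.transitions := by
  suffices (c (AffineMap.lineMap x y (1 : ℝ)))⁻¹ * g ∈ D.transitions by simpa using this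
  refine unitInterval_induction (P := fun s => (c (AffineMap.lineMap x y s))⁻¹ * g ∈ D.transitions)
    (δ := ε / 2 / (dist x y + 1)) (by positivity) (by simpa using h)
    fun s t s_nonneg s_le t_le lt hs => ?_
  have gauge_s : D.gauge (AffineMap.lineMap x y s) ≤ ρ :=
    (D.convex_sublevel ρ).lineMap_mem hx hy ⟨s_nonneg, s_le.trans t_le⟩
  have gauge_t : D.gauge (AffineMap.lineMap x y t) ≤ ρ :=
    (D.convex_sublevel ρ).lineMap_mem hx hy ⟨s_nonneg.trans s_le, t_le⟩
  have dist_lt : dist (AffineMap.lineMap x y t) (AffineMap.lineMap x y s) < ε / 2 := by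
    rw [dist_lineMap_lineMap, Real.dist_eq, abs_of_nonneg (sub_nonneg.mpr s_le)]
    rw [lt_div_iff₀ (by positivity)] at lt
    linarith
  refine D.trans (AffineMap.lineMap x y t) _ _ _ (hc.mem_nbhd gauge_t (by simpa using hε))
    (hc.mem_nbhd gauge_s (by rw [one_smul]; exact dist_lt.trans (half_lt_self hε)))
    ((D.convex_nbhd g).lineMap_mem hgx hgy ⟨s_nonneg.trans s_le, t_le⟩)
    (hc.transition _ _ gauge_t gauge_s dist_lt) hs

variable (D) in
/-- The index `g` is in transition with every section defined over a large enough sublevel set, at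
every point of `nbhd g`. -/
def Agrees (g : G) : Prop :=
  ∃ ρ₀, 0 ≤ ρ₀ ∧ ρ₀ < 1 ∧ ∀ ρ, ρ₀ ≤ ρ → ρ < 1 → ∀ ε > 0, ∀ c, D.IsSection ρ ε 1 c →
    ∀ x ∈ D.nbhd g, D.gauge x ≤ ρ → (c x)⁻¹ * g ∈ D.transitions

variable (D) in
theorem agrees_one : D.Agrees 1 :=
  ⟨0, le_rfl, one_pos, fun _ hρ _ _ hε _ hc _ hx gauge_x => hc.transition_of_mem_nbhd hε
    (D.gauge_zero.trans_le hρ) gauge_x D.zero_mem_nbhd_one hx hc.transition_one⟩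

theorem Agrees.of_transition {g h : G} (hg : D.Agrees g) (hgh : g⁻¹ * h ∈ D.transitions)
    (inter : (D.nbhd g ∩ D.nbhd h).Nonempty) : D.Agrees h := by
  obtain ⟨ρ₀, ρ₀_nonneg, ρ₀_lt, agrees⟩ := hg
  obtain ⟨y, hyg, hyh⟩ := inter
  refine ⟨max ρ₀ (D.gauge y), le_max_of_le_left ρ₀_nonneg, max_lt ρ₀_lt (D.gauge_lt_one _ _ hyg),
    fun ρ hρ hρ1 ε hε c hc x hx gauge_x => ?_⟩
  have gauge_y : D.gauge y ≤ ρ := (le_max_right _ _).trans hρ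
  refine hc.transition_of_mem_nbhd hε gauge_y gauge_x hyh hx ?_
  exact D.trans y _ _ _ (hc.mem_nbhd gauge_y (by simpa using hε)) hyg hyh
    (agrees ρ ((le_max_left _ _).trans hρ) hρ1 ε hε c hc y hyg gauge_y) hgh

theorem agrees_of_mem_closure {T : Set G} (hT : T ⊆ D.transitions)
    (inter : ∀ g, ∀ s ∈ T, (D.nbhd g ∩ D.nbhd (g * s)).Nonempty) {g : G}
    (hg : g ∈ Subgroup.closure T) : D.Agrees g := by
  induction hg using Subgroup.closure_induction_right with
  | one => exact D.agrees_one
  | mul_right x _ s hs ih => exact ih.of_transition (by simpa using hT hs) (inter x s hs)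
  | mul_inv_cancel x _ s hs ih =>
    refine ih.of_transition (by simpa using D.inv_mem _ (hT hs)) ?_
    have := inter (x * s⁻¹) s hs
    rwa [inv_mul_cancel_right, Set.inter_comm] at this

/-- This expresses that the convex domain `{gauge < 1}` is simply connected. -/
theorem mem_transitions_of_zero_mem_nbhd {T : Set G} (closure_eq : Subgroup.closure T = ⊤)
    (hT : T ⊆ D.transitions) (inter : ∀ g, ∀ s ∈ T, (D.nbhd g ∩ D.nbhd (g * s)).Nonempty) {g : G}
    (hg : 0 ∈ D.nbhd g) : g ∈ D.transitions := by
  obtain ⟨ρ, ρ_nonneg, ρ_lt, agrees⟩ :=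
    agrees_of_mem_closure hT inter (closure_eq ▸ Subgroup.mem_top g)
  obtain ⟨ε, hε, c, hc⟩ := D.exists_isSection ρ_nonneg ρ_lt
  have gauge_le : D.gauge 0 ≤ ρ := D.gauge_zero.trans_le ρ_nonneg
  simpa using D.trans 0 _ _ _ D.zero_mem_nbhd_one (hc.mem_nbhd gauge_le (by simpa using hε)) hg
    (symm hc.transition_one) (agrees ρ le_rfl ρ_lt ε hε c hc 0 hg gauge_le)

end ConvexDevelopment

/-! ### Ring homomorphisms from ℤ[ζ₁₂] -/

namespace CycloInt

section Lift

variable {R : Type*} [CommRing R]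

/-- The ring homomorphism sending `ζ` to a root `t` of the 12th cyclotomic polynomial. -/
def lift (t : R) (ht : t ^ 4 = t ^ 2 - 1) : CycloInt →+* R where
  toFun x := x.a + x.b * t + x.c * t ^ 2 + x.d * t ^ 3
  map_zero' := by simp [zero_def]
  map_one' := by simp [one_def]
  map_add' x y := by simp only [add_def]; push_cast; ring
  map_mul' x y := by
    simp only [mul_def]; push_cast
    linear_combination (-(x.b * y.d + x.c * y.c + x.d * y.b) - (x.c * y.d + x.d * y.c) * t
      - x.d * y.d * (t ^ 2 + 1) : R) * ht

theorem lift_apply (t : R) (ht : t ^ 4 = t ^ 2 - 1) (x : CycloInt) :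
    lift t ht x = x.a + x.b * t + x.c * t ^ 2 + x.d * t ^ 3 := rfl

theorem lift_zeta (t : R) (ht : t ^ 4 = t ^ 2 - 1) : lift t ht zeta = t := by
  simp [lift_apply, zeta]

end Lift

/-- The norm of `x` to `ℚ` is a multiple of `x`. -/
theorem injective_of_charZero {R : Type*} [CommRing R] [CharZero R] (φ : CycloInt →+* R) :
    Function.Injective φ := by
  rw [injective_iff_map_eq_zero]
  intro x hx
  have map_norm : ((absSq x).norm : R) = 0 := by
    rw [← map_intCast φ, ← map_intCast ofZsqrt, Zsqrtd.norm_eq_mul_conj, map_mul, ofZsqrt_absSq,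
      map_mul, map_mul, hx, mul_zero, zero_mul]
  have three_ne_sq (n : ℤ) : (3 : ℤ) ≠ n * n := fun h => by
    have : n < 2 := by nlinarith
    have : -2 < n := by nlinarith
    interval_cases n <;> omega
  have absSq_eq : absSq x = 0 := (Zsqrtd.norm_eq_zero three_ne_sq _).mp (by exact_mod_cast map_norm)
  exact eq_zero_of_re_absSq (by rw [absSq_eq, Zsqrtd.re_zero])

end CycloInt

/-! ### Diagonal coordinates over a field -/

theorem mem_range_generalLinearGroup_map {R S n : Type*} [CommRing R] [CommRing S] [Fintype n]
    [DecidableEq n] {f : R →+* S} (hf : Function.Injective f) {g : GL n S}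
    (hg : ∀ i j, g.val i j ∈ f.range) (hg' : ∀ i j, g⁻¹.val i j ∈ f.range) :
    g ∈ (GeneralLinearGroup.map (n := n) f).range := by
  choose A hA using hg
  choose B hB using hg'
  have map_A : (of A).map f = g.val := Matrix.ext hA
  have map_B : (of B).map f = g⁻¹.val := Matrix.ext hB
  have mul_eq_one {X Y : Matrix n n R} (h : X.map f * Y.map f = 1) : X * Y = 1 :=
    map_injective hf (by dsimp only; rw [Matrix.map_mul, h, Matrix.map_one _ f.map_zero f.map_one])
  exact ⟨⟨of A, of B, mul_eq_one (by rw [map_A, map_B, g.mul_inv]),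
    mul_eq_one (by rw [map_A, map_B, g.inv_mul])⟩, Units.ext map_A⟩

/-- The matrix `γ₀` over `ℤ[ζ]`. It is not invertible there. -/
def diagBasis : Mat3 := !![1, 0, 0; 1, 1 - r, 0; 0, 0, 1]

/-- The matrix `F` over `ℤ[ζ]`. -/
def diagForm : Mat3 := !![1, 0, 0; 0, 1, 0; 0, 0, 1 - r]

theorem diagBasis_conjTranspose_mul_diagForm_mul :
    diagBasisᴴ * diagForm * diagBasis = gramMatrix := by decide +kernel

section DiagRep

variable {K : Type*} [Field K] [CharZero K] (φ : CycloInt →+* K)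

/-- The matrix `γ₀` over a field containing `ℤ[ζ]`. -/
def diagBasisGL : GL (Fin 3) K :=
  GeneralLinearGroup.mkOfDetNeZero (diagBasis.map φ) <| by
    rw [← RingHom.mapMatrix_apply, ← RingHom.map_det]
    exact (map_ne_zero_iff φ (injective_of_charZero φ)).mpr (by decide +kernel)

theorem val_diagBasisGL : (diagBasisGL φ).val = diagBasis.map φ := rfl

/-- The representation `A ↦ γ₀ A γ₀⁻¹` of the integral unitary group in the coordinates that
diagonalise the Hermitian form. -/
def diagRep : IntUnitary →* GL (Fin 3) K :=
  (MulAut.conj (diagBasisGL φ)).toMonoidHom.comp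
    ((GeneralLinearGroup.map φ).comp IntUnitary.subtype)

theorem diagRep_apply (A : IntUnitary) :
    diagRep φ A = diagBasisGL φ * GeneralLinearGroup.map φ A * (diagBasisGL φ)⁻¹ := rfl

theorem val_diagRep (A : IntUnitary) :
    (diagRep φ A).val = diagBasis.map φ * (mat A).map φ * (diagBasis.map φ)⁻¹ := by
  rw [diagRep_apply, Units.val_mul, Units.val_mul, coe_units_inv]; rfl

theorem val_diagRep_mul (A : IntUnitary) :
    (diagRep φ A).val * diagBasis.map φ = (diagBasis * mat A).map φ := by
  rw [← val_diagBasisGL, ← Units.val_mul, diagRep_apply, inv_mul_cancel_right, Units.val_mul,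
    Matrix.map_mul]
  rfl

theorem diagRep_injective : Function.Injective (diagRep φ) :=
  (MulAut.conj (diagBasisGL φ)).injective.comp <|
    (Units.map_injective (map_injective (injective_of_charZero φ))).comp Subtype.val_injective

theorem diagRep_unitary_iff {σ : K →+* K} (hσ : ∀ x, σ (φ x) = φ (star x))
    (X : GL (Fin 3) CycloInt) {g : GL (Fin 3) K}
    (hg : g = diagBasisGL φ * GeneralLinearGroup.map φ X * (diagBasisGL φ)⁻¹) :
    (g.val.map σ)ᵀ * diagForm.map φ * g.val = diagForm.map φ ↔
      X.valᴴ * gramMatrix * X.val = gramMatrix := by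
  have conj_map (M : Mat3) : ((M.map φ).map σ)ᵀ = Mᴴ.map φ :=
    Matrix.ext fun i j => hσ (M j i)
  have isUnit_γ : IsUnit (diagBasis.map φ) := (diagBasisGL φ).isUnit
  have isUnit_γ_conj : IsUnit ((diagBasis.map φ).map σ)ᵀ :=
    isUnit_transpose _ |>.mpr (isUnit_γ.map σ.mapMatrix)
  have g_mul : g.val * diagBasis.map φ = (diagBasis * X.val).map φ := by
    rw [← val_diagBasisGL, ← Units.val_mul, hg, inv_mul_cancel_right, Units.val_mul,
      Matrix.map_mul]
    rfl
  rw [← isUnit_γ.mul_left_inj, ← isUnit_γ_conj.mul_right_inj,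
    ← (map_injective (m := Fin 3) (n := Fin 3) (injective_of_charZero φ)).eq_iff]
  have lhs : ((diagBasis.map φ).map σ)ᵀ * ((g.val.map σ)ᵀ * diagForm.map φ * g.val *
      diagBasis.map φ) = (X.valᴴ * gramMatrix * X.val).map φ := by
    rw [Matrix.mul_assoc _ g.val, g_mul, Matrix.mul_assoc _ (diagForm.map φ), ← Matrix.mul_assoc,
      ← transpose_mul, ← Matrix.map_mul, g_mul, conj_map, ← Matrix.map_mul, ← Matrix.map_mul,
      ← diagBasis_conjTranspose_mul_diagForm_mul, conjTranspose_mul]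
    simp only [Matrix.mul_assoc]
  have rhs : ((diagBasis.map φ).map σ)ᵀ * (diagForm.map φ * diagBasis.map φ) =
      gramMatrix.map φ := by
    rw [conj_map, ← Matrix.map_mul, ← Matrix.map_mul, ← Matrix.mul_assoc,
      diagBasis_conjTranspose_mul_diagForm_mul]
  rw [lhs, rhs]

theorem diagRep_unitary {σ : K →+* K} (hσ : ∀ x, σ (φ x) = φ (star x)) (A : IntUnitary) :
    ((diagRep φ A).val.map σ)ᵀ * diagForm.map φ * (diagRep φ A).val = diagForm.map φ :=
  (diagRep_unitary_iff φ hσ A rfl).mpr (mat_unitary A)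

theorem mem_range_diagRep {σ : K →+* K} (hσ : ∀ x, σ (φ x) = φ (star x)) {g : GL (Fin 3) K}
    (unitary : (g.val.map σ)ᵀ * diagForm.map φ * g.val = diagForm.map φ)
    (integral : ∀ i j, ((diagBasisGL φ)⁻¹ * g * diagBasisGL φ).val i j ∈ φ.range)
    (integral_inv : ∀ i j, ((diagBasisGL φ)⁻¹ * g⁻¹ * diagBasisGL φ).val i j ∈ φ.range) :
    g ∈ (diagRep φ).range := by
  obtain ⟨X, hX⟩ := mem_range_generalLinearGroup_map (injective_of_charZero φ) integral <| by
    rwa [show ((diagBasisGL φ)⁻¹ * g * diagBasisGL φ)⁻¹ = (diagBasisGL φ)⁻¹ * g⁻¹ * diagBasisGL φ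
      by group]
  have g_eq : g = diagBasisGL φ * GeneralLinearGroup.map φ X * (diagBasisGL φ)⁻¹ := by
    rw [hX]; group
  exact ⟨⟨X, (diagRep_unitary_iff φ hσ X g_eq).mp unitary⟩, g_eq.symm⟩

theorem val_diagRep_eq_smul_one_iff (A : IntUnitary) (k : ℕ) :
    (diagRep φ A).val = φ zeta ^ k • (1 : Matrix (Fin 3) (Fin 3) K) ↔
      mat A = zeta ^ k • (1 : Mat3) := by
  have val_zeta_pow : (diagRep φ (IntUnitary.zeta ^ k)).val = φ zeta ^ k • 1 := by
    have isUnit_det : IsUnit (diagBasis.map φ).det := isUnits_det_units (diagBasisGL φ)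
    rw [val_diagRep, IntUnitary.mat_zeta_pow, ← map_pow, Matrix.map_smul' _ _ _ (map_mul φ),
      Matrix.map_one _ φ.map_zero φ.map_one, Matrix.mul_smul, mul_one, Matrix.smul_mul,
      mul_nonsing_inv _ isUnit_det]
  rw [← val_zeta_pow, Units.val_inj, (diagRep_injective φ).eq_iff, ← mat_injective.eq_iff,
    IntUnitary.mat_zeta_pow]

end DiagRep

/-! ### The complex ball -/

open Complex (normSq normSq_nonneg)

theorem lt_sqrt_three : 1.732 < √3 := Real.lt_sqrt_of_sq_lt (by norm_num)

theorem sqrt_three_lt : √3 < 1.7321 := (Real.sqrt_lt' (by norm_num)).mpr (by norm_num)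

theorem sqrt_three_mul_self : √3 * √3 = 3 := Real.mul_self_sqrt (by norm_num)

section Embeddings

variable {s : ℝ} (hs : s * s = 3)

/-- The embedding of `ℤ[√3]` into `ℝ` sending `√3` to a given square root `s = ±√3`. -/
def realEmb : ℤ√3 →+* ℝ := Zsqrtd.lift ⟨s, by exact_mod_cast hs⟩

theorem realEmb_apply (x : ℤ√3) : realEmb hs x = x.re + x.im * s := rfl

/-- The embedding of `ℤ[ζ]` into `ℂ` extending `realEmb`, with `ζ` in the upper half plane. -/
def complexEmb : CycloInt →+* ℂ :=
  CycloInt.lift ⟨s / 2, 1 / 2⟩ <| by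
    apply Complex.ext <;> simp [pow_succ] <;> grind

theorem complexEmb_apply (x : CycloInt) :
    complexEmb hs x = ⟨x.a + x.b * (s / 2) + x.c / 2, x.b / 2 + x.c * (s / 2) + x.d⟩ := by
  rw [complexEmb, lift_apply]
  apply Complex.ext <;> simp only [Complex.add_re, Complex.add_im, Complex.mul_re, Complex.mul_im,
    Complex.intCast_re, Complex.intCast_im, pow_succ, pow_zero, one_mul] <;> grind

theorem complexEmb_star (x : CycloInt) : complexEmb hs (star x) = star (complexEmb hs x) := by
  rw [complexEmb_apply, complexEmb_apply, star_def]
  apply Complex.ext <;> simp <;> ring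

theorem complexEmb_ofZsqrt (x : ℤ√3) : complexEmb hs (ofZsqrt x) = realEmb hs x := by
  rw [complexEmb_apply, realEmb_apply, ofZsqrt_eq]
  apply Complex.ext <;> simp; ring

theorem realEmb_absSq (x : CycloInt) : realEmb hs (absSq x) = normSq (complexEmb hs x) := by
  apply Complex.ofReal_injective
  rw [← complexEmb_ofZsqrt, ofZsqrt_absSq, map_mul, complexEmb_star,
    Complex.normSq_eq_conj_mul_self, Complex.star_def]

theorem realEmb_planeNormSq (x : Fin 3 → CycloInt) :
    realEmb hs (planeNormSq x) =
      normSq (complexEmb hs (x 0)) + normSq (complexEmb hs (diagSnd x)) := by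
  rw [planeNormSq, map_add, realEmb_absSq, realEmb_absSq]

/-- The square length of a column in the image of the form under a real embedding. -/
theorem normSq_complexEmb_col_two (A : IntUnitary) :
    normSq (complexEmb hs (mat A 0 2)) + normSq (complexEmb hs (diagSnd ((mat A).col 2))) =
      (1 - s) * (1 - realEmb hs (absSq (mat A 2 2))) := by
  have key := realEmb_planeNormSq hs ((mat A).col 2)
  rw [planeNormSq_col_two, map_mul, map_sub, map_one, realEmb_apply hs ⟨1, -1⟩] at key
  simpa [sub_eq_add_neg] using key.symm

end Embeddings

/-- The embedding of `ℤ[ζ]` for which the Hermitian form is indefinite. -/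
def toComplex : CycloInt →+* ℂ := complexEmb sqrt_three_mul_self

theorem toComplex_star (x : CycloInt) : toComplex (star x) = star (toComplex x) :=
  complexEmb_star _ x

theorem toComplex_r : toComplex r = √3 := by
  simpa [ofZsqrt_apply, realEmb_apply, toComplex] using
    complexEmb_ofZsqrt sqrt_three_mul_self ⟨0, 1⟩

theorem normSq_toComplex_zeta_pow (k : ℕ) : normSq (toComplex (zeta ^ k)) = 1 := by
  rw [toComplex, ← realEmb_absSq, absSq_zeta_pow, map_one]

theorem isSmallCorner_of_embeddings {c : ℤ√3} (one_le : 1 ≤ c.re + c.im * √3)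
    (le : c.re + c.im * √3 ≤ 9) (conj_nonneg : 0 ≤ c.re - c.im * √3)
    (conj_le : c.re - c.im * √3 ≤ 1) : IsSmallCorner c := by
  obtain ⟨m, n⟩ := c
  dsimp only at *
  have sqrt_gt := lt_sqrt_three
  have sqrt_lt := sqrt_three_lt
  have n_nonneg : 0 ≤ n := by
    have : (-1 : ℝ) < n := by nlinarith
    exact Int.lt_iff_add_one_le.mp (by exact_mod_cast this)
  have n_lt : n < 3 := by
    have : (n : ℝ) < 3 := by nlinarith
    exact_mod_cast this
  have m_eq (k : ℤ) (gt : (k : ℝ) - 1 < m) (lt : (m : ℝ) < k + 1) : m = k := by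
    have : k - 1 < m := by exact_mod_cast gt
    have : m < k + 1 := by exact_mod_cast lt
    lia
  unfold IsSmallCorner
  interval_cases n <;> push_cast at *
  · exact .inl (congrArg (Zsqrtd.mk · 0)
      (m_eq 1 (by push_cast; linarith) (by push_cast; linarith)))
  · exact .inr (.inl (congrArg (Zsqrtd.mk · 1)
      (m_eq 2 (by push_cast; linarith) (by push_cast; linarith))))
  · exact .inr (.inr (congrArg (Zsqrtd.mk · 2)
      (m_eq 4 (by push_cast; linarith) (by push_cast; linarith))))

/-- The form is definite under the embedding `√3 ↦ -√3`, which bounds the conjugate of `|A₃₃|²` and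
leaves only finitely many values up to `9`. -/
theorem isSmallCorner_of_normSq_le {A : IntUnitary} (h : normSq (toComplex (mat A 2 2)) ≤ 9) :
    IsSmallCorner (absSq (mat A 2 2)) := by
  have hs : -√3 * -√3 = 3 := by rw [neg_mul_neg, sqrt_three_mul_self]
  have plane := normSq_complexEmb_col_two sqrt_three_mul_self A
  have plane_conj := normSq_complexEmb_col_two hs A
  have corner_conj := realEmb_absSq hs (mat A 2 2)
  have plane_nonneg := add_nonneg (normSq_nonneg (complexEmb sqrt_three_mul_self (mat A 0 2)))
    (normSq_nonneg (complexEmb sqrt_three_mul_self (diagSnd ((mat A).col 2))))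
  have plane_conj_nonneg := add_nonneg (normSq_nonneg (complexEmb hs (mat A 0 2)))
    (normSq_nonneg (complexEmb hs (diagSnd ((mat A).col 2))))
  have corner_conj_nonneg := normSq_nonneg (complexEmb hs (mat A 2 2))
  rw [toComplex, ← realEmb_absSq] at h
  rw [plane] at plane_nonneg
  rw [plane_conj] at plane_conj_nonneg
  rw [← corner_conj] at corner_conj_nonneg
  simp only [realEmb_apply, mul_neg, ← sub_eq_add_neg, sub_neg_eq_add] at *
  have sqrt_gt := lt_sqrt_three
  have one_le := nonpos_of_mul_nonneg_right plane_nonneg (by linarith)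
  have conj_le := nonneg_of_mul_nonneg_right plane_conj_nonneg (by linarith)
  exact isSmallCorner_of_embeddings (sub_nonpos.mp one_le) h corner_conj_nonneg
    (sub_nonneg.mp conj_le)

/-- The action of the integral unitary group on `ℂ³`, in the coordinates that diagonalise the
Hermitian form. -/
def act (A : IntUnitary) (w : Fin 3 → ℂ) : Fin 3 → ℂ := (diagRep toComplex A).val *ᵥ w

theorem act_mul (A B : IntUnitary) (w : Fin 3 → ℂ) : act (A * B) w = act A (act B w) := by
  rw [act, act, act, mulVec_mulVec, map_mul, Units.val_mul]

theorem act_one (w : Fin 3 → ℂ) : act 1 w = w := by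
  rw [act, map_one, Units.val_one, one_mulVec]

/-- The complex vector with a given integral vector of coordinates in the original basis. -/
def diagCoords (x : Fin 3 → CycloInt) : Fin 3 → ℂ :=
  ![toComplex (x 0), toComplex (diagSnd x), toComplex (x 2)]

theorem diagCoords_eq (x : Fin 3 → CycloInt) : diagCoords x = toComplex ∘ (diagBasis *ᵥ x) := by
  ext i
  fin_cases i <;> simp [diagCoords, diagBasis, diagSnd, dotProduct, Fin.sum_univ_three]

theorem act_diagCoords (A : IntUnitary) (x : Fin 3 → CycloInt) :
    act A (diagCoords x) = diagCoords (mat A *ᵥ x) := by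
  have map_mulVec (M : Mat3) (y : Fin 3 → CycloInt) :
      toComplex ∘ (M *ᵥ y) = M.map toComplex *ᵥ (toComplex ∘ y) :=
    funext (RingHom.map_mulVec toComplex M y)
  rw [act, diagCoords_eq, diagCoords_eq, map_mulVec, mulVec_mulVec, val_diagRep_mul, ← map_mulVec,
    mulVec_mulVec]

/-- The Hermitian form of signature `(2, 1)`. -/
def hermForm (p w : Fin 3 → ℂ) : ℂ := star p ⬝ᵥ diagForm.map toComplex *ᵥ w

theorem hermForm_apply (p w : Fin 3 → ℂ) :
    hermForm p w = star (p 0) * w 0 + star (p 1) * w 1 + (1 - √3) * (star (p 2) * w 2) := by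
  simp [hermForm, diagForm, mulVec, dotProduct, Fin.sum_univ_three, toComplex_r]
  ring

theorem hermForm_act (A : IntUnitary) (p w : Fin 3 → ℂ) :
    hermForm (act A p) (act A w) = hermForm p w := by
  have unitary : (diagRep toComplex A).valᴴ * diagForm.map toComplex * (diagRep toComplex A).val =
      diagForm.map toComplex :=
    diagRep_unitary toComplex (σ := starRingEnd ℂ) (fun x => (toComplex_star x).symm) A
  rw [hermForm, act, act, star_mulVec, mulVec_mulVec, dotProduct_mulVec, vecMul_vecMul,
    ← Matrix.mul_assoc, unitary, ← dotProduct_mulVec, hermForm]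

/-- The real quadratic form `w ↦ hermForm w w`. Its negative cone is the cone over the ball. -/
def normForm (w : Fin 3 → ℂ) : ℝ := normSq (w 0) + normSq (w 1) - (√3 - 1) * normSq (w 2)

theorem hermForm_self (w : Fin 3 → ℂ) : hermForm w w = normForm w := by
  rw [hermForm_apply, normForm]
  push_cast
  simp only [Complex.normSq_eq_conj_mul_self, Complex.star_def]
  ring

theorem normForm_act (A : IntUnitary) (w : Fin 3 → ℂ) : normForm (act A w) = normForm w := by
  apply Complex.ofReal_injective
  rw [← hermForm_self, ← hermForm_self, hermForm_act]

/-- The image under `A` of the origin of the ball. -/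
def center (A : IntUnitary) : Fin 3 → ℂ := act A (Pi.single 2 1)

theorem center_mul (A B : IntUnitary) : center (A * B) = act A (center B) := act_mul A B _

theorem center_eq_diagCoords (A : IntUnitary) : center A = diagCoords ((mat A).col 2) := by
  have single_eq : (Pi.single 2 1 : Fin 3 → ℂ) = diagCoords (Pi.single 2 1) := by
    ext i; fin_cases i <;> simp [diagCoords, diagSnd]
  rw [center, single_eq, act_diagCoords, mulVec_single_one]

theorem hermForm_center_one (w : Fin 3 → ℂ) : hermForm (center 1) w = (1 - √3) * w 2 := by
  simp [center, act_one, hermForm_apply]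

theorem hermForm_center_mul (A B : IntUnitary) (w : Fin 3 → ℂ) :
    hermForm (center (A * B)) (act A w) = hermForm (center B) w := by
  rw [center_mul, hermForm_act]

/-- `w` represents a point of the ball at distance less than `arcosh √2` from the image under `A`
of the origin. -/
def Near (A : IntUnitary) (w : Fin 3 → ℂ) : Prop :=
  normSq (hermForm (center A) w) < 2 * (√3 - 1) * -normForm w

theorem near_mul_act (A B : IntUnitary) (w : Fin 3 → ℂ) : Near (A * B) (act A w) ↔ Near B w := by
  rw [Near, Near, normForm_act, hermForm_center_mul]

theorem near_one_iff (w : Fin 3 → ℂ) :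
    Near 1 w ↔ 2 * (normSq (w 0) + normSq (w 1)) < (√3 - 1) * normSq (w 2) := by
  have pos : 0 < √3 - 1 := by linarith [lt_sqrt_three]
  rw [Near, normForm, hermForm_center_one, map_mul, ← Complex.ofReal_one, ← Complex.ofReal_sub,
    Complex.normSq_ofReal]
  exact ⟨fun h => lt_of_mul_lt_mul_left (by linarith) pos.le,
    fun h => by linarith [mul_lt_mul_of_pos_left h pos]⟩

theorem near_smul_iff (A : IntUnitary) {c : ℂ} (hc : c ≠ 0) (w : Fin 3 → ℂ) :
    Near A (c • w) ↔ Near A w := by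
  have hermForm_smul (p : Fin 3 → ℂ) : hermForm p (c • w) = c * hermForm p w := by
    rw [hermForm, mulVec_smul, dotProduct_smul, smul_eq_mul, hermForm]
  have normForm_smul : normForm (c • w) = normSq c * normForm w := by
    simp only [normForm, Pi.smul_apply, smul_eq_mul, map_mul]; ring
  rw [Near, Near, hermForm_smul, normForm_smul, map_mul, ← mul_neg, mul_left_comm _ (normSq c),
    mul_lt_mul_iff_right₀ (Complex.normSq_pos.mpr hc)]

theorem Near.normForm_neg {A : IntUnitary} {w : Fin 3 → ℂ} (h : Near A w) : normForm w < 0 := by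
  have := (normSq_nonneg _).trans_lt h
  nlinarith [lt_sqrt_three]

theorem near_congr {A B : IntUnitary} (h : (QuotientGroup.mk A : PU) = QuotientGroup.mk B)
    (w : Fin 3 → ℂ) : Near A w ↔ Near B w := by
  obtain ⟨k, -, hk⟩ := exists_mat_eq_smul_of_mk_eq_mk h
  have center_smul : center B = toComplex (zeta ^ k) • center A := by
    have col_smul : (mat B).col 2 = zeta ^ k • (mat A).col 2 := by rw [hk]; rfl
    rw [center_eq_diagCoords, center_eq_diagCoords, col_smul, diagCoords, diagCoords, diagSnd_smul]
    ext i; fin_cases i <;> simp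
  rw [Near, Near, center_smul, hermForm, hermForm, star_smul, smul_dotProduct, smul_eq_mul, map_mul,
    Complex.star_def, Complex.normSq_conj, normSq_toComplex_zeta_pow, one_mul]

theorem normSq_star_mul_add_star_mul_le (p q x y : ℂ) :
    normSq (star p * x + star q * y) ≤ (normSq p + normSq q) * (normSq x + normSq y) := by
  have lagrange : (normSq p + normSq q) * (normSq x + normSq y) =
      normSq (star p * x + star q * y) + normSq (p * y - q * x) := by
    simp only [Complex.normSq_apply, Complex.add_re, Complex.mul_re, Complex.add_im, Complex.mul_im,
      Complex.star_def, Complex.conj_re, Complex.conj_im, Complex.sub_re, Complex.sub_im]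
    ring
  exact lagrange ▸ le_add_of_nonneg_right (normSq_nonneg _)

theorem normSq_sub_le (x y : ℂ) : normSq (x - y) ≤ 3 / 2 * normSq x + 3 * normSq y := by
  simp only [Complex.normSq_apply, Complex.sub_re, Complex.sub_im]
  nlinarith [sq_nonneg (x.re + 2 * y.re), sq_nonneg (x.im + 2 * y.im)]

theorem normSq_le_nine_of_hermForm_lt {p q a x y z : ℂ}
    (col : normSq p + normSq q = (√3 - 1) * (normSq a - 1))
    (h_one : 2 * (normSq x + normSq y) < (√3 - 1) * normSq z)
    (h : normSq (star p * x + star q * y + (1 - √3) * (star a * z)) <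
      2 * (√3 - 1) * -(normSq x + normSq y - (√3 - 1) * normSq z)) : normSq a ≤ 9 := by
  have cauchy := normSq_star_mul_add_star_mul_le p q x y
  have split := normSq_sub_le (star p * x + star q * y)
    (star p * x + star q * y + (1 - √3) * (star a * z))
  have sub_eq : star p * x + star q * y - (star p * x + star q * y + (1 - √3) * (star a * z)) =
      ((√3 - 1 : ℝ) : ℂ) * (star a * z) := by push_cast; ring
  rw [sub_eq, map_mul, map_mul, Complex.normSq_ofReal, Complex.star_def, Complex.normSq_conj]
    at split
  rw [col] at cauchy
  have pos : 0 < √3 - 1 := by linarith [lt_sqrt_three]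
  have nonneg : 0 ≤ (√3 - 1) * normSq z := mul_nonneg pos.le (normSq_nonneg z)
  simp only [Complex.star_def] at *
  by_contra! lt
  generalize normSq a = N at *
  generalize normSq z = O at *
  generalize normSq x + normSq y = W at *
  have key : (√3 - 1) * (N * O) < 6 * ((√3 - 1) * O - W) + 3 / 2 * ((N - 1) * W) :=
    lt_of_mul_lt_mul_left (by linarith) pos.le
  linarith [mul_lt_mul_of_pos_left h_one (sub_pos.mpr lt), mul_nonneg (sub_nonneg.mpr lt.le) nonneg]

/-- The origin and the center of `A` are both close to `w`, so the distance between them, which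
determines `|A₃₃|²`, is bounded. -/
theorem isSmallCorner_of_near_one {A : IntUnitary} {w : Fin 3 → ℂ} (h_one : Near 1 w)
    (hA : Near A w) : IsSmallCorner (absSq (mat A 2 2)) := by
  rw [near_one_iff] at h_one
  rw [Near, normForm, hermForm_apply, center_eq_diagCoords] at hA
  refine isSmallCorner_of_normSq_le (normSq_le_nine_of_hermForm_lt ?_ h_one hA)
  have col := normSq_complexEmb_col_two sqrt_three_mul_self A
  rw [realEmb_absSq] at col
  exact col.trans (by rw [toComplex]; ring)

theorem isSmallCorner_of_near {A B : IntUnitary} {w : Fin 3 → ℂ} (hA : Near A w) (hB : Near B w) :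
    IsSmallCorner (absSq (mat (A⁻¹ * B) 2 2)) := by
  have h_one := (near_mul_act A⁻¹ A w).mpr hA
  rw [inv_mul_cancel] at h_one
  exact isSmallCorner_of_near_one h_one ((near_mul_act A⁻¹ B w).mpr hB)

/-! ### The translates of the basic neighbourhood cover the ball -/

open Real (cos)
open scoped Real

theorem exists_pow_exp_cos_mul_norm_le_re {n : ℕ} (hn : n ≠ 0) (t : ℂ) :
    ∃ k : ℕ, cos (π / n) * ‖t‖ ≤ (Complex.exp (2 * π * Complex.I / n) ^ k * t).re := by
  have n_pos : (0 : ℝ) < n := by positivity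
  set y := n - n * t.arg / (2 * π) with y_def
  have y_nonneg : 0 ≤ y := by
    have : n * t.arg / (2 * π) ≤ n := by
      rw [div_le_iff₀ Real.two_pi_pos]
      exact mul_le_mul_of_nonneg_left (by linarith [t.arg_le_pi, Real.pi_pos]) n_pos.le
    linarith
  obtain ⟨k, hk⟩ := Int.eq_ofNat_of_zero_le (a := round y) <| by
    rw [round_eq]; exact Int.floor_nonneg.mpr (by linarith)
  have abs_sub_le : |y - k| ≤ 1 / 2 := by
    have := abs_sub_round y
    rwa [hk, Int.cast_natCast] at this
  refine ⟨k, ?_⟩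
  have re_eq : (Complex.exp (2 * π * Complex.I / n) ^ k * t).re =
      ‖t‖ * cos (2 * π / n * (y - k)) := by
    conv_lhs => rw [← Complex.norm_mul_exp_arg_mul_I t]
    rw [← Complex.exp_nat_mul, mul_left_comm, ← Complex.exp_add, Complex.re_ofReal_mul,
      show (k : ℂ) * (2 * π * Complex.I / n) + t.arg * Complex.I =
        ((k * (2 * π / n) + t.arg : ℝ) : ℂ) * Complex.I by push_cast; ring,
      Complex.exp_ofReal_mul_I_re, ← Real.cos_neg, ← Real.cos_add_two_pi]
    congr 2
    rw [y_def]; field_simp; ring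
  have abs_le : |2 * π / n * (y - k)| ≤ π / n := by
    rw [abs_mul, abs_of_pos (by positivity)]
    calc 2 * π / n * |y - k| ≤ 2 * π / n * (1 / 2) := by gcongr
      _ = π / n := by ring
  rw [re_eq, mul_comm, ← Real.cos_abs (2 * π / n * _)]
  refine mul_le_mul_of_nonneg_left (Real.cos_le_cos_of_nonneg_of_le_pi (abs_nonneg _) ?_ abs_le)
    (norm_nonneg t)
  exact div_le_self Real.pi_pos.le (by exact_mod_cast Nat.one_le_iff_ne_zero.mpr hn)

theorem toComplex_zeta : toComplex zeta = Complex.exp (2 * π * Complex.I / 12) := by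
  rw [show 2 * π * Complex.I / 12 = ((π / 6 : ℝ) : ℂ) * Complex.I by push_cast; ring,
    Complex.exp_mul_I, ← Complex.ofReal_cos, ← Complex.ofReal_sin, Real.cos_pi_div_six,
    Real.sin_pi_div_six, toComplex, complexEmb_apply]
  apply Complex.ext <;> simp [zeta]

theorem four_mul_cos_pi_div_twelve_sq : 4 * cos (π / 12) ^ 2 = 2 + √3 := by
  rw [Real.cos_sq, show 2 * (π / 12) = π / 6 by ring, Real.cos_pi_div_six]; ring

theorem exists_sqrt_three_div_three_mul_le {a b c W : ℝ}
    (h : a ^ 2 + b ^ 2 + c ^ 2 = W ^ 2) :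
    √3 / 3 * W ≤ |a| ∨ √3 / 3 * W ≤ |b| ∨ √3 / 3 * W ≤ |c| := by
  by_contra! lt
  obtain ⟨lt_a, lt_b, lt_c⟩ := lt
  have sq_lt {x : ℝ} (hx : |x| < √3 / 3 * W) : x ^ 2 < W ^ 2 / 3 := by
    calc x ^ 2 = |x| ^ 2 := (sq_abs x).symm
      _ < (√3 / 3 * W) ^ 2 := by gcongr
      _ = W ^ 2 / 3 := by linear_combination W ^ 2 / 9 * sqrt_three_mul_self
  linarith [sq_lt lt_a, sq_lt lt_b, sq_lt lt_c]

theorem hermForm_diagCoords_add_single (y : Fin 3 → CycloInt) (h : y 2 = 0) (c : CycloInt)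
    (w : Fin 3 → ℂ) : hermForm (diagCoords (y + Pi.single 2 c)) w =
      hermForm (diagCoords y) w - star (toComplex c) * ((√3 - 1) * w 2) := by
  simp [hermForm_apply, diagCoords, diagSnd, h]
  ring

/-- The lines spanned by the six vectors in the proof are the vertices of a regular octahedron on
the Riemann sphere. -/
theorem exists_planeNormSq_eq_two_le_normSq (w : Fin 3 → ℂ) : ∃ y : Fin 3 → CycloInt, y 2 = 0 ∧
    planeNormSq y = 2 ∧ (1 + √3 / 3) * (normSq (w 0) + normSq (w 1)) ≤
      normSq (hermForm (diagCoords y) w) := by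
  set W := normSq (w 0) + normSq (w 1) with hW
  set a := normSq (w 0) - normSq (w 1) with ha
  set b := 2 * ((w 0).re * (w 1).re + (w 0).im * (w 1).im) with hb
  set c := 2 * ((w 0).im * (w 1).re - (w 0).re * (w 1).im) with hc
  have sum_sq : a ^ 2 + b ^ 2 + c ^ 2 = W ^ 2 := by
    simp only [ha, hb, hc, hW, Complex.normSq_apply]; ring
  have of_le {x : ℝ} (p x₁ q : CycloInt) (hq : diagSnd ![p, x₁, 0] = q)
      (plane : planeNormSq ![p, x₁, 0] = 2) (le : √3 / 3 * W ≤ x)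
      (eq : normSq (star (toComplex p) * w 0 + star (toComplex q) * w 1) = W + x) :
      ∃ y : Fin 3 → CycloInt, y 2 = 0 ∧ planeNormSq y = 2 ∧
        (1 + √3 / 3) * W ≤ normSq (hermForm (diagCoords y) w) := by
    refine ⟨![p, x₁, 0], rfl, plane, ?_⟩
    have herm_eq : hermForm (diagCoords ![p, x₁, 0]) w =
        star (toComplex p) * w 0 + star (toComplex q) * w 1 := by
      simp [hermForm_apply, diagCoords, hq]
    rw [herm_eq, eq]
    linarith
  have toComplex_gaussian (m n : ℤ) : toComplex ⟨m, 0, 0, n⟩ = ⟨m, n⟩ := by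
    simp [toComplex, complexEmb_apply]
  rcases exists_sqrt_three_div_three_mul_le sum_sq with h | h | h <;>
    rcases le_abs.mp h with h | h
  · refine of_le ⟨1, 0, 0, 1⟩ ⟨0, 1, 1, 0⟩ 0 (by decide +kernel) (by decide +kernel) h ?_
    simp [toComplex_gaussian, hW, ha, Complex.normSq_apply]; ring
  · refine of_le 0 ⟨0, -1, -1, 0⟩ ⟨1, 0, 0, 1⟩ (by decide +kernel) (by decide +kernel) h ?_
    simp [toComplex_gaussian, hW, ha, Complex.normSq_apply]; ring
  · refine of_le 1 0 1 (by decide +kernel) (by decide +kernel) h ?_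
    simp [hW, hb, Complex.normSq_apply]; ring
  · refine of_le 1 ⟨1, 2, 0, -1⟩ ⟨-1, 0, 0, 0⟩ (by decide +kernel) (by decide +kernel) h ?_
    simp [toComplex_gaussian, hW, hb, Complex.normSq_apply]; ring
  · refine of_le 1 ⟨0, 1, 1, 0⟩ ⟨0, 0, 0, -1⟩ (by decide +kernel) (by decide +kernel) h ?_
    simp [toComplex_gaussian, hW, hc, Complex.normSq_apply]; ring
  · refine of_le 1 ⟨1, 1, -1, -1⟩ ⟨0, 0, 0, 1⟩ (by decide +kernel) (by decide +kernel) h ?_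
    simp [toComplex_gaussian, hW, hc, Complex.normSq_apply]; ring

theorem sub_le_of_aligned {a n c : ℝ} (ha : 0 ≤ a) (hn : 0 ≤ n)
    (lower : (1 / 2 + √3 / 3) * n ^ 2 ≤ a ^ 2) (upper : a ^ 2 ≤ (√3 + 1) * n ^ 2)
    (aligned : (2 + √3) / 2 * (a * n) ≤ c) :
    a ^ 2 + (2 + √3) * n ^ 2 - 2 * c ≤ 0.94 * n ^ 2 := by
  have sqrt_gt := lt_sqrt_three
  have sqrt_lt := sqrt_three_lt
  have le_a : 1.0379 * n ≤ a := by
    refine le_of_sq_le_sq ?_ ha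
    nlinarith
  have a_le : a ≤ 1.66 * n := by
    refine le_of_sq_le_sq ?_ (by positivity)
    nlinarith
  nlinarith [mul_nonneg (sub_nonneg.mpr le_a) (sub_nonneg.mpr a_le),
    mul_nonneg hn (sub_nonneg.mpr le_a)]

theorem planeNormSq_add_single_two (y : Fin 3 → CycloInt) (c : CycloInt) :
    planeNormSq (y + Pi.single 2 c) = planeNormSq y := by
  simp [planeNormSq, diagSnd]

theorem exists_toPU_eq_mk_col_two_eq {y : Fin 3 → CycloInt} (h2 : y 2 = 0)
    (h : planeNormSq y = 2) : ∃ g A, toPU g = QuotientGroup.mk A ∧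
      (mat A).col 2 = y + Pi.single 2 (bPrime 2 2) := by
  obtain ⟨k, hk, col_eq⟩ := kOrbitRel_of_planeNormSq_eq_two (y := bPrime.col 2)
    (x := y + Pi.single 2 (bPrime 2 2)) (by simp) (by simp [h2])
    ((planeNormSq_add_single_two _ _).trans h)
  refine ⟨k.1 * gb, k.2 * IntUnitary.b, ?_, ?_⟩
  · rw [map_mul, Kgraph.toPU_fst hk, toPU_gb, QuotientGroup.mk_mul]
  · rw [← col_eq, map_mul, IntUnitary.mat_b]; rfl

theorem normSq_toComplex_bPrime_one_two : normSq (toComplex (bPrime 1 2)) = 2 + √3 := by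
  rw [toComplex, ← realEmb_absSq, show absSq (bPrime 1 2) = ⟨2, 1⟩ by decide +kernel, realEmb_apply]
  simp

theorem normSq_toComplex_bPrime_two_two : normSq (toComplex (bPrime 2 2)) = 2 + √3 := by
  rw [toComplex, ← realEmb_absSq, show absSq (bPrime 2 2) = ⟨2, 1⟩ by decide +kernel, realEmb_apply]
  simp

theorem norm_toComplex_bPrime_two_two : ‖toComplex (bPrime 2 2)‖ = 2 * cos (π / 12) := by
  have cos_nonneg : 0 ≤ cos (π / 12) :=
    Real.cos_nonneg_of_mem_Icc ⟨by linarith [Real.pi_pos], by linarith [Real.pi_pos]⟩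
  refine (sq_eq_sq₀ (norm_nonneg _) (by positivity)).mp ?_
  rw [← Complex.normSq_eq_norm_sq, normSq_toComplex_bPrime_two_two, mul_pow]
  linear_combination -four_mul_cos_pi_div_twelve_sq

/-- The rotation by `ζ ^ n` lets the two terms of the form cancel as far as possible. -/
theorem exists_normSq_hermForm_center_eq {y : Fin 3 → CycloInt} (h2 : y 2 = 0)
    (h : planeNormSq y = 2) (w : Fin 3 → ℂ) : ∃ g A, ∃ c : ℝ, toPU g = QuotientGroup.mk A ∧
      (2 + √3) / 2 * (‖hermForm (diagCoords y) w‖ * ‖hermForm (center 1) w‖) ≤ c ∧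
      normSq (hermForm (center A) w) = ‖hermForm (diagCoords y) w‖ ^ 2 +
        (2 + √3) * ‖hermForm (center 1) w‖ ^ 2 - 2 * c := by
  set T := hermForm (diagCoords y) w
  set β := toComplex (bPrime 2 2)
  set q := (√3 - 1) * w 2 with q_def
  have norm_center_one : ‖hermForm (center 1) w‖ = ‖q‖ := by
    rw [hermForm_center_one, ← norm_neg]; congr 1; rw [q_def]; ring
  have norm_β_sq : ‖β‖ ^ 2 = 2 + √3 := by
    rw [norm_toComplex_bPrime_two_two, ← four_mul_cos_pi_div_twelve_sq]; ring
  obtain ⟨n, le_re⟩ :=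
    exists_pow_exp_cos_mul_norm_le_re (n := 12) (by norm_num) (star T * (star β * q))
  push_cast at le_re
  rw [← toComplex_zeta, ← map_pow] at le_re
  set ω := toComplex (zeta ^ n)
  have normSq_ω : normSq ω = 1 := normSq_toComplex_zeta_pow n
  obtain ⟨g, A, hA, col_eq⟩ := exists_toPU_eq_mk_col_two_eq (y := zeta ^ n • y) (by simp [h2])
    ((planeNormSq_zeta_pow_smul _ _).trans h)
  refine ⟨g, A, _, hA, le_of_eq_of_le ?_ le_re, ?_⟩
  · rw [norm_mul, norm_mul, norm_star, norm_star, norm_center_one, ← norm_β_sq]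
    rw [norm_toComplex_bPrime_two_two]; ring
  · have smul_eq : hermForm (diagCoords (zeta ^ n • y)) w = star ω * T := by
      simp [hermForm_apply, diagCoords, diagSnd_smul, T, ω, h2]; ring
    have center_eq : hermForm (center A) w = star ω * T - star β * q := by
      rw [center_eq_diagCoords, col_eq, hermForm_diagCoords_add_single _ (by simp [h2]), smul_eq]
    rw [center_eq, Complex.normSq_sub, map_mul, map_mul, Complex.star_def, Complex.normSq_conj,
      Complex.normSq_conj, normSq_ω, one_mul, Complex.normSq_eq_norm_sq, Complex.normSq_eq_norm_sq,
      Complex.normSq_eq_norm_sq, norm_β_sq, norm_center_one, ← Complex.conj_re]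
    congr 3
    simp only [map_mul, Complex.conj_conj]
    ring

/-- Some vertex of the octahedron is so close to `(w 0, w 1)` that moving the origin there
decreases the distance to `w`. -/
theorem exists_normSq_hermForm_center_le {w : Fin 3 → ℂ} (hw : normForm w ≤ 0)
    (far : ¬Near 1 w) : ∃ g A, toPU g = QuotientGroup.mk A ∧
      normSq (hermForm (center A) w) ≤ 0.94 * normSq (hermForm (center 1) w) := by
  obtain ⟨y, y_two, plane, le_normSq⟩ := exists_planeNormSq_eq_two_le_normSq w
  obtain ⟨g, A, c, hA, aligned, eq⟩ := exists_normSq_hermForm_center_eq y_two plane w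
  refine ⟨g, A, hA, ?_⟩
  have normSq_center_one : ‖hermForm (center 1) w‖ ^ 2 = (√3 - 1) ^ 2 * normSq (w 2) := by
    rw [← Complex.normSq_eq_norm_sq, hermForm_center_one, map_mul, ← Complex.ofReal_one,
      ← Complex.ofReal_sub, Complex.normSq_ofReal]
    ring
  have cauchy : normSq (hermForm (diagCoords y) w) ≤ 2 * (normSq (w 0) + normSq (w 1)) := by
    have key := normSq_star_mul_add_star_mul_le (toComplex (y 0)) (toComplex (diagSnd y)) (w 0)
      (w 1)
    have emb := realEmb_planeNormSq sqrt_three_mul_self y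
    rw [plane, map_ofNat] at emb
    rw [toComplex, ← emb] at key
    simpa [hermForm_apply, diagCoords, y_two, toComplex] using key
  rw [near_one_iff, not_lt] at far
  rw [normForm, sub_nonpos] at hw
  rw [Complex.normSq_eq_norm_sq (hermForm (diagCoords y) w)] at le_normSq cauchy
  rw [eq, Complex.normSq_eq_norm_sq (hermForm (center 1) w)]
  refine sub_le_of_aligned (norm_nonneg _) (norm_nonneg _) ?_ ?_ aligned
  · rw [normSq_center_one]
    linear_combination (exp := 1) le_normSq + (1 + √3 / 3) / 2 * far +
      (√3 - 1) / 3 * normSq (w 2) * sqrt_three_mul_self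
  · rw [normSq_center_one]
    linear_combination (exp := 1) cauchy + 2 * hw - (√3 - 1) * normSq (w 2) * sqrt_three_mul_self

theorem exists_near {w : Fin 3 → ℂ} (hw : normForm w < 0) :
    ∃ g A, toPU g = QuotientGroup.mk A ∧ Near A w := by
  have of_pow_lt (n : ℕ) : ∀ w : Fin 3 → ℂ, normForm w < 0 →
      normSq (hermForm (center 1) w) * 0.94 ^ n < 2 * (√3 - 1) * -normForm w →
        ∃ g A, toPU g = QuotientGroup.mk A ∧ Near A w := by
    induction n with
    | zero => exact fun w _ lt => ⟨1, 1, map_one _, by simpa [Near] using lt⟩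
    | succ n ih =>
      intro w hw lt
      by_cases near_one : Near 1 w
      · exact ⟨1, 1, map_one _, near_one⟩
      obtain ⟨g, A, hA, le⟩ := exists_normSq_hermForm_center_le hw.le near_one
      have center_eq := hermForm_center_mul A⁻¹ A w
      rw [inv_mul_cancel] at center_eq
      obtain ⟨g', B, hB, near⟩ := ih (act A⁻¹ w) (by rwa [normForm_act]) <| by
        rw [normForm_act, center_eq]
        refine lt_of_le_of_lt ?_ lt
        rw [pow_succ', ← mul_assoc, mul_comm _ (0.94 : ℝ)]
        gcongr
      refine ⟨g * g', A * B, by rw [map_mul, hA, hB, QuotientGroup.mk_mul], ?_⟩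
      rw [← near_mul_act A⁻¹, inv_mul_cancel_left]
      exact near
  have pos : 0 < 2 * (√3 - 1) * -normForm w := by
    have := lt_sqrt_three
    exact mul_pos (by linarith) (by linarith)
  have tendsto : Filter.Tendsto (fun n : ℕ => normSq (hermForm (center 1) w) * 0.94 ^ n)
      Filter.atTop (nhds 0) := by
    simpa using (tendsto_pow_atTop_nhds_zero_of_lt_one (r := (0.94 : ℝ)) (by norm_num)
      (by norm_num)).const_mul (normSq (hermForm (center 1) w))
  obtain ⟨n, hn⟩ := (tendsto.eventually_lt_const pos).exists
  exact of_pow_lt n w hw hn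

/-! ### Bijectivity -/

theorem near_center (A : IntUnitary) : Near A (center A) := by
  have near_one : Near 1 (Pi.single 2 1) := by
    rw [near_one_iff]
    simp [lt_sqrt_three.trans' (by norm_num : (1 : ℝ) < 1.732)]
  have near_act := (near_mul_act A 1 (Pi.single 2 1)).mpr near_one
  rwa [mul_one] at near_act

/-- The point of the ball with the given affine coordinates. -/
def ballPoint (x : ℂ × ℂ) : Fin 3 → ℂ := ![x.1, x.2, 1]

theorem normForm_ballPoint (x : ℂ × ℂ) :
    normForm (ballPoint x) = normSq x.1 + normSq x.2 - (√3 - 1) := by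
  simp [normForm, ballPoint]

theorem ballPoint_zero : ballPoint 0 = center 1 := by
  rw [center, act_one]
  ext i; fin_cases i <;> simp [ballPoint]

theorem exists_eq_smul_ballPoint {w : Fin 3 → ℂ} (h : normForm w < 0) :
    ∃ (x : ℂ × ℂ) (c : ℂ), c ≠ 0 ∧ w = c • ballPoint x := by
  have w_two_ne : w 2 ≠ 0 := fun w_two => by
    rw [normForm, w_two, map_zero, mul_zero, sub_zero] at h
    exact h.not_ge (add_nonneg (normSq_nonneg _) (normSq_nonneg _))
  refine ⟨(w 0 / w 2, w 1 / w 2), w 2, w_two_ne, ?_⟩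
  ext i
  fin_cases i <;> simp [ballPoint, mul_div_cancel₀ _ w_two_ne]

theorem convexOn_normSq_comp {E : Type*} [AddCommGroup E] [Module ℝ E] (f : E →ᵃ[ℝ] ℂ) :
    ConvexOn ℝ Set.univ fun x => normSq (f x) := by
  have := ((convexOn_univ_norm (E := ℂ)).pow (fun _ _ => norm_nonneg _) 2).comp_affineMap f
  simp only [Complex.normSq_eq_norm_sq]
  exact this

theorem convexOn_normSq_add_normSq :
    ConvexOn ℝ Set.univ fun x : ℂ × ℂ => normSq x.1 + normSq x.2 :=
  (convexOn_normSq_comp (LinearMap.fst ℝ ℂ ℂ).toAffineMap).add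
    (convexOn_normSq_comp (LinearMap.snd ℝ ℂ ℂ).toAffineMap)

theorem convexOn_normSq_hermForm_ballPoint (p : Fin 3 → ℂ) :
    ConvexOn ℝ Set.univ fun x => normSq (hermForm p (ballPoint x)) := by
  have := convexOn_normSq_comp <|
    ((LinearMap.mulLeft ℝ (star (p 0))).comp (LinearMap.fst ℝ ℂ ℂ) +
      (LinearMap.mulLeft ℝ (star (p 1))).comp (LinearMap.snd ℝ ℂ ℂ)).toAffineMap +
    AffineMap.const ℝ (ℂ × ℂ) ((1 - √3) * star (p 2))
  simpa [hermForm_apply, ballPoint] using this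

theorem continuous_normSq_add_normSq : Continuous fun x : ℂ × ℂ => normSq x.1 + normSq x.2 :=
  (Complex.continuous_normSq.comp continuous_fst).add
    (Complex.continuous_normSq.comp continuous_snd)

theorem continuous_normSq_hermForm_ballPoint (p : Fin 3 → ℂ) :
    Continuous fun x => normSq (hermForm p (ballPoint x)) := by
  refine Complex.continuous_normSq.comp ?_
  simp only [hermForm_apply, ballPoint, cons_val]
  fun_prop

theorem isCompact_normSq_add_normSq_le (ρ : ℝ) :
    IsCompact {x : ℂ × ℂ | normSq x.1 + normSq x.2 ≤ ρ} := by
  refine Metric.isCompact_of_isClosed_isBounded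
    (isClosed_le continuous_normSq_add_normSq continuous_const)
    ((Metric.isBounded_closedBall (x := 0) (r := √ρ)).subset fun x hx => ?_)
  rw [Set.mem_ofPred_eq, Complex.normSq_eq_norm_sq, Complex.normSq_eq_norm_sq] at hx
  rw [mem_closedBall_zero_iff, Prod.norm_def, max_le_iff]
  exact ⟨Real.le_sqrt_of_sq_le (by linarith [sq_nonneg ‖x.2‖]),
    Real.le_sqrt_of_sq_le (by linarith [sq_nonneg ‖x.1‖])⟩

/-- The translate by `g` of the ball of radius `arcosh √2` around the origin. -/
def nbhd (g : CS) : Set (ℂ × ℂ) := {x | ∃ A, toPU g = QuotientGroup.mk A ∧ Near A (ballPoint x)}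

theorem mem_nbhd_iff {g : CS} {A : IntUnitary} (h : toPU g = QuotientGroup.mk A) (x : ℂ × ℂ) :
    x ∈ nbhd g ↔ Near A (ballPoint x) :=
  ⟨fun ⟨_, hB, hx⟩ => (near_congr (hB.symm.trans h) _).mp hx, fun hx => ⟨A, h, hx⟩⟩

theorem nbhd_congr {g h : CS} (e : toPU g = toPU h) : nbhd g = nbhd h := by simp only [nbhd, e]

theorem exists_nbhd_eq (g : CS) : ∃ p : Fin 3 → ℂ, nbhd g =
    {x | normSq (hermForm p (ballPoint x)) + 2 * (√3 - 1) * (normSq x.1 + normSq x.2) <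
      2 * (√3 - 1) ^ 2} := by
  obtain ⟨A, hA⟩ := QuotientGroup.mk_surjective (toPU g)
  refine ⟨center A, Set.ext fun x => ?_⟩
  rw [mem_nbhd_iff hA.symm, Near, normForm_ballPoint, Set.mem_ofPred_eq]
  constructor <;> intro h <;> linarith

theorem convex_nbhd (g : CS) : Convex ℝ (nbhd g) := by
  obtain ⟨p, hp⟩ := exists_nbhd_eq g
  have nonneg : 0 ≤ 2 * (√3 - 1) := by linarith [lt_sqrt_three]
  have := ((convexOn_normSq_hermForm_ballPoint p).add
    (convexOn_normSq_add_normSq.smul nonneg)).convex_lt (2 * (√3 - 1) ^ 2)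
  simpa [hp] using this

theorem isOpen_nbhd (g : CS) : IsOpen (nbhd g) := by
  obtain ⟨p, hp⟩ := exists_nbhd_eq g
  rw [hp]
  exact isOpen_lt ((continuous_normSq_hermForm_ballPoint p).add
    (continuous_const.mul continuous_normSq_add_normSq)) continuous_const

theorem zero_mem_nbhd {g : CS} (h : toPU g = 1) : (0 : ℂ × ℂ) ∈ nbhd g := by
  rw [mem_nbhd_iff (A := 1) h, ballPoint_zero]
  exact near_center 1

theorem hasSmallCorner_of_mem_nbhd {g h : CS} {x : ℂ × ℂ} (hg : x ∈ nbhd g) (hh : x ∈ nbhd h) :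
    HasSmallCorner (g⁻¹ * h) := by
  obtain ⟨A, hA, hxA⟩ := hg
  obtain ⟨B, hB, hxB⟩ := hh
  have toPU_eq : toPU (g⁻¹ * h) = QuotientGroup.mk (A⁻¹ * B) := by
    rw [map_mul, map_inv, hA, hB, QuotientGroup.mk_mul, QuotientGroup.mk_inv]
  rw [HasSmallCorner, toPU_eq]
  exact isSmallCorner_of_near hxA hxB

theorem exists_neighbors_toPU_mul_eq {g : CS} {A B : IntUnitary}
    (hg : toPU g = QuotientGroup.mk A) {w : Fin 3 → ℂ} (hA : Near A w) (hB : Near B w) :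
    ∃ s ∈ neighbors, toPU (g * s) = QuotientGroup.mk B := by
  obtain ⟨s, hs, e⟩ := exists_neighbors_toPU_eq (isSmallCorner_of_near hA hB)
  exact ⟨s, hs, by rw [map_mul, e, hg, ← QuotientGroup.mk_mul, mul_inv_cancel_left]⟩

/-- The square distance to the origin of the ball, scaled so that the ball is `{ballGauge < 1}`. -/
def ballGauge (x : ℂ × ℂ) : ℝ := (normSq x.1 + normSq x.2) / (√3 - 1)

theorem ballGauge_le_iff (x : ℂ × ℂ) (ρ : ℝ) :
    ballGauge x ≤ ρ ↔ normSq x.1 + normSq x.2 ≤ ρ * (√3 - 1) :=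
  div_le_iff₀ (by linarith [lt_sqrt_three])

theorem ballGauge_lt_one_iff (x : ℂ × ℂ) : ballGauge x < 1 ↔ normForm (ballPoint x) < 0 := by
  rw [ballGauge, div_lt_one (by linarith [lt_sqrt_three]), normForm_ballPoint, sub_neg]

/-- The cover of the ball by the sets `nbhd g`. -/
def ballDevelopment : ConvexDevelopment CS (ℂ × ℂ) where
  nbhd := nbhd
  transitions := neighbors
  gauge := ballGauge
  isCompact_sublevel ρ _ := by
    simpa only [ballGauge_le_iff] using isCompact_normSq_add_normSq_le (ρ * (√3 - 1))
  convex_sublevel ρ := by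
    simpa [ballGauge_le_iff] using convexOn_normSq_add_normSq.convex_le (ρ * (√3 - 1))
  gauge_zero := by simp [ballGauge]
  gauge_lt_one g x := fun ⟨_, _, near⟩ => (ballGauge_lt_one_iff x).mpr near.normForm_neg
  isOpen_nbhd := isOpen_nbhd
  convex_nbhd := convex_nbhd
  exists_mem_nbhd x hx := exists_near ((ballGauge_lt_one_iff x).mp hx)
  zero_mem_nbhd_one := zero_mem_nbhd (map_one toPU)
  one_mem := neighbors.K_subset (one_mem K)
  inv_mem s hs := neighbors.inv hs
  trans x g h k hg _ hk hgh hhk := by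
    have mul_eq : g⁻¹ * k = (g⁻¹ * h) * (h⁻¹ * k) := by group
    have small := hasSmallCorner_of_mem_nbhd hg hk
    rw [mul_eq] at small ⊢
    exact neighbors.detected_mul hgh hhk small
  exists_transition x g h := fun ⟨A, hA, hxA⟩ ⟨B, hB, hxB⟩ => by
    obtain ⟨s, hs, e⟩ := exists_neighbors_toPU_mul_eq hA hxA hxB
    exact ⟨g * s, nbhd_congr (e.trans hB.symm), by simpa using hs⟩

theorem nonempty_nbhd_inter {s : CS} {B : IntUnitary} (hs : toPU s = QuotientGroup.mk B)
    (h : ∃ w, Near 1 w ∧ Near B w) (g : CS) : (nbhd g ∩ nbhd (g * s)).Nonempty := by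
  obtain ⟨w, near_one, near_B⟩ := h
  obtain ⟨A, hA⟩ := QuotientGroup.mk_surjective (toPU g)
  obtain ⟨x, c, hc, hw⟩ := exists_eq_smul_ballPoint (w := act A w) <| by
    rw [normForm_act]; exact near_one.normForm_neg
  have near_iff (C : IntUnitary) : Near (A * C) (ballPoint x) ↔ Near C w := by
    rw [← near_smul_iff (A * C) hc, ← hw, near_mul_act]
  refine ⟨x, (mem_nbhd_iff (A := A * 1) ?_ x).mpr ((near_iff 1).mpr near_one),
    (mem_nbhd_iff (A := A * B) ?_ x).mpr ((near_iff B).mpr near_B)⟩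
  · rw [mul_one, hA]
  · rw [map_mul, hs, ← hA, QuotientGroup.mk_mul]

theorem exists_near_of_col_two_eq_single {B : IntUnitary} (h : (mat B).col 2 = Pi.single 2 1) :
    ∃ w, Near 1 w ∧ Near B w := by
  refine ⟨center 1, near_center 1, ?_⟩
  have center_eq : center B = center 1 := by
    rw [center_eq_diagCoords, center_eq_diagCoords, h, map_one, ← mulVec_single_one, one_mulVec]
  rw [← center_eq]
  exact near_center B

theorem center_b : center IntUnitary.b =
    ![0, ((1 - √3 : ℝ) : ℂ) * toComplex (bPrime 1 2), toComplex (bPrime 2 2)] := by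
  rw [center_eq_diagCoords, IntUnitary.mat_b]
  simp [diagCoords, diagSnd, toComplex_r, show bPrime 0 2 = 0 from rfl]

-- The witness is the center of `b` with its second coordinate shrunk by the factor `0.8`.
theorem exists_near_b : ∃ w, Near 1 w ∧ Near IntUnitary.b w := by
  have normSq_p := normSq_toComplex_bPrime_one_two
  have normSq_q := normSq_toComplex_bPrime_two_two
  have center_b := center_b
  set p := toComplex (bPrime 1 2)
  set q := toComplex (bPrime 2 2)
  have sq := sqrt_three_mul_self
  have sqrt_gt := lt_sqrt_three
  have sqrt_lt := sqrt_three_lt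
  refine ⟨![0, ((0.8 * (1 - √3) : ℝ) : ℂ) * p, q], ?_, ?_⟩
  · rw [near_one_iff]
    simp only [cons_val, map_zero, map_mul, Complex.normSq_ofReal, normSq_p, normSq_q]
    nlinarith
  · have herm_eq : hermForm (center IntUnitary.b) ![0, ((0.8 * (1 - √3) : ℝ) : ℂ) * p, q] =
        ((0.6 - √3 : ℝ) : ℂ) := by
      have conj_mul_p : star p * p = 2 + √3 := by
        simpa [normSq_p] using (Complex.normSq_eq_conj_mul_self (z := p)).symm
      have conj_mul_q : star q * q = 2 + √3 := by
        simpa [normSq_q] using (Complex.normSq_eq_conj_mul_self (z := q)).symm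
      have sq_complex : (√3 : ℂ) * √3 = 3 := by exact_mod_cast sq
      rw [hermForm_apply, center_b]
      simp only [cons_val, star_mul, star_zero, Complex.star_def, Complex.conj_ofReal]
        at conj_mul_p conj_mul_q ⊢
      push_cast
      linear_combination (0.8 * (1 - √3) ^ 2 : ℂ) * conj_mul_p + (1 - √3 : ℂ) * conj_mul_q
        + (0.8 * √3 - 1 : ℂ) * sq_complex
    rw [Near, herm_eq, normForm]
    simp only [cons_val, map_zero, map_mul, Complex.normSq_ofReal, normSq_p, normSq_q]
    nlinarith

theorem closure_gu_gv_gb : Subgroup.closure ({gu, gv, gb} : Set CS) = ⊤ := by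
  rw [← PresentedGroup.closure_range_of csRels]
  congr 1
  ext x
  constructor
  · rintro (rfl | rfl | rfl)
    exacts [⟨.u, rfl⟩, ⟨.v, rfl⟩, ⟨.b, rfl⟩]
  · rintro ⟨_ | _ | _, rfl⟩
    exacts [.inl rfl, .inr (.inl rfl), .inr (.inr rfl)]

/-- An element of the kernel fixes the origin, so it lies in `neighbors` because the ball is simply
connected; and there the kernel is trivial. -/
theorem toPU_injective : Function.Injective toPU := by
  rw [injective_iff_map_eq_one]
  intro g hg
  refine neighbors.eq_one (ballDevelopment.mem_transitions_of_zero_mem_nbhd closure_gu_gv_gb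
    ?_ ?_ (zero_mem_nbhd hg)) hg
  · rintro s (rfl | rfl | rfl)
    exacts [neighbors.K_subset gu_mem_K, neighbors.K_subset gv_mem_K, neighbors.gb_mem]
  · rintro g s (rfl | rfl | rfl)
    · exact nonempty_nbhd_inter toPU_gu (exists_near_of_col_two_eq_single (by decide +kernel)) g
    · exact nonempty_nbhd_inter toPU_gv (exists_near_of_col_two_eq_single (by decide +kernel)) g
    · exact nonempty_nbhd_inter toPU_gb exists_near_b g

/-- The center of `C` lies in a translate coming from the presented group, whose center is then a
neighbour of that of `C`. -/
theorem toPU_surjective : Function.Surjective toPU := by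
  intro y
  obtain ⟨C, rfl⟩ := QuotientGroup.mk_surjective y
  have near_C := near_center C
  obtain ⟨g, A, hg, near_A⟩ := exists_near near_C.normForm_neg
  obtain ⟨s, -, hs⟩ := exists_neighbors_toPU_mul_eq hg near_A near_C
  exact ⟨g * s, hs⟩

/-! ### The cyclotomic field -/

theorem pow_four_eq_of_isPrimitiveRoot_twelve {R : Type*} [CommRing R] [IsDomain R] {t : R}
    (ht : IsPrimitiveRoot t 12) : t ^ 4 = t ^ 2 - 1 := by
  have pow_six : t ^ 6 = -1 :=
    (sq_eq_one_iff.mp (by rw [← pow_mul, ht.pow_eq_one])).resolve_left <|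
      ht.pow_ne_one_of_pos_of_lt (by norm_num) (by norm_num)
  have sq_add_one_ne : t ^ 2 + 1 ≠ 0 := fun h =>
    ht.pow_ne_one_of_pos_of_lt (l := 4) (by norm_num) (by norm_num) <| by
      linear_combination (t ^ 2 - 1) * h
  have factor : (t ^ 2 + 1) * (t ^ 4 - t ^ 2 + 1) = 0 := by linear_combination pow_six
  linear_combination (mul_eq_zero.mp factor).resolve_left sq_add_one_ne

namespace CycloInt

theorem adjoin_eq_range_lift {R : Type*} [CommRing R] {t : R} (ht : t ^ 4 = t ^ 2 - 1) :
    Algebra.adjoin ℤ {t} = (lift t ht).toIntAlgHom.range := by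
  refine le_antisymm
    (Algebra.adjoin_le (Set.singleton_subset_iff.mpr ⟨zeta, lift_zeta t ht⟩)) ?_
  rintro _ ⟨x, rfl⟩
  have mem : t ∈ Algebra.adjoin ℤ {t} := Algebra.self_mem_adjoin_singleton ℤ t
  exact add_mem (add_mem (add_mem (intCast_mem _ _) (mul_mem (intCast_mem _ _) mem))
    (mul_mem (intCast_mem _ _) (pow_mem mem _))) (mul_mem (intCast_mem _ _) (pow_mem mem _))

theorem inv_eq_sub_pow_three {K : Type*} [Field K] {t : K} (ht : t ^ 4 = t ^ 2 - 1) :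
    t⁻¹ = t - t ^ 3 :=
  inv_eq_of_mul_eq_one_right (by linear_combination -ht)

theorem map_lift_eq_lift_star {K : Type*} [Field K] {t : K} (ht : t ^ 4 = t ^ 2 - 1)
    {σ : K →+* K} (hσ : σ t = t⁻¹) (x : CycloInt) : σ (lift t ht x) = lift t ht (star x) := by
  rw [lift_apply, lift_apply, star_def]
  simp only [map_add, map_mul, map_pow, hσ, map_intCast, inv_eq_sub_pow_three ht]
  push_cast
  linear_combination (x.c * (t ^ 2 - 1) + x.d * t ^ 3 * (2 - t ^ 2) : K) * ht

end CycloInt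

section Transfer

variable {ζ : L} (h : ζ ^ 4 = ζ ^ 2 - 1)

theorem lift_r : lift ζ h r = rr ζ := by
  rw [rr, inv_eq_sub_pow_three h, lift_apply]
  simp [r]
  ring

theorem map_diagBasis : diagBasis.map (lift ζ h) = gamma0 ζ := by
  ext i j; fin_cases i <;> fin_cases j <;> simp [diagBasis, gamma0, lift_r]

theorem map_diagForm : diagForm.map (lift ζ h) = Fmat ζ := by
  ext i j; fin_cases i <;> fin_cases j <;> simp [diagForm, Fmat, lift_r]

theorem val_diagRep_u : (diagRep (lift ζ h) IntUnitary.u).val = umat ζ := by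
  rw [val_diagRep, map_diagBasis, umat, IntUnitary.mat_u]
  congr 2
  ext i j; fin_cases i <;> fin_cases j <;> simp [uPrime, lift_apply, zero_def, one_def] <;> ring1

theorem val_diagRep_v : (diagRep (lift ζ h) IntUnitary.v).val = vmat ζ := by
  rw [val_diagRep, map_diagBasis, vmat, IntUnitary.mat_v]
  congr 2
  ext i j; fin_cases i <;> fin_cases j <;> simp [vPrime, lift_apply, zero_def, one_def]
  ring1

theorem val_diagRep_b : (diagRep (lift ζ h) IntUnitary.b).val = bmat ζ := by
  rw [val_diagRep, map_diagBasis, bmat, IntUnitary.mat_b]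
  congr 2
  ext i j; fin_cases i <;> fin_cases j <;> simp [bPrime, lift_apply, zero_def, one_def] <;> ring1

theorem range_diagRep_eq {σ : L ≃+* L} (hσ : σ ζ = ζ⁻¹) {U : Subgroup (GL (Fin 3) L)}
    (hU : ∀ g : GL (Fin 3) L, g ∈ U ↔ (g.val.map σ)ᵀ * Fmat ζ * g.val = Fmat ζ ∧
      ∀ i j, ((gamma0 ζ)⁻¹ * g.val * gamma0 ζ) i j ∈ Algebra.adjoin ℤ ({ζ} : Set L)) :
    (diagRep (lift ζ h)).range = U := by
  have hσ_lift := map_lift_eq_lift_star h (σ := (σ : L →+* L)) hσ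
  have val_conj (g : GL (Fin 3) L) :
      ((diagBasisGL (lift ζ h))⁻¹ * g * diagBasisGL (lift ζ h)).val =
        (gamma0 ζ)⁻¹ * g.val * gamma0 ζ := by
    rw [Units.val_mul, Units.val_mul, coe_units_inv, val_diagBasisGL, map_diagBasis]
  have integral_iff (g : GL (Fin 3) L) :
      (∀ i j, ((gamma0 ζ)⁻¹ * g.val * gamma0 ζ) i j ∈ Algebra.adjoin ℤ ({ζ} : Set L)) ↔
        ∀ i j, ((diagBasisGL (lift ζ h))⁻¹ * g * diagBasisGL (lift ζ h)).val i j ∈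
          (lift ζ h).range := by
    rw [val_conj]
    exact forall₂_congr fun i j => SetLike.ext_iff.mp (adjoin_eq_range_lift h) _
  ext g
  constructor
  · rintro ⟨A, rfl⟩
    refine (hU _).mpr ⟨?_, (integral_iff _).mpr fun i j => ⟨mat A i j, ?_⟩⟩
    · rw [← map_diagForm h]
      exact diagRep_unitary (lift ζ h) hσ_lift A
    · rw [diagRep_apply, mul_assoc, inv_mul_cancel_right, inv_mul_cancel_left]
      rfl
  · intro hg
    refine mem_range_diagRep (lift ζ h) hσ_lift ?_ ((integral_iff g).mp ((hU g).mp hg).2)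
      ((integral_iff g⁻¹).mp ((hU g⁻¹).mp (inv_mem hg)).2)
    rw [map_diagForm]
    exact ((hU g).mp hg).1

end Transfer

/-- sending the generators `u, v, b` of the presented group to the classes
modulo `Z` of the matrices `γ₀u'γ₀⁻¹`, `γ₀v'γ₀⁻¹`, `γ₀b'γ₀⁻¹` extends to a group
isomorphism from `G` onto `U/Z`. Here `U` is the group of matrices `g` with
`σ(g)ᵀ F g = F` whose conjugate `γ₀⁻¹ g γ₀` has all entries in `ℤ[ζ]`, and
`Z = {ζʲ·I : 0 ≤ j < 12}`. -/
theorem stmt_0 (ζ : L) (hζ : IsPrimitiveRoot ζ 12)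
    (σ : L ≃+* L) (hσ : σ ζ = ζ⁻¹)
    (U : Subgroup (Matrix.GeneralLinearGroup (Fin 3) L))
    (hU : ∀ g : Matrix.GeneralLinearGroup (Fin 3) L, g ∈ U ↔
      (((g : Matrix (Fin 3) (Fin 3) L).map σ)ᵀ * Fmat ζ * (g : Matrix (Fin 3) (Fin 3) L)
          = Fmat ζ ∧
        ∀ i j : Fin 3,
          ((gamma0 ζ)⁻¹ * (g : Matrix (Fin 3) (Fin 3) L) * gamma0 ζ) i j ∈
            Algebra.adjoin ℤ ({ζ} : Set L)))
    (Z : Subgroup U) [Z.Normal]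
    (hZ : ∀ x : U, x ∈ Z ↔ ∃ k : Fin 12,
      ((x : Matrix.GeneralLinearGroup (Fin 3) L) : Matrix (Fin 3) (Fin 3) L)
        = ζ ^ (k : ℕ) • (1 : Matrix (Fin 3) (Fin 3) L)) :
    ∃ (xu xv xb : U) (φ : CS ≃* (U ⧸ Z)),
      ((xu : Matrix.GeneralLinearGroup (Fin 3) L) : Matrix (Fin 3) (Fin 3) L) = umat ζ ∧
      ((xv : Matrix.GeneralLinearGroup (Fin 3) L) : Matrix (Fin 3) (Fin 3) L) = vmat ζ ∧
      ((xb : Matrix.GeneralLinearGroup (Fin 3) L) : Matrix (Fin 3) (Fin 3) L) = bmat ζ ∧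
      φ gu = QuotientGroup.mk xu ∧
      φ gv = QuotientGroup.mk xv ∧
      φ gb = QuotientGroup.mk xb := by
  have h := pow_four_eq_of_isPrimitiveRoot_twelve hζ
  let e : IntUnitary ≃* U := (MonoidHom.ofInjective (diagRep_injective (lift ζ h))).trans
    (MulEquiv.subgroupCongr (range_diagRep_eq h hσ hU))
  have scalars_iff (A : IntUnitary) : e A ∈ Z ↔ A ∈ scalars := by
    rw [hZ, mem_scalars, Fin.exists_iff]
    simp_rw [← val_diagRep_eq_smul_one_iff (lift ζ h), lift_zeta, exists_prop]
    rfl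
  have map_scalars : scalars.map e.toMonoidHom = Z := by
    ext x
    obtain ⟨A, rfl⟩ := e.surjective x
    rw [scalars_iff]
    exact Subgroup.mem_map_iff_mem e.injective
  let θ : PU ≃* U ⧸ Z := QuotientGroup.congr scalars Z e map_scalars
  exact ⟨e IntUnitary.u, e IntUnitary.v, e IntUnitary.b,
    (MulEquiv.ofBijective toPU ⟨toPU_injective, toPU_surjective⟩).trans θ,
    val_diagRep_u h, val_diagRep_v h, val_diagRep_b h,
    congrArg θ toPU_gu, congrArg θ toPU_gv, congrArg θ toPU_gb⟩

end
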